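/- arXiv:1806.03587 — 2 statements merged into one kernel-verified Lean document; each statement's English description precedes it below -/
import Mathlib

section
/- Comparison of inf and sup convolutions near a touching point: Let Ω be a domain in ℝ^N with N ≥ 2, let H : Ω → ℝ be locally Lipschitz continuous, let x₀ ∈ Ω, and let R > 0 satisfy cl(B(x₀,R)) ⊂ Ω and |H| ≤ 1/R on cl(B(x₀,R)). Let u be a lower semicontinuous viscosity supersolution of M(u) = NH in Ω and v an upper semicontinuous viscosity subsolution of M(v) = NH in Ω, both bounded on cl(B(x₀,R)), with u ≥ v in Ω and u(x₀) = v(x₀). Define for ε > 0 the inf convolution u_ε(x) := inf_{y ∈ cl(B(x₀,R))} { u(y) + |x−y|²/(2ε) } and the sup convolution v^ε(x) := sup_{y ∈ cl(B(x₀,R))} { v(y) − |x−y|²/(2ε) } for x ∈ cl(B(x₀,R)). Then for each ε > 0, v^ε ≥ u_ε on cl(B(x₀, R/2)). -/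
open Metric Set Filter Topology MeasureTheory

/-- The mean curvature operator `M(w) = div (Dw / sqrt (1 + |Dw|²))`,
computed as the sum of the partial derivatives of the components of the
normalized gradient field. -/
noncomputable def mcOp {N : ℕ} (w : EuclideanSpace ℝ (Fin N) → ℝ)
    (x : EuclideanSpace ℝ (Fin N)) : ℝ :=
  ∑ i : Fin N,
    fderiv ℝ (fun y => (Real.sqrt (1 + ‖gradient w y‖ ^ 2))⁻¹ * gradient w y i) x
      (EuclideanSpace.single i 1)

/-- `f` is locally Lipschitz continuous on the set `s`. -/
def LocLipschitzOn {N : ℕ} (s : Set (EuclideanSpace ℝ (Fin N)))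
    (f : EuclideanSpace ℝ (Fin N) → ℝ) : Prop :=
  ∀ x ∈ s, ∃ K : NNReal, ∃ t ∈ 𝓝[s] x, LipschitzOnWith K f t

/-- `u` is a viscosity supersolution of `M(u) = N H` on the open set `U`. -/
def IsViscositySupersol {N : ℕ} (U : Set (EuclideanSpace ℝ (Fin N)))
    (H u : EuclideanSpace ℝ (Fin N) → ℝ) : Prop :=
  ∀ φ : EuclideanSpace ℝ (Fin N) → ℝ, ContDiffOn ℝ 2 φ U →
    ∀ x ∈ U, IsLocalMinOn (fun y => u y - φ y) U x → mcOp φ x ≤ N * H x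

/-- `v` is a viscosity subsolution of `M(v) = N H` on the open set `U`. -/
def IsViscositySubsol {N : ℕ} (U : Set (EuclideanSpace ℝ (Fin N)))
    (H v : EuclideanSpace ℝ (Fin N) → ℝ) : Prop :=
  ∀ φ : EuclideanSpace ℝ (Fin N) → ℝ, ContDiffOn ℝ 2 φ U →
    ∀ x ∈ U, IsLocalMaxOn (fun y => v y - φ y) U x → mcOp φ x ≥ N * H x

/-!
The set where `v` touches `u` is closed in `Ω`; it is also open, so `u = v` on `Ω` and the inf
convolution lies below `u = v`, which lies below the sup convolution.

Openness is a Hopf lemma, proved by doubling the variables. The theorem on sums turns a maximum of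
`v x - u y - ψ (x - y) - β x` into an inequality between the Hessians of `ψ` and `β`, in which the
second-order coefficients at the two points may be compared in different orthonormal frames. The
equation is not uniformly elliptic, so gradients have to be controlled first. For a steep, strictly
concave radial `ψ` and frames coupled by a reflection, the concavity of `ψ` beats all other terms
(Ishii–Lions): this gives a Hölder and then a Lipschitz bound for `v x - u y` whenever `v ≤ u`.
A quadratic `ψ` then has bounded slope at the maximum, the equation is uniformly elliptic along the
doubling, and a logarithmic barrier `β` contradicts contact at a point of a sphere on which, and
inside which, `v < u` everywhere else.
-/

/-! ### Second-order Taylor expansion -/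

section Taylor

variable {E : Type*} [NormedAddCommGroup E] [InnerProductSpace ℝ E] [CompleteSpace E]
  {f : E → ℝ} {g : E → E} {A : E →L[ℝ] E} {x₀ : E}

theorem hasDerivAt_taylor_two_remainder {h : E} {t : ℝ}
    (hf : HasGradientAt f (g (x₀ + t • h)) (x₀ + t • h)) :
    HasDerivAt (fun s : ℝ => f (x₀ + s • h) - s * inner ℝ (g x₀) h - s ^ 2 / 2 * inner ℝ (A h) h)
      (inner ℝ (g (x₀ + t • h) - g x₀ - A (t • h)) h) t := by
  have hline : HasDerivAt (fun s : ℝ => x₀ + s • h) h t := by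
    simpa using ((hasDerivAt_id t).smul_const h).const_add x₀
  have hlin : HasDerivAt (fun s : ℝ => s * inner ℝ (g x₀) h) (inner ℝ (g x₀) h) t := by
    simpa using (hasDerivAt_id t).mul_const (inner ℝ (g x₀) h)
  have hquad : HasDerivAt (fun s : ℝ => s ^ 2 / 2 * inner ℝ (A h) h) (t * inner ℝ (A h) h) t :=
    ((((hasDerivAt_id t).pow 2).div_const 2).mul_const (inner ℝ (A h) h)).congr_deriv (by simp)
  exact (((hf.hasFDerivAt.comp_hasDerivAt t hline).sub hlin).sub hquad).congr_deriv
    (by simp [inner_sub_left, inner_smul_left])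

theorem eventually_abs_taylor_two_remainder_le
    (hf : ∀ᶠ x in 𝓝 x₀, HasGradientAt f (g x) x) (hg : HasFDerivAt g A x₀)
    {κ : ℝ} (hκ : 0 < κ) :
    ∀ᶠ h in 𝓝 (0 : E), |f (x₀ + h) - f x₀ - inner ℝ (g x₀) h - 1 / 2 * inner ℝ (A h) h|
      ≤ κ * ‖h‖ ^ 2 := by
  have hg_small : ∀ᶠ h in 𝓝 (0 : E), ‖g (x₀ + h) - g x₀ - A h‖ ≤ κ * ‖h‖ :=
    (hasFDerivAt_iff_isLittleO_nhds_zero.1 hg).def hκ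
  have hf_near : ∀ᶠ h in 𝓝 (0 : E), HasGradientAt f (g (x₀ + h)) (x₀ + h) :=
    (show Tendsto (fun h : E => x₀ + h) (𝓝 0) (𝓝 x₀) by
      simpa using (continuous_const_add x₀).tendsto 0).eventually hf
  obtain ⟨ρ, hρ, hball⟩ := Metric.eventually_nhds_iff_ball.1 (hg_small.and hf_near)
  refine Metric.eventually_nhds_iff_ball.2 ⟨ρ, hρ, fun h hh => ?_⟩
  have hnorm : ∀ t ∈ Icc (0 : ℝ) 1, ‖t • h‖ ≤ ‖h‖ := fun t ht => by
    rw [norm_smul, Real.norm_eq_abs, abs_of_nonneg ht.1]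
    exact mul_le_of_le_one_left (norm_nonneg h) ht.2
  have hmem : ∀ t ∈ Icc (0 : ℝ) 1, t • h ∈ ball (0 : E) ρ := fun t ht => by
    rw [mem_ball_zero_iff] at hh ⊢
    exact (hnorm t ht).trans_lt hh
  have hbound : ∀ t ∈ Icc (0 : ℝ) 1,
      ‖inner ℝ (g (x₀ + t • h) - g x₀ - A (t • h)) h‖ ≤ κ * ‖h‖ ^ 2 := fun t ht =>
    calc ‖inner ℝ (g (x₀ + t • h) - g x₀ - A (t • h)) h‖
        ≤ ‖g (x₀ + t • h) - g x₀ - A (t • h)‖ * ‖h‖ := norm_inner_le_norm _ _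
      _ ≤ κ * ‖h‖ * ‖h‖ := by
          gcongr
          exact (hball _ (hmem t ht)).1.trans (by gcongr; exact hnorm t ht)
      _ = κ * ‖h‖ ^ 2 := by ring
  have hmvt := (convex_Icc (0 : ℝ) 1).norm_image_sub_le_of_norm_hasDerivWithin_le
    (fun t ht => (hasDerivAt_taylor_two_remainder (A := A)
      (hball _ (hmem t ht)).2).hasDerivWithinAt) hbound
    (left_mem_Icc.2 zero_le_one) (right_mem_Icc.2 zero_le_one)
  convert hmvt using 1
  · rw [Real.norm_eq_abs]
    congr 1
    simp
    ring
  · simp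

end Taylor

/-! ### Proximal points and Lasry–Lions regularization -/

section Prox

variable {E : Type*} [NormedAddCommGroup E] [InnerProductSpace ℝ E] {G : E → ℝ} {a : ℝ}

/-- `x` is a proximal point of `w` for `G` with weight `a`: it minimizes
`G + a / 2 * ‖· - w‖ ^ 2`. -/
def IsProxPoint (G : E → ℝ) (a : ℝ) (w x : E) : Prop :=
  ∀ x', G x + a / 2 * ‖x - w‖ ^ 2 ≤ G x' + a / 2 * ‖x' - w‖ ^ 2

theorem exists_isProxPoint [FiniteDimensional ℝ E] {K : NNReal} (hG : LipschitzWith K G)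
    (ha : 0 < a) (w : E) : ∃ x, IsProxPoint G a w x := by
  have hcont : Continuous fun x => G x + a / 2 * ‖x - w‖ ^ 2 :=
    hG.continuous.add (by fun_prop)
  have hw : w ∈ closedBall w (2 * K / a) := mem_closedBall_self (by positivity)
  obtain ⟨x, -, hmin⟩ :=
    (isCompact_closedBall w (2 * K / a)).exists_isMinOn ⟨w, hw⟩ hcont.continuousOn
  refine ⟨x, fun x' => ?_⟩
  by_cases hx' : x' ∈ closedBall w (2 * K / a)
  · exact hmin hx'
  · have hxw : G x + a / 2 * ‖x - w‖ ^ 2 ≤ G w := by simpa using hmin hw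
    have hlip : G w ≤ G x' + K * ‖x' - w‖ := by
      have := hG.le_add_mul w x'
      rwa [dist_comm, dist_eq_norm] at this
    have hfar : 2 * K < ‖x' - w‖ * a := by
      rwa [mem_closedBall, dist_eq_norm, not_le, div_lt_iff₀ ha] at hx'
    nlinarith [norm_nonneg (x' - w)]

namespace IsProxPoint

variable {w w' x x' : E}

theorem add_inner_le (hx : IsProxPoint G a w x) (hG : ConvexOn ℝ univ G) (x' : E) :
    G x + a * inner ℝ (w - x) (x' - x) ≤ G x' := by
  have hslope : ∀ t ∈ Ioo (0 : ℝ) 1,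
      G x + a * inner ℝ (w - x) (x' - x) ≤ G x' + t * (a / 2 * ‖x' - x‖ ^ 2) := fun t ht => by
    have hmin := hx ((1 - t) • x + t • x')
    have hconv : G ((1 - t) • x + t • x') ≤ (1 - t) * G x + t * G x' :=
      hG.2 (mem_univ x) (mem_univ x') (sub_nonneg.2 ht.2.le) ht.1.le (sub_add_cancel 1 t)
    have hexp : ‖(1 - t) • x + t • x' - w‖ ^ 2
        = ‖x - w‖ ^ 2 - 2 * t * inner ℝ (w - x) (x' - x) + t ^ 2 * ‖x' - x‖ ^ 2 := by
      rw [show (1 - t) • x + t • x' - w = t • (x' - x) - (w - x) by module, norm_sub_sq_real,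
        norm_smul, Real.norm_eq_abs, mul_pow, sq_abs, inner_smul_left, norm_sub_rev w x,
        real_inner_comm, RCLike.conj_to_real]
      ring
    rw [hexp] at hmin
    have : t * (G x + a * inner ℝ (w - x) (x' - x))
        ≤ t * (G x' + t * (a / 2 * ‖x' - x‖ ^ 2)) := by linarith
    exact le_of_mul_le_mul_left this ht.1
  have hlim : Tendsto (fun t : ℝ => G x' + t * (a / 2 * ‖x' - x‖ ^ 2)) (𝓝[>] 0) (𝓝 (G x')) := by
    have hcont : Continuous fun t : ℝ => G x' + t * (a / 2 * ‖x' - x‖ ^ 2) := by fun_prop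
    simpa using (hcont.tendsto 0).mono_left nhdsWithin_le_nhds
  exact ge_of_tendsto hlim (by filter_upwards [Ioo_mem_nhdsGT one_pos] with t ht using hslope t ht)

theorem norm_sub_le (hx : IsProxPoint G a w x) (hx' : IsProxPoint G a w' x')
    (hG : ConvexOn ℝ univ G) (ha : 0 < a) : ‖x - x'‖ ≤ ‖w - w'‖ := by
  have hmono : inner ℝ (w - x) (x' - x) + inner ℝ (w' - x') (x - x') ≤ 0 := by
    have h := hx.add_inner_le hG x'
    have h' := hx'.add_inner_le hG x
    refine nonpos_of_mul_nonpos_right (a := a) ?_ ha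
    linarith
  have hexp : inner ℝ (w - x) (x' - x) + inner ℝ (w' - x') (x - x')
      = ‖x - x'‖ ^ 2 - inner ℝ (w - w') (x - x') := by
    rw [← real_inner_self_eq_norm_sq]
    simp only [inner_sub_left, inner_sub_right]
    ring
  have hsq : ‖x - x'‖ * ‖x - x'‖ ≤ ‖w - w'‖ * ‖x - x'‖ := by
    linarith [real_inner_le_norm (w - w') (x - x')]
  rcases (norm_nonneg (x - x')).eq_or_lt with h0 | hpos
  · exact h0 ▸ norm_nonneg _
  · exact le_of_mul_le_mul_right hsq hpos

theorem abs_moreauEnvelope_sub_le (hx : IsProxPoint G a w x) (hx' : IsProxPoint G a w' x')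
    (hG : ConvexOn ℝ univ G) (ha : 0 ≤ a) :
    |(G x' + a / 2 * ‖x' - w'‖ ^ 2) - (G x + a / 2 * ‖x - w‖ ^ 2) - inner ℝ (a • (w - x)) (w' - w)|
      ≤ a / 2 * ‖w' - w‖ ^ 2 := by
  have hupper := hx' x
  have hlower := hx.add_inner_le hG x'
  have hnonneg : 0 ≤ a / 2 * ‖(w - x) - (w' - x')‖ ^ 2 := by positivity
  simp only [← real_inner_self_eq_norm_sq, inner_sub_left, inner_sub_right, inner_smul_left,
    RCLike.conj_to_real, real_inner_comm x' x, real_inner_comm x w, real_inner_comm x w',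
    real_inner_comm x' w, real_inner_comm x' w', real_inner_comm w' w] at *
  rw [abs_le]
  constructor <;> linarith

theorem hasGradientAt_moreauEnvelope [CompleteSpace E] {prox : E → E}
    (hprox : ∀ w, IsProxPoint G a w (prox w)) (hG : ConvexOn ℝ univ G) (ha : 0 ≤ a) (w : E) :
    HasGradientAt (fun w => G (prox w) + a / 2 * ‖prox w - w‖ ^ 2) (a • (w - prox w)) w := by
  rw [hasGradientAt_iff_hasFDerivAt, hasFDerivAt_iff_isLittleO_nhds_zero]
  refine Asymptotics.IsBigO.trans_isLittleO (g := fun h : E => ‖h‖ ^ 2)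
    (.of_bound (a / 2) (.of_forall fun h => ?_)) (Asymptotics.isLittleO_norm_pow_id one_lt_two)
  simpa [inner_smul_left, inner_sub_left] using
    abs_moreauEnvelope_sub_le (hprox w) (hprox (w + h)) hG ha

end IsProxPoint

/-- The largest of the affine functions `v ζ - a / 2 * ‖ζ‖ ^ 2 + a * ⟪ζ, x⟫` with `ζ ∈ C`, that is
the sup convolution of `v` over `C`, made convex by adding `a / 2 * ‖x‖ ^ 2`. -/
noncomputable def convexSupConvolution (C : Set E) (v : E → ℝ) (a : ℝ) (x : E) : ℝ :=
  sSup ((fun ζ => v ζ - a / 2 * ‖ζ‖ ^ 2 + a * inner ℝ ζ x) '' C)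

section SupConvolution

variable {C : Set E} {v : E → ℝ}

theorem isGreatest_convexSupConvolution (hC : IsCompact C) (hne : C.Nonempty)
    (hv : UpperSemicontinuousOn v C) (x : E) :
    IsGreatest ((fun ζ => v ζ - a / 2 * ‖ζ‖ ^ 2 + a * inner ℝ ζ x) '' C)
      (convexSupConvolution C v a x) := by
  have husc : UpperSemicontinuousOn (fun ζ => v ζ + (-(a / 2 * ‖ζ‖ ^ 2) + a * inner ℝ ζ x)) C :=
    hv.add (Continuous.continuousOn (by fun_prop)).upperSemicontinuousOn
  obtain ⟨ζ, hζ, hmax⟩ := husc.exists_isMaxOn hne hC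
  have hgreatest : IsGreatest ((fun ζ => v ζ - a / 2 * ‖ζ‖ ^ 2 + a * inner ℝ ζ x) '' C)
      (v ζ - a / 2 * ‖ζ‖ ^ 2 + a * inner ℝ ζ x) := by
    refine ⟨mem_image_of_mem _ hζ, ?_⟩
    rintro _ ⟨ξ, hξ, rfl⟩
    have hξζ : v ξ + (-(a / 2 * ‖ξ‖ ^ 2) + a * inner ℝ ξ x)
        ≤ v ζ + (-(a / 2 * ‖ζ‖ ^ 2) + a * inner ℝ ζ x) := hmax hξ
    beta_reduce
    linarith
  rwa [convexSupConvolution, hgreatest.csSup_eq]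

theorem convexOn_convexSupConvolution (hC : IsCompact C) (hne : C.Nonempty)
    (hv : UpperSemicontinuousOn v C) : ConvexOn ℝ univ (convexSupConvolution C v a) := by
  refine ⟨convex_univ, fun x _ y _ s t hs ht hst => ?_⟩
  obtain ⟨ζ, hζ, hζeq⟩ :=
    (isGreatest_convexSupConvolution (a := a) hC hne hv (s • x + t • y)).1
  have hx := (isGreatest_convexSupConvolution (a := a) hC hne hv x).2 (mem_image_of_mem _ hζ)
  have hy := (isGreatest_convexSupConvolution (a := a) hC hne hv y).2 (mem_image_of_mem _ hζ)
  rw [← hζeq, smul_eq_mul, smul_eq_mul]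
  calc v ζ - a / 2 * ‖ζ‖ ^ 2 + a * inner ℝ ζ (s • x + t • y)
      = (s + t) * (v ζ - a / 2 * ‖ζ‖ ^ 2) + a * inner ℝ ζ (s • x + t • y) := by rw [hst, one_mul]
    _ = s * (v ζ - a / 2 * ‖ζ‖ ^ 2 + a * inner ℝ ζ x)
        + t * (v ζ - a / 2 * ‖ζ‖ ^ 2 + a * inner ℝ ζ y) := by
        rw [inner_add_right, inner_smul_right, inner_smul_right]
        ring
    _ ≤ _ := by gcongr

theorem exists_lipschitzWith_convexSupConvolution (hC : IsCompact C) (hne : C.Nonempty)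
    (hv : UpperSemicontinuousOn v C) (ha : 0 ≤ a) :
    ∃ K, LipschitzWith K (convexSupConvolution C v a) := by
  obtain ⟨B, hB⟩ := hC.isBounded.exists_norm_le
  refine ⟨_, LipschitzWith.of_le_add_mul' (a * B) fun x y => ?_⟩
  obtain ⟨ζ, hζ, hζeq⟩ := (isGreatest_convexSupConvolution (a := a) hC hne hv x).1
  have hy := (isGreatest_convexSupConvolution (a := a) hC hne hv y).2 (mem_image_of_mem _ hζ)
  have hinner : inner ℝ ζ (x - y) ≤ B * dist x y := by
    rw [dist_eq_norm]
    exact (real_inner_le_norm _ _).trans (by gcongr; exact hB ζ hζ)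
  rw [inner_sub_right] at hinner
  beta_reduce at hζeq hy
  nlinarith

/-- `V`, with gradient field `g`, is a `C^{1,1}` Lasry–Lions regularization of `v` over `C`: it lies
above the sup convolution of `v` with weight `2 * a`, and below the inf convolution, also with
weight `2 * a`, of the sup convolution of `v` with weight `a`. -/
structure IsLasryLionsRegularization [CompleteSpace E] (C : Set E) (v : E → ℝ) (a : ℝ)
    (V : E → ℝ) (g : E → E) : Prop where
  sub_le : ∀ ζ ∈ C, ∀ z, v ζ - a * ‖ζ - z‖ ^ 2 ≤ V z
  exists_le : ∀ x z, ∃ ζ ∈ C, V z ≤ v ζ - a / 2 * ‖ζ - x‖ ^ 2 + a * ‖x - z‖ ^ 2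
  hasGradientAt : ∀ z, HasGradientAt V (g z) z
  exists_lipschitzWith : ∃ K, LipschitzWith K g

theorem norm_sub_two_smul_sq (x z : E) :
    ‖x - (2 : ℝ) • z‖ ^ 2 = ‖x‖ ^ 2 - 4 * inner ℝ x z + 4 * ‖z‖ ^ 2 := by
  rw [norm_sub_sq_real, inner_smul_right, norm_smul, Real.norm_ofNat]
  ring

theorem IsProxPoint.lipschitzWith {prox : E → E} (hprox : ∀ w, IsProxPoint G a w (prox w))
    (hG : ConvexOn ℝ univ G) (ha : 0 < a) : LipschitzWith 1 prox :=
  .of_dist_le_mul fun w w' => by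
    simpa [dist_eq_norm] using (hprox w).norm_sub_le (hprox w') hG ha

/-- In terms of the convexified sup convolution, the regularization is its Moreau envelope at
`2 • z`, minus `a * ‖z‖ ^ 2`. -/
theorem isLasryLionsRegularization_moreauEnvelope [CompleteSpace E] (hC : IsCompact C)
    (hne : C.Nonempty) (hv : UpperSemicontinuousOn v C) (ha : 0 < a) {prox : E → E}
    (hprox : ∀ w, IsProxPoint (convexSupConvolution C v a) a w (prox w)) :
    IsLasryLionsRegularization C v a
      (fun z => convexSupConvolution C v a (prox ((2 : ℝ) • z))
        + a / 2 * ‖prox ((2 : ℝ) • z) - (2 : ℝ) • z‖ ^ 2 - a * ‖z‖ ^ 2)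
      (fun z => (2 * a) • (z - prox ((2 : ℝ) • z))) where
  sub_le ζ hζ z := by
    set x := prox ((2 : ℝ) • z)
    have hle := (isGreatest_convexSupConvolution (a := a) hC hne hv x).2 (mem_image_of_mem _ hζ)
    have hnonneg : 0 ≤ a / 2 * ‖ζ + x - (2 : ℝ) • z‖ ^ 2 := by positivity
    rw [norm_sub_two_smul_sq, norm_add_sq_real, inner_add_left] at hnonneg
    rw [norm_sub_two_smul_sq, norm_sub_sq_real]
    beta_reduce at hle
    linarith
  exists_le x z := by
    obtain ⟨ζ, hζ, hζeq⟩ := (isGreatest_convexSupConvolution (a := a) hC hne hv x).1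
    refine ⟨ζ, hζ, ?_⟩
    have hmin := hprox ((2 : ℝ) • z) x
    rw [← hζeq, norm_sub_two_smul_sq x] at hmin
    rw [norm_sub_sq_real ζ, norm_sub_sq_real x]
    linarith
  hasGradientAt z := by
    have henv := IsProxPoint.hasGradientAt_moreauEnvelope hprox
      (convexOn_convexSupConvolution hC hne hv) ha.le ((2 : ℝ) • z)
    have hdouble : HasFDerivAt (fun z : E => (2 : ℝ) • z)
        ((2 : ℝ) • ContinuousLinearMap.id ℝ E) z := (hasFDerivAt_id z).const_smul 2
    rw [hasGradientAt_iff_hasFDerivAt] at henv ⊢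
    refine ((henv.comp z hdouble).sub
      ((hasStrictFDerivAt_norm_sq z).hasFDerivAt.const_mul a)).congr_fderiv ?_
    ext y
    simp
    ring
  exists_lipschitzWith :=
    have hlip := (IsProxPoint.lipschitzWith hprox (convexOn_convexSupConvolution hC hne hv) ha).comp
      (lipschitzWith_smul (2 : ℝ) (β := E))
    ⟨_, (lipschitzWith_smul (2 * a)).comp (LipschitzWith.id.sub hlip)⟩

theorem exists_isLasryLionsRegularization [FiniteDimensional ℝ E] (hC : IsCompact C)
    (hne : C.Nonempty) (hv : UpperSemicontinuousOn v C) (ha : 0 < a) :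
    ∃ V g, IsLasryLionsRegularization C v a V g := by
  obtain ⟨K, hK⟩ := exists_lipschitzWith_convexSupConvolution (a := a) hC hne hv ha.le
  choose prox hprox using exists_isProxPoint hK ha
  exact ⟨_, _, isLasryLionsRegularization_moreauEnvelope hC hne hv ha hprox⟩

end SupConvolution

end Prox

/-! ### Jensen's lemma and the theorem on sums -/

section Jensen

variable {F : Type*} [NormedAddCommGroup F] [InnerProductSpace ℝ F]

/-- The quadratic polynomial `½⟪M ζ, ζ⟫ + ⟪α, ζ⟫`; the linear term is the perturbation to which
Jensen's argument applies Rademacher's theorem. -/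
noncomputable def tiltedQuadratic (M : F →L[ℝ] F) (α ζ : F) : ℝ :=
  1 / 2 * inner ℝ (M ζ) ζ + inner ℝ α ζ

variable {L M : F →L[ℝ] F} {α : F} {D : Set F} {w V : F → ℝ} {g : F → F} {a κ m s : ℝ}

theorem isSymmetric_add_smul_id (hL : L.IsSymmetric) (κ : ℝ) :
    (L + κ • ContinuousLinearMap.id ℝ F).IsSymmetric := fun x y => by
  have hLxy : inner ℝ (L x) y = inner ℝ x (L y) := hL x y
  simp [inner_add_left, inner_add_right, inner_smul_left, inner_smul_right, hLxy]

theorem inner_add_smul_id_self (L : F →L[ℝ] F) (κ : ℝ) (δ : F) :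
    inner ℝ ((L + κ • ContinuousLinearMap.id ℝ F) δ) δ = inner ℝ (L δ) δ + κ * ‖δ‖ ^ 2 := by
  simp [inner_add_left, inner_smul_left]

theorem tiltedQuadratic_add (hM : M.IsSymmetric) (ζ δ : F) :
    tiltedQuadratic M α (ζ + δ)
      = tiltedQuadratic M α ζ + inner ℝ (M ζ + α) δ + 1 / 2 * inner ℝ (M δ) δ := by
  have hsymm : inner ℝ (M δ) ζ = inner ℝ (M ζ) δ := by
    rw [real_inner_comm]
    exact (hM ζ δ).symm
  simp only [tiltedQuadratic, map_add, inner_add_left, inner_add_right, hsymm]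
  ring

@[fun_prop]
theorem continuous_tiltedQuadratic (M : F →L[ℝ] F) (α : F) : Continuous (tiltedQuadratic M α) := by
  unfold tiltedQuadratic
  fun_prop

theorem real_inner_clm_le (M : F →L[ℝ] F) (ζ δ : F) : inner ℝ (M ζ) δ ≤ ‖M‖ * ‖ζ‖ * ‖δ‖ :=
  (real_inner_le_norm _ _).trans (by gcongr; exact M.le_opNorm ζ)

theorem real_inner_clm_self_le (M : F →L[ℝ] F) (ζ : F) : inner ℝ (M ζ) ζ ≤ ‖M‖ * ‖ζ‖ ^ 2 :=
  (real_inner_clm_le M ζ ζ).trans_eq (by ring)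

theorem mul_mul_le_add_sq {x y c : ℝ} (hκ : 0 < κ) :
    c * x * y ≤ κ / 4 * x ^ 2 + c ^ 2 / κ * y ^ 2 := by
  have hsq : 0 ≤ (κ / 2 * x - c * y) ^ 2 / κ := by positivity
  have hexp : (κ / 2 * x - c * y) ^ 2 / κ = κ / 4 * x ^ 2 + c ^ 2 / κ * y ^ 2 - c * x * y := by
    field_simp
    ring
  linarith

theorem sub_tiltedQuadratic_le (hL : L.IsSymmetric) (hκ : 0 < κ)
    (ha : ‖L‖ ^ 2 / κ + ‖L‖ / 2 + 1 ≤ a) {ζ : F} (hw : w ζ ≤ 1 / 2 * inner ℝ (L ζ) ζ) (ζ' : F) :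
    w ζ - a * ‖ζ - ζ'‖ ^ 2 - tiltedQuadratic (L + κ • ContinuousLinearMap.id ℝ F) α ζ'
      ≤ ‖α‖ * ‖ζ'‖ - κ / 4 * ‖ζ'‖ ^ 2 - ‖ζ - ζ'‖ ^ 2 := by
  set δ := ζ - ζ'
  have hexp : 1 / 2 * inner ℝ (L ζ) ζ
      = 1 / 2 * inner ℝ (L ζ') ζ' + inner ℝ (L ζ') δ + 1 / 2 * inner ℝ (L δ) δ := by
    simpa [tiltedQuadratic, δ] using tiltedQuadratic_add (α := 0) hL ζ' δ
  have hcross := (real_inner_clm_le L ζ' δ).trans (mul_mul_le_add_sq hκ)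
  have hquad := real_inner_clm_self_le L δ
  have htilt : -inner ℝ α ζ' ≤ ‖α‖ * ‖ζ'‖ := (neg_le_abs _).trans (abs_real_inner_le_norm _ _)
  have hweight := mul_le_mul_of_nonneg_right ha (sq_nonneg ‖δ‖)
  rw [tiltedQuadratic, inner_add_smul_id_self]
  linarith

theorem norm_le_of_nonneg_sub {x y β : ℝ} (hx : 0 ≤ x) (hβ : 0 ≤ β) (hβs : β ≤ κ * s / 4)
    (hκ : 0 < κ) (hκ1 : κ ≤ 1) (hs : 0 ≤ s) (h : 0 ≤ β * x - κ / 4 * x ^ 2 - y ^ 2) :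
    x ≤ s ∧ y ≤ s := by
  have hxs : x ≤ s := by
    by_contra! hlt
    have hpos : 0 < κ / 4 * x * (x - s) :=
      mul_pos (mul_pos (by positivity) (hs.trans_lt hlt)) (sub_pos.2 hlt)
    nlinarith [mul_le_mul_of_nonneg_right hβs hx]
  refine ⟨hxs, (abs_le_of_sq_le_sq' ?_ hs).2⟩
  have : β * x ≤ s / 4 * s := mul_le_mul (by nlinarith) hxs hx (by positivity)
  nlinarith [mul_nonneg hκ.le (sq_nonneg x)]

theorem exists_forall_sub_tiltedQuadratic_le [FiniteDimensional ℝ F] (hL : L.IsSymmetric)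
    (hD : IsCompact D) (hw_usc : UpperSemicontinuousOn w D) (h0 : (0 : F) ∈ D) (hw0 : w 0 = 0)
    (hw : ∀ ζ ∈ D, w ζ ≤ 1 / 2 * inner ℝ (L ζ) ζ) (hκ : 0 < κ) (hκ1 : κ ≤ 1) (hs : 0 ≤ s)
    (ha : ‖L‖ ^ 2 / κ + ‖L‖ / 2 + 1 ≤ a) (hα : ‖α‖ ≤ κ * s / 4) :
    ∃ ζ ∈ D, ∃ ζ', ‖ζ'‖ ≤ s ∧ ‖ζ - ζ'‖ ≤ s ∧ ∀ ξ ∈ D, ∀ ξ',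
      w ξ - a * ‖ξ - ξ'‖ ^ 2 - tiltedQuadratic (L + κ • ContinuousLinearMap.id ℝ F) α ξ'
        ≤ w ζ - a * ‖ζ - ζ'‖ ^ 2
          - tiltedQuadratic (L + κ • ContinuousLinearMap.id ℝ F) α ζ' := by
  set P := tiltedQuadratic (L + κ • ContinuousLinearMap.id ℝ F) α
  let J : F × F → ℝ := fun X => w X.1 - a * ‖X.1 - X.2‖ ^ 2 - P X.2
  have hJ0 : J (0, 0) = 0 := by simp [J, P, hw0, tiltedQuadratic]
  have hlocal : ∀ ζ ∈ D, ∀ ζ', 0 ≤ J (ζ, ζ') → ‖ζ'‖ ≤ s ∧ ‖ζ - ζ'‖ ≤ s := fun ζ hζ ζ' hJ =>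
    norm_le_of_nonneg_sub (norm_nonneg _) (norm_nonneg _) hα hκ hκ1 hs
      (hJ.trans (sub_tiltedQuadratic_le hL hκ ha (hw ζ hζ) ζ'))
  have hJ_usc : UpperSemicontinuousOn J (D ×ˢ closedBall 0 s) := by
    have hcont : Continuous fun X : F × F => -(a * ‖X.1 - X.2‖ ^ 2) - P X.2 := by fun_prop
    have hfst : UpperSemicontinuousOn (fun X : F × F => w X.1) (D ×ˢ closedBall 0 s) :=
      hw_usc.comp (by fun_prop) fun X hX => hX.1
    simpa only [J, sub_eq_add_neg, add_assoc] using
      hfst.add hcont.continuousOn.upperSemicontinuousOn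
  have h00 : ((0, 0) : F × F) ∈ D ×ˢ closedBall 0 s := ⟨h0, mem_closedBall_self hs⟩
  obtain ⟨⟨ζ, ζ'⟩, ⟨hζ, -⟩, hmax⟩ :=
    hJ_usc.exists_isMaxOn ⟨_, h00⟩ (hD.prod (isCompact_closedBall 0 s))
  have hJ_nonneg : 0 ≤ J (ζ, ζ') := hJ0 ▸ hmax h00
  refine ⟨ζ, hζ, ζ', (hlocal ζ hζ ζ' hJ_nonneg).1, (hlocal ζ hζ ζ' hJ_nonneg).2,
    fun ξ hξ ξ' => ?_⟩
  by_contra! hlt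
  have hξ' := (hlocal ξ hξ ξ' (hJ_nonneg.trans hlt.le)).1
  exact hlt.not_ge (hmax (show (ξ, ξ') ∈ D ×ˢ closedBall 0 s from ⟨hξ, by simpa using hξ'⟩))

theorem exists_norm_lt_forall_eq_imp_differentiableAt [FiniteDimensional ℝ F] {T : F → F}
    {K K' : NNReal} (hg : LipschitzWith K g) (hT : LipschitzWith K' T) (hs : 0 < s) :
    ∃ α : F, ‖α‖ < s ∧ ∀ ζ, T ζ = α → DifferentiableAt ℝ g ζ := by
  let _ : MeasurableSpace F := borel F
  have _ : BorelSpace F := ⟨rfl⟩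
  let μ : Measure F := Measure.hausdorffMeasure (Module.finrank ℝ F)
  have hnull : μ {ζ | ¬ DifferentiableAt ℝ g ζ} = 0 := ae_iff.1 hg.ae_differentiableAt
  have himage : μ (T '' {ζ | ¬ DifferentiableAt ℝ g ζ}) = 0 := by
    simpa [μ, hnull] using hT.hausdorffMeasure_image_le (d := Module.finrank ℝ F) (by positivity)
      {ζ | ¬ DifferentiableAt ℝ g ζ}
  have hball : μ (ball 0 s) ≠ 0 := (isOpen_ball.measure_pos _ ⟨0, mem_ball_self hs⟩).ne'
  obtain ⟨α, hα, hαT⟩ := Set.not_subset.1 fun hsub => hball (measure_mono_null hsub himage)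
  exact ⟨α, by simpa using hα, fun ζ hζ => by_contra fun hnd => hαT ⟨ζ, hnd, hζ⟩⟩

theorem IsLasryLionsRegularization.le_add_tiltedQuadratic [CompleteSpace F]
    (hV : IsLasryLionsRegularization D w a V g) (hM : M.IsSymmetric) (ha : 0 < a)
    (hMa : ‖M‖ ≤ 2 * a)
    (hm : ∀ ζ ∈ D, ∀ ζ', w ζ - a * ‖ζ - ζ'‖ ^ 2 - tiltedQuadratic M α ζ' ≤ m) (Y : F) :
    V Y ≤ m + tiltedQuadratic M α Y := by
  set χ : F := -(2 * a)⁻¹ • (M Y + α) with hχ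
  obtain ⟨ξ, hξ, hVY⟩ := hV.exists_le (Y + χ) Y
  set ω : F := (1 / 2 : ℝ) • (ξ - (Y + χ)) with hω
  have htest := hm ξ hξ (Y + (χ + ω))
  rw [tiltedQuadratic_add hM, show ξ - (Y + (χ + ω)) = ω by rw [hω]; module,
    show M Y + α = -(2 * a) • χ by rw [hχ, smul_smul]; field_simp; simp] at htest
  rw [show ξ - (Y + χ) = (2 : ℝ) • ω by rw [hω]; module, add_sub_cancel_left, norm_smul,
    Real.norm_ofNat] at hVY
  have hquad : inner ℝ (M (χ + ω)) (χ + ω) ≤ 2 * a * ‖χ + ω‖ ^ 2 :=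
    (real_inner_clm_self_le M _).trans (by gcongr)
  rw [norm_add_sq_real] at hquad
  rw [inner_smul_left, inner_add_right, real_inner_self_eq_norm_sq, RCLike.conj_to_real] at htest
  linarith

theorem gradient_eq_of_forall_sub_le_norm_sq [CompleteSpace F] {p q z : F} {C : ℝ}
    (hV : HasGradientAt V p z)
    (hle : ∀ h, V (z + h) - V z - inner ℝ q h ≤ C * ‖h‖ ^ 2) : p = q := by
  have hshift : HasFDerivAt (fun h : F => V (z + h)) (InnerProductSpace.toDual ℝ F p) 0 := by
    rw [hasFDerivAt_comp_add_left]
    simpa using hV.hasFDerivAt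
  have hsq : HasFDerivAt (fun h : F => C * ‖h‖ ^ 2) (0 : F →L[ℝ] ℝ) 0 := by
    simpa using (hasStrictFDerivAt_norm_sq (0 : F)).hasFDerivAt.const_mul C
  have hmax : IsLocalMax (fun h : F => V (z + h) - inner ℝ q h - C * ‖h‖ ^ 2) 0 :=
    .of_forall fun h => by
      have := hle h
      simp only [add_zero, inner_zero_right, norm_zero]
      linarith
  have hzero := hmax.hasFDerivAt_eq_zero
    ((hshift.sub (InnerProductSpace.toDual ℝ F q).hasFDerivAt).sub hsq)
  exact (InnerProductSpace.toDual ℝ F).injective (sub_eq_zero.1 ((sub_zero _).symm.trans hzero))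

theorem inner_fderiv_le_of_forall_sub_le [CompleteSpace F] {A : F →L[ℝ] F} {z : F}
    (hV : ∀ x, HasGradientAt V (g x) x) (hg : HasFDerivAt g A z)
    (hle : ∀ h, V (z + h) - V z - inner ℝ (g z) h ≤ 1 / 2 * inner ℝ (M h) h) (δ : F) :
    inner ℝ (A δ) δ ≤ inner ℝ (M δ) δ := by
  suffices ∀ ε > 0, inner ℝ (A δ) δ ≤ inner ℝ (M δ) δ + ε * (2 * ‖δ‖ ^ 2) by
    have hlim : Tendsto (fun ε : ℝ => inner ℝ (M δ) δ + ε * (2 * ‖δ‖ ^ 2)) (𝓝[>] 0)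
        (𝓝 (inner ℝ (M δ) δ)) := by
      have hcont : Continuous fun ε : ℝ => inner ℝ (M δ) δ + ε * (2 * ‖δ‖ ^ 2) := by fun_prop
      simpa using (hcont.tendsto 0).mono_left nhdsWithin_le_nhds
    exact ge_of_tendsto hlim (by filter_upwards [self_mem_nhdsWithin] with ε hε using this ε hε)
  intro ε hε
  have hline : Tendsto (fun t : ℝ => t • δ) (𝓝[>] 0) (𝓝 0) := by
    have hcont : Continuous fun t : ℝ => t • δ := by fun_prop
    simpa using (hcont.tendsto 0).mono_left nhdsWithin_le_nhds
  obtain ⟨t, htaylor, ht⟩ := ((hline.eventually (eventually_abs_taylor_two_remainder_le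
    (.of_forall hV) hg hε)).and self_mem_nhdsWithin).exists
  have hlower := (abs_le.1 htaylor).1
  have hupper := hle (t • δ)
  simp only [map_smul, inner_smul_left, inner_smul_right, norm_smul, Real.norm_eq_abs, mul_pow,
    sq_abs, RCLike.conj_to_real] at hlower hupper
  refine le_of_mul_le_mul_left (a := t ^ 2) ?_ (by positivity)
  linarith

/-- Jensen's lemma. The tilt `α` avoids the Lipschitz image of the null set where `g` is not
differentiable, so `g` is differentiable at the maximum point of the tilted function. -/
theorem IsLasryLionsRegularization.exists_hessian_le [FiniteDimensional ℝ F]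
    (hV : IsLasryLionsRegularization D w a V g) (hL : L.IsSymmetric)
    (hD : IsCompact D) (hw_usc : UpperSemicontinuousOn w D) (h0 : (0 : F) ∈ D) (hw0 : w 0 = 0)
    (hw : ∀ ζ ∈ D, w ζ ≤ 1 / 2 * inner ℝ (L ζ) ζ) (hκ : 0 < κ) (hκ1 : κ ≤ 1)
    (ha : ‖L‖ ^ 2 / κ + ‖L‖ + 1 ≤ a) :
    ∃ ζ ∈ D, ∃ ζ', ‖ζ‖ ≤ κ ∧ ‖g ζ'‖ ≤ κ ∧ V ζ' = w ζ - a * ‖ζ - ζ'‖ ^ 2 ∧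
      DifferentiableAt ℝ g ζ' ∧
      ∀ δ, inner ℝ (fderiv ℝ g ζ' δ) δ ≤ inner ℝ (L δ) δ + κ * ‖δ‖ ^ 2 := by
  have hsq : 0 ≤ ‖L‖ ^ 2 / κ := by positivity
  have hL0 := norm_nonneg L
  set M : F →L[ℝ] F := L + κ • ContinuousLinearMap.id ℝ F
  have hM : M.IsSymmetric := isSymmetric_add_smul_id hL κ
  have hM_norm : ‖M‖ ≤ ‖L‖ + κ := (norm_add_le _ _).trans (by
    gcongr
    rw [norm_smul, Real.norm_of_nonneg hκ.le]
    exact mul_le_of_le_one_right hκ.le ContinuousLinearMap.norm_id_le)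
  obtain ⟨s, hs, hsκ⟩ : ∃ s > 0, (‖L‖ + 4) * s ≤ κ :=
    ⟨κ / (‖L‖ + 4), by positivity, (mul_div_cancel₀ κ (by positivity)).le⟩
  obtain ⟨K, hK⟩ := hV.exists_lipschitzWith
  obtain ⟨α, hα, hdiff⟩ := exists_norm_lt_forall_eq_imp_differentiableAt hK
    (hK.sub M.lipschitz) (by positivity : 0 < κ * s / 4)
  obtain ⟨ζ, hζ, ζ', hζ's, hδs, hmax⟩ := exists_forall_sub_tiltedQuadratic_le hL hD hw_usc h0 hw0
    hw hκ hκ1 hs.le (a := a) (by linarith) hα.le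
  have hle := hV.le_add_tiltedQuadratic hM (by linarith) (by linarith) hmax
  have hVζ' : V ζ' = w ζ - a * ‖ζ - ζ'‖ ^ 2 :=
    le_antisymm (by linarith [hle ζ']) (hV.sub_le ζ hζ ζ')
  have hquad : ∀ h, V (ζ' + h) - V ζ' - inner ℝ (M ζ' + α) h ≤ 1 / 2 * inner ℝ (M h) h :=
    fun h => by linarith [hle (ζ' + h), tiltedQuadratic_add (α := α) hM ζ' h]
  have hgrad : g ζ' = M ζ' + α := gradient_eq_of_forall_sub_le_norm_sq
    (hV.hasGradientAt ζ') (C := 1 / 2 * ‖M‖) fun h =>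
      (hquad h).trans (by linarith [real_inner_clm_self_le M h])
  have hdiff := hdiff ζ' (by rw [hgrad]; abel)
  refine ⟨ζ, hζ, ζ', ?_, ?_, hVζ', hdiff, fun δ => ?_⟩
  · have hζ_norm := norm_le_norm_add_norm_sub' ζ ζ'
    nlinarith
  · have hMζ' : ‖M ζ'‖ ≤ (‖L‖ + κ) * s := (M.le_opNorm ζ').trans (by gcongr)
    rw [hgrad]
    nlinarith [norm_add_le (M ζ') α]
  · have := inner_fderiv_le_of_forall_sub_le hV.hasGradientAt hdiff.hasFDerivAt
      (fun h => hgrad ▸ hquad h) δ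
    rwa [inner_add_smul_id_self] at this

end Jensen

section Neighborhoods

variable {E E' : Type*} [SeminormedAddCommGroup E] [SeminormedAddCommGroup E']

theorem exists_forall_fst_snd_mem_closedBall {P : WithLp 2 (E × E') → Prop}
    (h : ∀ᶠ δ in 𝓝 0, P δ) :
    ∃ r > 0, ∀ δ : WithLp 2 (E × E'), δ.fst ∈ closedBall 0 r → δ.snd ∈ closedBall 0 r → P δ := by
  obtain ⟨ρ, hρ, hP⟩ := Metric.eventually_nhds_iff_ball.1 h
  refine ⟨ρ / 2, by positivity, fun δ h₁ h₂ => hP δ ?_⟩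
  rw [mem_closedBall_zero_iff] at h₁ h₂
  rw [mem_ball_zero_iff]
  refine lt_of_pow_lt_pow_left₀ 2 hρ.le ?_
  rw [WithLp.prod_norm_sq_eq_of_L2]
  nlinarith [norm_nonneg δ.fst, norm_nonneg δ.snd]

theorem eventually_add_mem {C : Set E} {x₀ : E} (hC : C ∈ 𝓝 x₀) : ∀ᶠ ξ in 𝓝 (0 : E), x₀ + ξ ∈ C :=
  (show Tendsto (fun ξ : E => x₀ + ξ) (𝓝 0) (𝓝 x₀) by
    simpa using (continuous_const_add x₀).tendsto 0).eventually hC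

end Neighborhoods

section Sums

variable {E E' : Type*} [NormedAddCommGroup E] [InnerProductSpace ℝ E]
  [NormedAddCommGroup E'] [InnerProductSpace ℝ E']

theorem IsLasryLionsRegularization.prod [CompleteSpace E] [CompleteSpace E'] {C : Set E}
    {C' : Set E'} {v V : E → ℝ} {v' V' : E' → ℝ} {g : E → E} {g' : E' → E'} {a : ℝ}
    (hV : IsLasryLionsRegularization C v a V g) (hV' : IsLasryLionsRegularization C' v' a V' g') :
    IsLasryLionsRegularization {ζ : WithLp 2 (E × E') | ζ.fst ∈ C ∧ ζ.snd ∈ C'}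
      (fun ζ => v ζ.fst + v' ζ.snd) a (fun ζ => V ζ.fst + V' ζ.snd)
      (fun ζ => WithLp.toLp 2 (g ζ.fst, g' ζ.snd)) where
  sub_le ζ hζ z := by
    have h := hV.sub_le ζ.fst hζ.1 z.fst
    have h' := hV'.sub_le ζ.snd hζ.2 z.snd
    simp only [WithLp.prod_norm_sq_eq_of_L2, WithLp.sub_fst, WithLp.sub_snd]
    linarith
  exists_le x z := by
    obtain ⟨ξ, hξ, h⟩ := hV.exists_le x.fst z.fst
    obtain ⟨ξ', hξ', h'⟩ := hV'.exists_le x.snd z.snd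
    refine ⟨WithLp.toLp 2 (ξ, ξ'), ⟨hξ, hξ'⟩, ?_⟩
    simp only [WithLp.prod_norm_sq_eq_of_L2, WithLp.sub_fst, WithLp.sub_snd, WithLp.toLp_fst,
      WithLp.toLp_snd]
    linarith
  hasGradientAt z := by
    have h := (hV.hasGradientAt z.fst).hasFDerivAt.comp z (WithLp.fstL 2 ℝ E E').hasFDerivAt
    have h' := (hV'.hasGradientAt z.snd).hasFDerivAt.comp z (WithLp.sndL 2 ℝ E E').hasFDerivAt
    rw [hasGradientAt_iff_hasFDerivAt]
    refine (h.add h').congr_fderiv ?_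
    ext y
    simp [WithLp.prod_inner_apply]
  exists_lipschitzWith := by
    obtain ⟨K, hK⟩ := hV.exists_lipschitzWith
    obtain ⟨K', hK'⟩ := hV'.exists_lipschitzWith
    have hfst := hK.comp (WithLp.fstL 2 ℝ E E').lipschitz
    have hsnd := hK'.comp (WithLp.sndL 2 ℝ E E').lipschitz
    exact ⟨_, (WithLp.prodContinuousLinearEquiv 2 ℝ E E').symm.lipschitz.comp (hfst.prodMk hsnd)⟩

/-- `(p, A)` is a second-order superjet of `v` at `z`: the quadratic polynomial it defines bounds
`v` from above near `z` up to an error `o(‖h‖ ^ 2)`. Symmetry of `A` is not required. -/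
def IsSuperjet (v : E → ℝ) (z p : E) (A : E →L[ℝ] E) : Prop :=
  ∀ κ > 0, ∀ᶠ h in 𝓝 (0 : E),
    v (z + h) ≤ v z + inner ℝ p h + 1 / 2 * inner ℝ (A h) h + κ * ‖h‖ ^ 2

theorem IsLasryLionsRegularization.isSuperjet [CompleteSpace E] {C : Set E} {v V : E → ℝ}
    {g : E → E} {a : ℝ} {w w' : E} {A : E →L[ℝ] E} (hV : IsLasryLionsRegularization C v a V g)
    (hw : C ∈ 𝓝 w) (heq : V w' = v w - a * ‖w - w'‖ ^ 2) (hA : HasFDerivAt g A w') :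
    IsSuperjet v w (g w') A := by
  intro κ hκ
  filter_upwards [eventually_add_mem hw,
    eventually_abs_taylor_two_remainder_le (.of_forall hV.hasGradientAt) hA hκ] with h hC htaylor
  have hlow := hV.sub_le _ hC (w' + h)
  rw [add_sub_add_right_eq_sub] at hlow
  linarith [(abs_le.1 htaylor).2]

theorem IsLasryLionsRegularization.eq_and_eq_of_add_eq [CompleteSpace E] [CompleteSpace E']
    {C : Set E} {C' : Set E'} {v V : E → ℝ} {v' V' : E' → ℝ} {g : E → E} {g' : E' → E'} {a : ℝ}
    (hV : IsLasryLionsRegularization C v a V g) (hV' : IsLasryLionsRegularization C' v' a V' g')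
    {ζ ζ' : WithLp 2 (E × E')} (hζ : ζ.fst ∈ C) (hζ' : ζ.snd ∈ C')
    (h : V ζ'.fst + V' ζ'.snd = v ζ.fst + v' ζ.snd - a * ‖ζ - ζ'‖ ^ 2) :
    V ζ'.fst = v ζ.fst - a * ‖ζ.fst - ζ'.fst‖ ^ 2 ∧
      V' ζ'.snd = v' ζ.snd - a * ‖ζ.snd - ζ'.snd‖ ^ 2 := by
  have hle := hV.sub_le ζ.fst hζ ζ'.fst
  have hle' := hV'.sub_le ζ.snd hζ' ζ'.snd
  rw [WithLp.prod_norm_sq_eq_of_L2, WithLp.sub_fst, WithLp.sub_snd] at h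
  constructor <;> linarith

theorem differentiableAt_fst_and_snd {g : E → E} {g' : E' → E'} {ζ : WithLp 2 (E × E')}
    (h : DifferentiableAt ℝ (fun ζ : WithLp 2 (E × E') => WithLp.toLp 2 (g ζ.fst, g' ζ.snd)) ζ) :
    DifferentiableAt ℝ g ζ.fst ∧ DifferentiableAt ℝ g' ζ.snd := by
  have hincl : DifferentiableAt ℝ (fun x => WithLp.toLp 2 (x, ζ.snd)) ζ.fst :=
    (WithLp.prodContinuousLinearEquiv 2 ℝ E E').symm.differentiableAt.comp ζ.fst
      (differentiableAt_id.prodMk (differentiableAt_const ζ.snd))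
  have hincl' : DifferentiableAt ℝ (fun y => WithLp.toLp 2 (ζ.fst, y)) ζ.snd :=
    (WithLp.prodContinuousLinearEquiv 2 ℝ E E').symm.differentiableAt.comp ζ.snd
      ((differentiableAt_const ζ.fst).prodMk differentiableAt_id)
  have hg := (WithLp.fstL 2 ℝ E E').differentiableAt.comp ζ.fst
    (DifferentiableAt.comp ζ.fst h hincl)
  have hg' := (WithLp.sndL 2 ℝ E E').differentiableAt.comp ζ.snd
    (DifferentiableAt.comp ζ.snd h hincl')
  exact ⟨hg, hg'⟩

theorem fderiv_toLp_prod_apply {g : E → E} {g' : E' → E'} {ζ : WithLp 2 (E × E')}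
    (hg : DifferentiableAt ℝ g ζ.fst) (hg' : DifferentiableAt ℝ g' ζ.snd)
    (δ : WithLp 2 (E × E')) :
    fderiv ℝ (fun ζ : WithLp 2 (E × E') => WithLp.toLp 2 (g ζ.fst, g' ζ.snd)) ζ δ
      = WithLp.toLp 2 (fderiv ℝ g ζ.fst δ.fst, fderiv ℝ g' ζ.snd δ.snd) := by
  have h := hg.hasFDerivAt.comp ζ (WithLp.fstL 2 ℝ E E').hasFDerivAt
  have h' := hg'.hasFDerivAt.comp ζ (WithLp.sndL 2 ℝ E E').hasFDerivAt
  have hprod := (WithLp.prodContinuousLinearEquiv 2 ℝ E E').symm.hasFDerivAt.comp ζ (h.prodMk h')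
  rw [show fderiv ℝ (fun ζ : WithLp 2 (E × E') => WithLp.toLp 2 (g ζ.fst, g' ζ.snd)) ζ = _ from
    hprod.fderiv]
  rfl

theorem isCompact_setOf_fst_mem_and_snd_mem {C : Set E} {C' : Set E'} (hC : IsCompact C)
    (hC' : IsCompact C') : IsCompact {ζ : WithLp 2 (E × E') | ζ.fst ∈ C ∧ ζ.snd ∈ C'} :=
  (WithLp.prodContinuousLinearEquiv 2 ℝ E E').toHomeomorph.isCompact_preimage.2 (hC.prod hC')

theorem exists_isSuperjet_add_le_of_le_quadratic [FiniteDimensional ℝ E] [FiniteDimensional ℝ E']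
    {C : Set E} {C' : Set E'} {v : E → ℝ} {v' : E' → ℝ}
    {L : WithLp 2 (E × E') →L[ℝ] WithLp 2 (E × E')}
    (hL : L.IsSymmetric) (hC : IsCompact C) (hC' : IsCompact C')
    (hC0 : C ∈ 𝓝 0) (hC'0 : C' ∈ 𝓝 0) (hv : UpperSemicontinuousOn v C)
    (hv' : UpperSemicontinuousOn v' C') (hv0 : v 0 = 0) (hv'0 : v' 0 = 0)
    (hle : ∀ ζ : WithLp 2 (E × E'), ζ.fst ∈ C → ζ.snd ∈ C' →
      v ζ.fst + v' ζ.snd ≤ 1 / 2 * inner ℝ (L ζ) ζ) {κ : ℝ} (hκ : 0 < κ) :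
    ∃ (z p : E) (y q : E') (A : E →L[ℝ] E) (A' : E' →L[ℝ] E'),
      ‖z‖ ≤ κ ∧ ‖y‖ ≤ κ ∧ ‖p‖ ≤ κ ∧ ‖q‖ ≤ κ ∧ IsSuperjet v z p A ∧ IsSuperjet v' y q A' ∧
      ∀ ζ : WithLp 2 (E × E'), inner ℝ (A ζ.fst) ζ.fst + inner ℝ (A' ζ.snd) ζ.snd
        ≤ inner ℝ (L ζ) ζ + κ * ‖ζ‖ ^ 2 := by
  obtain ⟨r, hr, hrC⟩ := Metric.nhds_basis_closedBall.mem_iff.1 (eventually_mem_nhds_iff.2 hC0)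
  obtain ⟨r', hr', hrC'⟩ := Metric.nhds_basis_closedBall.mem_iff.1 (eventually_mem_nhds_iff.2 hC'0)
  obtain ⟨κ', hκ', hκ'κ, hκ'1, hκ'r, hκ'r'⟩ : ∃ κ' > 0, κ' ≤ κ ∧ κ' ≤ 1 ∧ κ' ≤ r ∧ κ' ≤ r' :=
    ⟨min (min κ 1) (min r r'), by positivity, by simp, by simp, by simp, by simp⟩
  set a : ℝ := ‖L‖ ^ 2 / κ' + ‖L‖ + 1 with ha
  have ha0 : 0 < a := by positivity
  obtain ⟨V, g, hV⟩ := exists_isLasryLionsRegularization hC ⟨0, mem_of_mem_nhds hC0⟩ hv ha0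
  obtain ⟨V', g', hV'⟩ := exists_isLasryLionsRegularization hC' ⟨0, mem_of_mem_nhds hC'0⟩ hv' ha0
  have husc : UpperSemicontinuousOn (fun ζ : WithLp 2 (E × E') => v ζ.fst + v' ζ.snd)
      {ζ | ζ.fst ∈ C ∧ ζ.snd ∈ C'} :=
    (hv.comp (WithLp.fstL 2 ℝ E E').continuous.continuousOn fun _ h => h.1).add
      (hv'.comp (WithLp.sndL 2 ℝ E E').continuous.continuousOn fun _ h => h.2)
  obtain ⟨ζ, ⟨hζC, hζC'⟩, ζ', hζ, hgζ', heq, hdiff, hA⟩ := (hV.prod hV').exists_hessian_le hL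
    (isCompact_setOf_fst_mem_and_snd_mem hC hC') husc
    ⟨mem_of_mem_nhds hC0, mem_of_mem_nhds hC'0⟩ (by simp [hv0, hv'0])
    (fun ζ hζ => hle ζ hζ.1 hζ.2) hκ' hκ'1 ha.ge
  obtain ⟨hd, hd'⟩ := differentiableAt_fst_and_snd hdiff
  obtain ⟨heqV, heqV'⟩ := hV.eq_and_eq_of_add_eq hV' hζC hζC' heq
  have hz : ‖ζ.fst‖ ≤ κ' := (WithLp.norm_fst_le E ζ).trans hζ
  have hy : ‖ζ.snd‖ ≤ κ' := (WithLp.norm_snd_le E ζ).trans hζ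
  refine ⟨ζ.fst, g ζ'.fst, ζ.snd, g' ζ'.snd, fderiv ℝ g ζ'.fst, fderiv ℝ g' ζ'.snd,
    hz.trans hκ'κ, hy.trans hκ'κ, ((WithLp.norm_fst_le E _).trans hgζ').trans hκ'κ,
    ((WithLp.norm_snd_le E _).trans hgζ').trans hκ'κ,
    hV.isSuperjet (hrC (by simpa using hz.trans hκ'r)) heqV hd.hasFDerivAt,
    hV'.isSuperjet (hrC' (by simpa using hy.trans hκ'r')) heqV' hd'.hasFDerivAt, fun δ => ?_⟩
  have hδ := hA δ
  rw [fderiv_toLp_prod_apply hd hd', WithLp.prod_inner_apply] at hδ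
  exact hδ.trans (by gcongr)

theorem IsSuperjet.of_sub_affine {v : E → ℝ} {x₀ z p₀ p : E} {c : ℝ} {A : E →L[ℝ] E}
    (h : IsSuperjet (fun ξ => v (x₀ + ξ) - c - inner ℝ p₀ ξ) z p A) :
    IsSuperjet v (x₀ + z) (p₀ + p) A := by
  intro κ hκ
  filter_upwards [h κ hκ] with k hk
  rw [inner_add_right, ← add_assoc] at hk
  rw [inner_add_left]
  linarith

theorem upperSemicontinuousOn_sub_affine {v : E → ℝ} {C D : Set E} {x₀ p₀ : E} {c : ℝ}
    (hv : UpperSemicontinuousOn v C) (hD : ∀ ξ ∈ D, x₀ + ξ ∈ C) :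
    UpperSemicontinuousOn (fun ξ => v (x₀ + ξ) - c - inner ℝ p₀ ξ) D := by
  have hshift : UpperSemicontinuousOn (fun ξ => v (x₀ + ξ)) D := hv.comp (by fun_prop) hD
  have haffine : Continuous fun ξ : E => -c - inner ℝ p₀ ξ := by fun_prop
  simpa only [sub_eq_add_neg, add_assoc] using
    hshift.add haffine.continuousOn.upperSemicontinuousOn

/-- The Crandall–Ishii theorem on sums. -/
theorem exists_isSuperjet_add_le_of_isLocalMax [FiniteDimensional ℝ E] [FiniteDimensional ℝ E']
    {C : Set E} {C' : Set E'} {v : E → ℝ} {v' : E' → ℝ} {Φ : WithLp 2 (E × E') → ℝ}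
    {G : WithLp 2 (E × E') → WithLp 2 (E × E')} {L : WithLp 2 (E × E') →L[ℝ] WithLp 2 (E × E')}
    {ζ : WithLp 2 (E × E')} (hL : L.IsSymmetric) (hC : C ∈ 𝓝 ζ.fst) (hC' : C' ∈ 𝓝 ζ.snd)
    (hv : UpperSemicontinuousOn v C) (hv' : UpperSemicontinuousOn v' C')
    (hΦ : ∀ᶠ ξ in 𝓝 ζ, HasGradientAt Φ (G ξ) ξ) (hG : HasFDerivAt G L ζ)
    (hmax : IsLocalMax (fun ξ => v ξ.fst + v' ξ.snd - Φ ξ) ζ) {κ : ℝ} (hκ : 0 < κ) :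
    ∃ (z p : E) (y q : E') (A : E →L[ℝ] E) (A' : E' →L[ℝ] E'),
      ‖z‖ ≤ κ ∧ ‖y‖ ≤ κ ∧ ‖p‖ ≤ κ ∧ ‖q‖ ≤ κ ∧
      IsSuperjet v (ζ.fst + z) ((G ζ).fst + p) A ∧ IsSuperjet v' (ζ.snd + y) ((G ζ).snd + q) A' ∧
      ∀ δ : WithLp 2 (E × E'), inner ℝ (A δ.fst) δ.fst + inner ℝ (A' δ.snd) δ.snd
        ≤ inner ℝ (L δ) δ + κ * ‖δ‖ ^ 2 := by
  have hmem : ∀ᶠ δ : WithLp 2 (E × E') in 𝓝 0, ζ.fst + δ.fst ∈ C ∧ ζ.snd + δ.snd ∈ C' :=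
    (((WithLp.fstL 2 ℝ E E').continuous.tendsto' 0 0 rfl).eventually (eventually_add_mem hC)).and
      (((WithLp.sndL 2 ℝ E E').continuous.tendsto' 0 0 rfl).eventually (eventually_add_mem hC'))
  obtain ⟨r, hr, hball⟩ := exists_forall_fst_snd_mem_closedBall (hmem.and
    ((eventually_add_mem hmax).and
      (eventually_abs_taylor_two_remainder_le hΦ hG (κ := κ / 4) (by positivity))))
  obtain ⟨z, p, y, q, A, A', hz, hy, hp, hq, hA, hA', hquad⟩ :=
    exists_isSuperjet_add_le_of_le_quadratic (isSymmetric_add_smul_id hL (κ / 2))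
      (isCompact_closedBall 0 r) (isCompact_closedBall 0 r) (closedBall_mem_nhds 0 hr)
      (closedBall_mem_nhds 0 hr)
      (upperSemicontinuousOn_sub_affine (x₀ := ζ.fst) (p₀ := (G ζ).fst) (c := v ζ.fst) hv
        fun ξ hξ => (hball (WithLp.toLp 2 (ξ, 0)) hξ (mem_closedBall_self hr.le)).1.1)
      (upperSemicontinuousOn_sub_affine (x₀ := ζ.snd) (p₀ := (G ζ).snd) (c := v' ζ.snd) hv'
        fun η hη => (hball (WithLp.toLp 2 (0, η)) (mem_closedBall_self hr.le) hη).1.2)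
      (by simp) (by simp) (fun δ h₁ h₂ => by
        obtain ⟨-, hle, htaylor⟩ := hball δ h₁ h₂
        have hupper := (abs_le.1 htaylor).2
        simp only [mem_ofPred_eq, WithLp.add_fst, WithLp.add_snd] at hle
        have hinner : inner ℝ (G ζ) δ = inner ℝ (G ζ).fst δ.fst + inner ℝ (G ζ).snd δ.snd :=
          WithLp.prod_inner_apply _ _
        rw [inner_add_smul_id_self]
        linarith) (half_pos hκ)
  refine ⟨z, p, y, q, A, A', ?_, ?_, ?_, ?_, hA.of_sub_affine, hA'.of_sub_affine, fun δ => ?_⟩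
  iterate 4 linarith
  have hδ := hquad δ
  rw [inner_add_smul_id_self] at hδ
  linarith

end Sums

/-! ### The mean curvature operator on superjets -/

section AreaFactor

variable {E : Type*} [NormedAddCommGroup E]

/-- The area element `√(1 + ‖p‖ ^ 2)` of the graph of a function with gradient `p`. -/
noncomputable def areaFactor (p : E) : ℝ := √(1 + ‖p‖ ^ 2)

theorem areaFactor_sq (p : E) : areaFactor p ^ 2 = 1 + ‖p‖ ^ 2 := Real.sq_sqrt (by positivity)

theorem one_le_areaFactor (p : E) : 1 ≤ areaFactor p :=
  Real.one_le_sqrt.2 (by linarith [sq_nonneg ‖p‖])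

theorem areaFactor_pos (p : E) : 0 < areaFactor p := one_pos.trans_le (one_le_areaFactor p)

theorem norm_le_areaFactor (p : E) : ‖p‖ ≤ areaFactor p :=
  le_of_sq_le_sq (by linarith [areaFactor_sq p]) (areaFactor_pos p).le

@[simp]
theorem areaFactor_neg (p : E) : areaFactor (-p) = areaFactor p := by simp [areaFactor]

@[fun_prop]
theorem continuous_areaFactor : Continuous (areaFactor : E → ℝ) := by
  unfold areaFactor
  fun_prop

end AreaFactor

section InvMetricSqrt

variable {E : Type*} [NormedAddCommGroup E] [InnerProductSpace ℝ E]

/-- The positive square root of the inverse `1 - p ⊗ p / (1 + ‖p‖ ^ 2)` of the metric `1 + p ⊗ p`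
that a graph with gradient `p` inherits from the ambient space. -/
noncomputable def invMetricSqrt (p : E) : E →L[ℝ] E :=
  .id ℝ E - (areaFactor p * (areaFactor p + 1))⁻¹ • (innerSL ℝ p).smulRight p

theorem invMetricSqrt_apply (p x : E) :
    invMetricSqrt p x = x - ((areaFactor p * (areaFactor p + 1))⁻¹ * inner ℝ p x) • p := by
  simp [invMetricSqrt, mul_smul]

@[simp]
theorem invMetricSqrt_neg (p : E) : invMetricSqrt (-p) = invMetricSqrt p := by
  ext x
  simp [invMetricSqrt_apply]

theorem continuous_invMetricSqrt_apply (x : E) : Continuous fun p => invMetricSqrt p x := by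
  have hne (p : E) : areaFactor p * (areaFactor p + 1) ≠ 0 := by
    have := areaFactor_pos p
    positivity
  simp only [invMetricSqrt_apply]
  fun_prop (disch := exact hne _)

variable {ι : Type*} [Fintype ι]

theorem sum_inner_apply_eq_trace (b : OrthonormalBasis ι ℝ E) (A : E →L[ℝ] E) :
    ∑ i, inner ℝ (A (b i)) (b i) = LinearMap.trace ℝ E A := by
  simp [LinearMap.trace_eq_sum_inner (A : E →ₗ[ℝ] E) b, real_inner_comm]

theorem sum_inner_invMetricSqrt [FiniteDimensional ℝ E] (b : OrthonormalBasis ι ℝ E)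
    (A : E →L[ℝ] E) (p : E) :
    ∑ i, inner ℝ (A (invMetricSqrt p (b i))) (invMetricSqrt p (b i))
      = LinearMap.trace ℝ E A - inner ℝ (A p) p / areaFactor p ^ 2 := by
  set θ := (areaFactor p * (areaFactor p + 1))⁻¹ with hθ
  have hexpand (i : ι) : inner ℝ (A (invMetricSqrt p (b i))) (invMetricSqrt p (b i))
      = inner ℝ (A (b i)) (b i) - θ * (inner ℝ (A.adjoint p) (b i) * inner ℝ (b i) p)
        - θ * (inner ℝ (A p) (b i) * inner ℝ (b i) p)
        + θ ^ 2 * inner ℝ (A p) p * (inner ℝ p (b i) * inner ℝ (b i) p) := by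
    rw [invMetricSqrt_apply, ContinuousLinearMap.adjoint_inner_left, real_inner_comm p (b i),
      real_inner_comm (A (b i)) p]
    simp only [map_sub, map_smul, inner_sub_left, inner_sub_right, inner_smul_left,
      inner_smul_right, RCLike.conj_to_real]
    ring
  simp only [hexpand, Finset.sum_add_distrib, Finset.sum_sub_distrib, ← Finset.mul_sum,
    b.sum_inner_mul_inner, sum_inner_apply_eq_trace]
  rw [ContinuousLinearMap.adjoint_inner_left, real_inner_self_eq_norm_sq, real_inner_comm (A p) p,
    eq_sub_of_add_eq' (areaFactor_sq p).symm, hθ]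
  have := areaFactor_pos p
  field_simp
  ring

end InvMetricSqrt

section MeanCurvature

theorem hasGradientAt_tiltedQuadratic_sub {E : Type*} [NormedAddCommGroup E]
    [InnerProductSpace ℝ E] [CompleteSpace E] {S : E →L[ℝ] E} (hS : S.IsSymmetric) (p z y : E) :
    HasGradientAt (fun x => tiltedQuadratic S p (x - z)) (S (y - z) + p) y := by
  rw [hasGradientAt_iff_hasFDerivAt]
  have hsub : HasFDerivAt (fun x : E => x - z) (.id ℝ E) y := (hasFDerivAt_id y).sub_const z
  have hlin := (hasFDerivAt_const p y).inner ℝ hsub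
  have hquad := (S.hasFDerivAt.comp y hsub).inner ℝ hsub
  refine ((hquad.const_mul (1 / 2)).add hlin).congr_fderiv ?_
  ext h
  have hsymm : inner ℝ (S h) (y - z) = inner ℝ (S (y - z)) h := by
    rw [real_inner_comm]
    exact (hS (y - z) h).symm
  simp [hsymm, inner_sub_left]
  ring

theorem hasFDerivAt_inv_areaFactor_comp {E F : Type*} [NormedAddCommGroup E] [NormedSpace ℝ E]
    [NormedAddCommGroup F] [InnerProductSpace ℝ F] {G : E → F} {S : E →L[ℝ] F} {z : E}
    (hG : HasFDerivAt G S z) :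
    HasFDerivAt (fun y => (areaFactor (G y))⁻¹)
      (-(areaFactor (G z) ^ 3)⁻¹ • (innerSL ℝ (G z)).comp S) z := by
  have hpos := areaFactor_pos (G z)
  have hsq := (hG.norm_sq.const_add 1).sqrt (by positivity)
  refine ((hasDerivAt_inv hpos.ne').comp_hasFDerivAt z hsq).congr_fderiv ?_
  ext h
  simp only [smul_apply, ContinuousLinearMap.comp_apply, innerSL_apply_apply, smul_eq_mul,
    nsmul_eq_mul, Nat.cast_ofNat, ← areaFactor.eq_1]
  field_simp

variable {N : ℕ} {U : Set (EuclideanSpace ℝ (Fin N))} {H u v w : EuclideanSpace ℝ (Fin N) → ℝ}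
  {z p : EuclideanSpace ℝ (Fin N)}

theorem sum_fderiv_inv_areaFactor_mul
    {G : EuclideanSpace ℝ (Fin N) → EuclideanSpace ℝ (Fin N)}
    {S : EuclideanSpace ℝ (Fin N) →L[ℝ] EuclideanSpace ℝ (Fin N)} (hG : HasFDerivAt G S z) :
    ∑ i, fderiv ℝ (fun y => (areaFactor (G y))⁻¹ * G y i) z (EuclideanSpace.single i 1)
      = (areaFactor (G z))⁻¹ * (LinearMap.trace ℝ _ S.toLinearMap
        - inner ℝ (S (G z)) (G z) / areaFactor (G z) ^ 2) := by
  set b := EuclideanSpace.basisFun (Fin N) ℝ with hb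
  have hpartial (i : Fin N) :
      fderiv ℝ (fun y => (areaFactor (G y))⁻¹ * G y i) z (EuclideanSpace.single i 1)
        = (areaFactor (G z))⁻¹ * inner ℝ (S (b i)) (b i)
          - (areaFactor (G z) ^ 3)⁻¹ * (inner ℝ (S.adjoint (G z)) (b i) * inner ℝ (b i) (G z)) := by
    have hcoord := (EuclideanSpace.proj i : EuclideanSpace ℝ (Fin N) →L[ℝ] ℝ).hasFDerivAt.comp z hG
    have hmul := (hasFDerivAt_inv_areaFactor_comp hG).mul hcoord
    refine (DFunLike.congr_fun hmul.fderiv (EuclideanSpace.single i 1)).trans ?_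
    simp [hb, ContinuousLinearMap.adjoint_inner_left, EuclideanSpace.inner_single_left,
      EuclideanSpace.inner_single_right]
    ring
  simp only [hpartial, Finset.sum_sub_distrib, ← Finset.mul_sum, b.sum_inner_mul_inner,
    sum_inner_apply_eq_trace]
  rw [ContinuousLinearMap.adjoint_inner_left, real_inner_comm]
  have := areaFactor_pos (G z)
  field_simp

theorem mcOp_neg (w : EuclideanSpace ℝ (Fin N) → ℝ) (x : EuclideanSpace ℝ (Fin N)) :
    mcOp (-w) x = -mcOp w x := by
  have hgrad : gradient (-w) = -gradient w := by
    ext1 y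
    simp [gradient, fderiv_neg]
  simp only [mcOp, hgrad, ← Finset.sum_neg_distrib]
  refine Finset.sum_congr rfl fun i _ => ?_
  simp [fderiv_fun_neg]

theorem IsViscositySupersol.neg (hu : IsViscositySupersol U H u) :
    IsViscositySubsol U (-H) (-u) := by
  intro φ hφ x hx hmax
  have hmin : IsLocalMinOn (fun y => u y - (-φ) y) U x := by
    simpa only [Pi.neg_apply, neg_sub, sub_neg_eq_add, add_comm] using hmax.neg
  have h := hu (-φ) hφ.neg x hx hmin
  rw [mcOp_neg] at h
  rw [Pi.neg_apply, mul_neg]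
  linarith

theorem contDiff_tiltedQuadratic_sub {E : Type*} [NormedAddCommGroup E] [InnerProductSpace ℝ E]
    (S : E →L[ℝ] E) (p z : E) : ContDiff ℝ 2 fun x => tiltedQuadratic S p (x - z) := by
  have hsub : ContDiff ℝ 2 fun x : E => x - z := by fun_prop
  exact (contDiff_const.mul ((S.contDiff.comp hsub).inner ℝ hsub)).add
    (contDiff_const.inner ℝ hsub)

theorem mcOp_tiltedQuadratic_sub
    {S : EuclideanSpace ℝ (Fin N) →L[ℝ] EuclideanSpace ℝ (Fin N)} (hS : S.IsSymmetric)
    (p z : EuclideanSpace ℝ (Fin N))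
    (b : OrthonormalBasis (Fin N) ℝ (EuclideanSpace ℝ (Fin N))) :
    mcOp (fun x => tiltedQuadratic S p (x - z)) z
      = (areaFactor p)⁻¹ * ∑ i, inner ℝ (S (invMetricSqrt p (b i))) (invMetricSqrt p (b i)) := by
  have hgrad : gradient (fun x => tiltedQuadratic S p (x - z)) = fun y => S (y - z) + p :=
    funext fun y => (hasGradientAt_tiltedQuadratic_sub hS p z y).gradient
  have hderiv : HasFDerivAt (gradient fun x => tiltedQuadratic S p (x - z)) S z := by
    rw [hgrad]
    exact (S.hasFDerivAt.comp z ((hasFDerivAt_id z).sub_const z)).add_const p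
  rw [sum_inner_invMetricSqrt]
  refine (sum_fderiv_inv_areaFactor_mul hderiv).trans ?_
  simp [hgrad]

theorem IsViscositySubsol.le_of_isSuperjet (hv : IsViscositySubsol U H v)
    (hz : z ∈ U) {A : EuclideanSpace ℝ (Fin N) →L[ℝ] EuclideanSpace ℝ (Fin N)}
    (hA : IsSuperjet v z p A) (b : OrthonormalBasis (Fin N) ℝ (EuclideanSpace ℝ (Fin N))) :
    N * H z * areaFactor p
      ≤ ∑ i, inner ℝ (A (invMetricSqrt p (b i))) (invMetricSqrt p (b i)) := by
  suffices h : ∀ κ > 0, N * H z * areaFactor p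
      ≤ ∑ i, inner ℝ (A (invMetricSqrt p (b i))) (invMetricSqrt p (b i))
        + 2 * κ * ∑ i, ‖invMetricSqrt p (b i)‖ ^ 2 by
    have hlim : Tendsto (fun κ : ℝ => ∑ i, inner ℝ (A (invMetricSqrt p (b i)))
        (invMetricSqrt p (b i)) + 2 * κ * ∑ i, ‖invMetricSqrt p (b i)‖ ^ 2) (𝓝[>] 0)
        (𝓝 (∑ i, inner ℝ (A (invMetricSqrt p (b i))) (invMetricSqrt p (b i)))) :=
      (Continuous.tendsto' (by fun_prop) 0 _ (by simp)).mono_left nhdsWithin_le_nhds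
    exact ge_of_tendsto hlim (eventually_mem_nhdsWithin.mono h)
  intro κ hκ
  -- Test functions need a symmetric Hessian: replace `A` by its symmetric part.
  set S := (1 / 2 : ℝ) • (A + A.adjoint) + (2 * κ) • ContinuousLinearMap.id ℝ _
  have hS : S.IsSymmetric := isSymmetric_add_smul_id (fun x y => by
    simp [inner_add_left, inner_add_right, inner_smul_left, inner_smul_right,
      ContinuousLinearMap.adjoint_inner_left, ContinuousLinearMap.adjoint_inner_right, add_comm])
    (2 * κ)
  have hSself (x) : inner ℝ (S x) x = inner ℝ (A x) x + 2 * κ * ‖x‖ ^ 2 := by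
    rw [inner_add_smul_id_self]
    simp [inner_add_left, inner_smul_left, ContinuousLinearMap.adjoint_inner_left,
      real_inner_comm (A x) x]
    ring
  have hmax : IsLocalMaxOn (fun x => v x - tiltedQuadratic S p (x - z)) U z := by
    have hsub : Tendsto (fun x => x - z) (𝓝 z) (𝓝 0) :=
      Continuous.tendsto' (by fun_prop) z 0 (sub_self z)
    filter_upwards [nhdsWithin_le_nhds (hsub.eventually (hA κ hκ))] with x hx
    simp only [tiltedQuadratic, hSself, add_sub_cancel, sub_self, map_zero, inner_zero_right]
      at hx ⊢
    linarith
  have hmc := hv _ (contDiff_tiltedQuadratic_sub S p z).contDiffOn z hz hmax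
  rw [mcOp_tiltedQuadratic_sub hS p z b, ge_iff_le, le_inv_mul_iff₀ (areaFactor_pos p)] at hmc
  simp only [hSself, Finset.sum_add_distrib, ← Finset.mul_sum] at hmc
  linarith

end MeanCurvature

/-- A semicontinuous supersolution `u` and subsolution `v` of the prescribed mean curvature equation
with continuous right-hand side on an open set, to which the doubling of variables applies. -/
structure IsViscosityPair {N : ℕ} (U : Set (EuclideanSpace ℝ (Fin N)))
    (H u v : EuclideanSpace ℝ (Fin N) → ℝ) : Prop where
  isOpen : IsOpen U
  continuousOn : ContinuousOn H U
  lowerSemicontinuousOn : LowerSemicontinuousOn u U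
  supersol : IsViscositySupersol U H u
  upperSemicontinuousOn : UpperSemicontinuousOn v U
  subsol : IsViscositySubsol U H v

section Doubling

variable {N : ℕ} {U : Set (EuclideanSpace ℝ (Fin N))} {H u v : EuclideanSpace ℝ (Fin N) → ℝ}
  {Φ : WithLp 2 (EuclideanSpace ℝ (Fin N) × EuclideanSpace ℝ (Fin N)) → ℝ}
  {G : WithLp 2 (EuclideanSpace ℝ (Fin N) × EuclideanSpace ℝ (Fin N)) →
    WithLp 2 (EuclideanSpace ℝ (Fin N) × EuclideanSpace ℝ (Fin N))}
  {L : WithLp 2 (EuclideanSpace ℝ (Fin N) × EuclideanSpace ℝ (Fin N)) →L[ℝ]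
    WithLp 2 (EuclideanSpace ℝ (Fin N) × EuclideanSpace ℝ (Fin N))}
  {ζ : WithLp 2 (EuclideanSpace ℝ (Fin N) × EuclideanSpace ℝ (Fin N))}

theorem exists_sub_le_sum_inner_of_isLocalMax (h : IsViscosityPair U H u v) (hL : L.IsSymmetric)
    (hx : ζ.fst ∈ U) (hy : ζ.snd ∈ U)
    (hΦ : ∀ᶠ ξ in 𝓝 ζ, HasGradientAt Φ (G ξ) ξ) (hG : HasFDerivAt G L ζ)
    (hmax : IsLocalMax (fun ξ => v ξ.fst - u ξ.snd - Φ ξ) ζ)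
    (b b' : OrthonormalBasis (Fin N) ℝ (EuclideanSpace ℝ (Fin N))) {κ : ℝ} (hκ : 0 < κ) :
    ∃ x y p q : EuclideanSpace ℝ (Fin N), ‖x‖ ≤ κ ∧ ‖y‖ ≤ κ ∧ ‖p‖ ≤ κ ∧ ‖q‖ ≤ κ ∧
      (ζ.fst + x ∈ U → ζ.snd + y ∈ U →
        N * H (ζ.fst + x) * areaFactor ((G ζ).fst + p)
            - N * H (ζ.snd + y) * areaFactor ((G ζ).snd + q)
          ≤ ∑ i, (inner ℝ (L (WithLp.toLp 2 (invMetricSqrt ((G ζ).fst + p) (b i),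
              invMetricSqrt ((G ζ).snd + q) (b' i)))) (WithLp.toLp 2
              (invMetricSqrt ((G ζ).fst + p) (b i), invMetricSqrt ((G ζ).snd + q) (b' i)))
            + κ * ‖WithLp.toLp 2 (invMetricSqrt ((G ζ).fst + p) (b i),
              invMetricSqrt ((G ζ).snd + q) (b' i))‖ ^ 2)) := by
  obtain ⟨x, p, y, q, A, A', hxκ, hyκ, hpκ, hqκ, hA, hA', hquad⟩ :=
    exists_isSuperjet_add_le_of_isLocalMax hL (h.isOpen.mem_nhds hx) (h.isOpen.mem_nhds hy)
      h.upperSemicontinuousOn (v' := -u) h.lowerSemicontinuousOn.neg hΦ hG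
      (by simpa only [Pi.neg_apply, ← sub_eq_add_neg] using hmax) hκ
  refine ⟨x, y, p, q, hxκ, hyκ, hpκ, hqκ, fun hxU hyU => ?_⟩
  have hsub := h.subsol.le_of_isSuperjet hxU hA b
  have hsup := h.supersol.neg.le_of_isSuperjet hyU hA' b'
  have hsum := Finset.sum_le_sum fun i (_ : i ∈ Finset.univ) => hquad
    (WithLp.toLp 2 (invMetricSqrt ((G ζ).fst + p) (b i), invMetricSqrt ((G ζ).snd + q) (b' i)))
  simp only [WithLp.toLp_fst, WithLp.toLp_snd] at hsum
  rw [Finset.sum_add_distrib] at hsum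
  rw [Pi.neg_apply] at hsup
  linarith

theorem sub_le_sum_inner_of_isLocalMax (h : IsViscosityPair U H u v) (hL : L.IsSymmetric)
    (hx : ζ.fst ∈ U) (hy : ζ.snd ∈ U) (hΦ : ∀ᶠ ξ in 𝓝 ζ, HasGradientAt Φ (G ξ) ξ)
    (hG : HasFDerivAt G L ζ) (hmax : IsLocalMax (fun ξ => v ξ.fst - u ξ.snd - Φ ξ) ζ)
    (b b' : OrthonormalBasis (Fin N) ℝ (EuclideanSpace ℝ (Fin N))) :
    N * H ζ.fst * areaFactor (G ζ).fst - N * H ζ.snd * areaFactor (G ζ).snd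
      ≤ ∑ i, inner ℝ (L (WithLp.toLp 2 (invMetricSqrt (G ζ).fst (b i),
          invMetricSqrt (G ζ).snd (b' i)))) (WithLp.toLp 2 (invMetricSqrt (G ζ).fst (b i),
          invMetricSqrt (G ζ).snd (b' i))) := by
  choose x y p q hxn hyn hpn hqn hle using fun n : ℕ => exists_sub_le_sum_inner_of_isLocalMax
    h hL hx hy hΦ hG hmax b b' (Nat.one_div_pos_of_nat (n := n) (α := ℝ))
  have hκ : Tendsto (fun n : ℕ => 1 / ((n : ℝ) + 1)) atTop (𝓝 0) :=
    tendsto_one_div_add_atTop_nhds_zero_nat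
  have hlim {a : EuclideanSpace ℝ (Fin N)} {f : ℕ → EuclideanSpace ℝ (Fin N)}
      (hf : ∀ n, ‖f n‖ ≤ 1 / ((n : ℝ) + 1)) : Tendsto (fun n => a + f n) atTop (𝓝 a) := by
    simpa using (squeeze_zero_norm hf hκ).const_add a
  have hW {a : EuclideanSpace ℝ (Fin N)} {f : ℕ → EuclideanSpace ℝ (Fin N)}
      (hf : ∀ n, ‖f n‖ ≤ 1 / ((n : ℝ) + 1)) :
      Tendsto (fun n => areaFactor (a + f n)) atTop (𝓝 (areaFactor a)) :=
    (continuous_areaFactor.tendsto a).comp (hlim hf)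
  have hHx := (h.continuousOn.continuousAt (h.isOpen.mem_nhds hx)).tendsto.comp (hlim hxn)
  have hHy := (h.continuousOn.continuousAt (h.isOpen.mem_nhds hy)).tendsto.comp (hlim hyn)
  have hσ (i : Fin N) : Tendsto (fun n => WithLp.toLp 2
      (invMetricSqrt ((G ζ).fst + p n) (b i), invMetricSqrt ((G ζ).snd + q n) (b' i))) atTop
      (𝓝 (WithLp.toLp 2 (invMetricSqrt (G ζ).fst (b i), invMetricSqrt (G ζ).snd (b' i)))) :=
    ((WithLp.prodContinuousLinearEquiv 2 ℝ _ _).symm.continuous.tendsto _).comp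
      ((((continuous_invMetricSqrt_apply (b i)).tendsto _).comp (hlim hpn)).prodMk_nhds
        (((continuous_invMetricSqrt_apply (b' i)).tendsto _).comp (hlim hqn)))
  have hRHS := tendsto_finsetSum Finset.univ fun i _ =>
    (((L.continuous.tendsto _).comp (hσ i)).inner (hσ i)).add (hκ.mul ((hσ i).norm.pow 2))
  simp only [zero_mul, add_zero] at hRHS
  refine le_of_tendsto_of_tendsto
    (((hHx.const_mul (N : ℝ)).mul (hW hpn)).sub ((hHy.const_mul (N : ℝ)).mul (hW hqn))) hRHS ?_
  filter_upwards [(hlim hxn).eventually (h.isOpen.mem_nhds hx),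
    (hlim hyn).eventually (h.isOpen.mem_nhds hy)] with n hxU hyU using hle n hxU hyU

end Doubling

section DoublingHessian

variable {E : Type*} [NormedAddCommGroup E] [InnerProductSpace ℝ E] {S M : E →L[ℝ] E}

/-- The Hessian of `(x, y) ↦ ψ (x - y) + β x` when `ψ` and `β` have Hessians `S` and `M`. -/
noncomputable def doublingHessian (S M : E →L[ℝ] E) : WithLp 2 (E × E) →L[ℝ] WithLp 2 (E × E) :=
  (WithLp.prodContinuousLinearEquiv 2 ℝ E E).symm.toContinuousLinearMap ∘L
    (((S ∘L (WithLp.fstL 2 ℝ E E - WithLp.sndL 2 ℝ E E)) + M ∘L WithLp.fstL 2 ℝ E E).prod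
      (-(S ∘L (WithLp.fstL 2 ℝ E E - WithLp.sndL 2 ℝ E E))))

theorem doublingHessian_apply (S M : E →L[ℝ] E) (δ : WithLp 2 (E × E)) :
    doublingHessian S M δ
      = WithLp.toLp 2 (S (δ.fst - δ.snd) + M δ.fst, -S (δ.fst - δ.snd)) := rfl

theorem inner_doublingHessian (S M : E →L[ℝ] E) (δ ε : WithLp 2 (E × E)) :
    inner ℝ (doublingHessian S M δ) ε
      = inner ℝ (S (δ.fst - δ.snd)) (ε.fst - ε.snd) + inner ℝ (M δ.fst) ε.fst := by
  rw [doublingHessian_apply, WithLp.prod_inner_apply]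
  change inner ℝ (S (δ.fst - δ.snd) + M δ.fst) ε.fst + inner ℝ (-S (δ.fst - δ.snd)) ε.snd = _
  rw [inner_add_left, inner_neg_left, inner_sub_right]
  ring

theorem isSymmetric_doublingHessian (hS : S.IsSymmetric) (hM : M.IsSymmetric) :
    (doublingHessian S M).IsSymmetric := fun δ ε => by
  have hSsymm := hS (δ.fst - δ.snd) (ε.fst - ε.snd)
  have hMsymm := hM δ.fst ε.fst
  simp only [ContinuousLinearMap.coe_coe] at hSsymm hMsymm ⊢
  rw [real_inner_comm (doublingHessian S M ε), inner_doublingHessian, inner_doublingHessian,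
    hSsymm, hMsymm, real_inner_comm, real_inner_comm δ.fst]

theorem hasGradientAt_comp_sub_add_fst [CompleteSpace E] {ψ β : E → ℝ} {q r : E}
    {ζ : WithLp 2 (E × E)} (hψ : HasGradientAt ψ q (ζ.fst - ζ.snd)) (hβ : HasGradientAt β r ζ.fst) :
    HasGradientAt (fun ξ : WithLp 2 (E × E) => ψ (ξ.fst - ξ.snd) + β ξ.fst)
      (WithLp.toLp 2 (q + r, -q)) ζ := by
  rw [hasGradientAt_iff_hasFDerivAt]
  have hfst : HasFDerivAt (fun ξ : WithLp 2 (E × E) => ξ.fst) (WithLp.fstL 2 ℝ E E) ζ :=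
    (WithLp.fstL 2 ℝ E E).hasFDerivAt
  have hsnd : HasFDerivAt (fun ξ : WithLp 2 (E × E) => ξ.snd) (WithLp.sndL 2 ℝ E E) ζ :=
    (WithLp.sndL 2 ℝ E E).hasFDerivAt
  refine ((hψ.hasFDerivAt.comp ζ (hfst.sub hsnd)).add
    (hβ.hasFDerivAt.comp ζ hfst)).congr_fderiv ?_
  ext δ
  simp [WithLp.prod_inner_apply, inner_add_left]
  ring

theorem hasFDerivAt_doublingHessian {g k : E → E} {ζ : WithLp 2 (E × E)}
    (hg : HasFDerivAt g S (ζ.fst - ζ.snd)) (hk : HasFDerivAt k M ζ.fst) :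
    HasFDerivAt (fun ξ : WithLp 2 (E × E) =>
      WithLp.toLp 2 (g (ξ.fst - ξ.snd) + k ξ.fst, -g (ξ.fst - ξ.snd)))
      (doublingHessian S M) ζ := by
  have hfst : HasFDerivAt (fun ξ : WithLp 2 (E × E) => ξ.fst) (WithLp.fstL 2 ℝ E E) ζ :=
    (WithLp.fstL 2 ℝ E E).hasFDerivAt
  have hsnd : HasFDerivAt (fun ξ : WithLp 2 (E × E) => ξ.snd) (WithLp.sndL 2 ℝ E E) ζ :=
    (WithLp.sndL 2 ℝ E E).hasFDerivAt
  have hdiff := hg.comp ζ (hfst.sub hsnd)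
  exact (WithLp.prodContinuousLinearEquiv 2 ℝ E E).symm.hasFDerivAt.comp ζ
    ((hdiff.add (hk.comp ζ hfst)).prodMk hdiff.neg)

end DoublingHessian

section DoubledTrace

/-- The difference of the linearized curvature terms in the doubling of variables with penalization
`ψ (x - y) + β x`: `S` and `M` are the Hessians of `ψ` and `β`, and `p`, `q` the slopes at `x` and
`y`. The bases `b` and `b'` may be chosen independently. -/
noncomputable def doubledTrace {E ι : Type*} [NormedAddCommGroup E] [InnerProductSpace ℝ E]
    [Fintype ι] (S M : E →L[ℝ] E) (b b' : OrthonormalBasis ι ℝ E) (p q : E) : ℝ :=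
  ∑ i, (inner ℝ (S (invMetricSqrt p (b i) - invMetricSqrt q (b' i)))
      (invMetricSqrt p (b i) - invMetricSqrt q (b' i))
    + inner ℝ (M (invMetricSqrt p (b i))) (invMetricSqrt p (b i)))

variable {N : ℕ}

theorem IsViscosityPair.sub_le_doubledTrace {U : Set (EuclideanSpace ℝ (Fin N))}
    {H u v ψ β : EuclideanSpace ℝ (Fin N) → ℝ}
    {g k : EuclideanSpace ℝ (Fin N) → EuclideanSpace ℝ (Fin N)}
    {S M : EuclideanSpace ℝ (Fin N) →L[ℝ] EuclideanSpace ℝ (Fin N)}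
    {x y : EuclideanSpace ℝ (Fin N)} (h : IsViscosityPair U H u v)
    (hS : S.IsSymmetric) (hM : M.IsSymmetric) (hx : x ∈ U) (hy : y ∈ U)
    (hψ : ∀ᶠ d in 𝓝 (x - y), HasGradientAt ψ (g d) d) (hg : HasFDerivAt g S (x - y))
    (hβ : ∀ᶠ z in 𝓝 x, HasGradientAt β (k z) z) (hk : HasFDerivAt k M x)
    (hmax : ∀ᶠ ξ in 𝓝 (x, y), v ξ.1 - u ξ.2 - (ψ (ξ.1 - ξ.2) + β ξ.1)
      ≤ v x - u y - (ψ (x - y) + β x))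
    (b b' : OrthonormalBasis (Fin N) ℝ (EuclideanSpace ℝ (Fin N))) :
    N * H x * areaFactor (g (x - y) + k x) - N * H y * areaFactor (g (x - y))
      ≤ doubledTrace S M b b' (g (x - y) + k x) (g (x - y)) := by
  set ζ := WithLp.toLp 2 (x, y)
  have hofLp : Tendsto (WithLp.prodContinuousLinearEquiv 2 ℝ (EuclideanSpace ℝ (Fin N))
      (EuclideanSpace ℝ (Fin N))) (𝓝 ζ) (𝓝 (x, y)) :=
    (WithLp.prodContinuousLinearEquiv 2 ℝ _ _).continuous.tendsto ζ
  have hψ' := ((continuous_sub.tendsto (x, y)).comp hofLp).eventually hψ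
  have hβ' := ((continuous_fst.tendsto (x, y)).comp hofLp).eventually hβ
  have hΦ : ∀ᶠ ξ in 𝓝 ζ, HasGradientAt (fun ξ => ψ (ξ.fst - ξ.snd) + β ξ.fst)
      (WithLp.toLp 2 (g (ξ.fst - ξ.snd) + k ξ.fst, -g (ξ.fst - ξ.snd))) ξ :=
    (hψ'.and hβ').mono fun ξ hξ => hasGradientAt_comp_sub_add_fst hξ.1 hξ.2
  have hle := sub_le_sum_inner_of_isLocalMax (ζ := ζ) h
    (isSymmetric_doublingHessian hS hM) hx hy hΦ (hasFDerivAt_doublingHessian hg hk)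
    (hofLp.eventually hmax) b b'
  simpa only [doubledTrace, inner_doublingHessian, WithLp.toLp_fst, WithLp.toLp_snd,
    areaFactor_neg, invMetricSqrt_neg, ζ] using hle

end DoubledTrace

/-! ### Radial test functions with steep gradients -/

section Radial

variable {E : Type*} [NormedAddCommGroup E] [InnerProductSpace ℝ E]

/-- The Hessian of a radial function `φ ‖x‖` at the point `r • e` with `‖e‖ = 1`, where `φ₁` and
`φ₂` are the first two derivatives of `φ` at `r`. -/
noncomputable def radialHessian (φ₁ φ₂ r : ℝ) (e : E) : E →L[ℝ] E :=
  (φ₁ / r) • .id ℝ E + (φ₂ - φ₁ / r) • (innerSL ℝ e).smulRight e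

theorem radialHessian_apply (φ₁ φ₂ r : ℝ) (e x : E) :
    radialHessian φ₁ φ₂ r e x = (φ₁ / r) • x + (φ₂ - φ₁ / r) • (inner ℝ e x • e) := rfl

theorem isSymmetric_radialHessian (φ₁ φ₂ r : ℝ) (e : E) :
    (radialHessian φ₁ φ₂ r e).IsSymmetric := fun x y => by
  simp only [ContinuousLinearMap.coe_coe, radialHessian_apply, inner_add_left, inner_add_right,
    real_inner_smul_left, real_inner_smul_right, real_inner_comm x e]
  ring

theorem inner_radialHessian_self (φ₁ φ₂ r : ℝ) (e x : E) :
    inner ℝ (radialHessian φ₁ φ₂ r e x) x =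
      φ₁ / r * ‖x‖ ^ 2 + (φ₂ - φ₁ / r) * inner ℝ e x ^ 2 := by
  simp only [radialHessian_apply, inner_add_left, real_inner_smul_left, real_inner_self_eq_norm_sq]
  ring

theorem inner_radialHessian_smul_add_smul {e t : E} (he : ‖e‖ = 1) (het : inner ℝ e t = 0)
    (φ₁ φ₂ r α γ : ℝ) :
    inner ℝ (radialHessian φ₁ φ₂ r e (α • e + γ • t)) (α • e + γ • t) =
      φ₁ / r * ‖t‖ ^ 2 * γ ^ 2 + φ₂ * α ^ 2 := by
  rw [inner_radialHessian_self, norm_add_sq_real, inner_add_right, real_inner_smul_left]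
  simp only [real_inner_smul_right, het, real_inner_self_eq_norm_sq, norm_smul, he, mul_pow,
    Real.norm_eq_abs, sq_abs]
  ring

theorem hasFDerivAt_norm_sub {c x : E} (hx : x ≠ c) :
    HasFDerivAt (fun y => ‖y - c‖) (‖x - c‖⁻¹ • innerSL ℝ (x - c)) x := by
  have hpos : 0 < ‖x - c‖ := norm_pos_iff.2 (sub_ne_zero.2 hx)
  have hsq : HasFDerivAt (fun y => ‖y - c‖ ^ 2) (2 • innerSL ℝ (x - c)) x := by
    have := (hasStrictFDerivAt_norm_sq (x - c)).hasFDerivAt.comp x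
      ((hasFDerivAt_id x).sub_const c)
    exact this
  have hsqrt := hsq.sqrt (by positivity)
  simp only [Real.sqrt_sq (norm_nonneg _)] at hsqrt
  refine hsqrt.congr_fderiv ?_
  ext y
  simp
  field_simp

theorem hasGradientAt_comp_norm_sub [CompleteSpace E] {c x : E} (hx : x ≠ c) {φ : ℝ → ℝ} {φ₁ : ℝ}
    (h : HasDerivAt φ φ₁ ‖x - c‖) :
    HasGradientAt (fun y => φ ‖y - c‖) ((φ₁ / ‖x - c‖) • (x - c)) x := by
  rw [hasGradientAt_iff_hasFDerivAt]
  refine (h.comp_hasFDerivAt x (hasFDerivAt_norm_sub hx)).congr_fderiv ?_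
  ext y
  simp
  ring

theorem hasFDerivAt_radialHessian {c x : E} (hx : x ≠ c) {φ₁ : ℝ → ℝ} {φ₂ : ℝ}
    (h : HasDerivAt φ₁ φ₂ ‖x - c‖) :
    HasFDerivAt (fun y => (φ₁ ‖y - c‖ / ‖y - c‖) • (y - c))
      (radialHessian (φ₁ ‖x - c‖) φ₂ ‖x - c‖ (‖x - c‖⁻¹ • (x - c))) x := by
  have hpos : 0 < ‖x - c‖ := norm_pos_iff.2 (sub_ne_zero.2 hx)
  have hquot := (h.div (hasDerivAt_id _) hpos.ne').comp_hasFDerivAt x (hasFDerivAt_norm_sub hx)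
  refine (hquot.smul ((hasFDerivAt_id x).sub_const c)).congr_fderiv ?_
  ext1 y
  simp only [radialHessian_apply, add_apply, ContinuousLinearMap.smulRight_apply, smul_apply,
    ContinuousLinearMap.id_apply, id, Function.comp_def, innerSL_apply_apply, smul_eq_mul,
    Pi.div_apply, real_inner_smul_left, smul_smul]
  congr 2
  field_simp

end Radial

section InvMetricSqrtNorm

variable {E : Type*} [NormedAddCommGroup E] [InnerProductSpace ℝ E]

theorem norm_invMetricSqrt_apply_sq (p x : E) :
    ‖invMetricSqrt p x‖ ^ 2 = ‖x‖ ^ 2 - inner ℝ p x ^ 2 / (1 + ‖p‖ ^ 2) := by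
  have hW := areaFactor_pos p
  have hp : ‖p‖ ^ 2 = (areaFactor p - 1) * (areaFactor p + 1) := by linarith [areaFactor_sq p]
  rw [← areaFactor_sq, invMetricSqrt_apply, norm_sub_sq_real, real_inner_smul_right, norm_smul,
    mul_pow, Real.norm_eq_abs, sq_abs, hp, real_inner_comm]
  field

theorem norm_invMetricSqrt_apply_le (p x : E) : ‖invMetricSqrt p x‖ ≤ ‖x‖ := by
  have : 0 ≤ inner ℝ p x ^ 2 / (1 + ‖p‖ ^ 2) := by positivity
  exact le_of_sq_le_sq (by linarith [norm_invMetricSqrt_apply_sq p x]) (norm_nonneg _)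

theorem div_le_norm_invMetricSqrt_apply_sq (p x : E) :
    ‖x‖ ^ 2 / (1 + ‖p‖ ^ 2) ≤ ‖invMetricSqrt p x‖ ^ 2 := by
  rw [norm_invMetricSqrt_apply_sq, le_sub_iff_add_le, ← add_div, div_le_iff₀ (by positivity)]
  have := real_inner_mul_inner_self_le p x
  simp only [real_inner_self_eq_norm_sq] at this
  linarith

theorem invMetricSqrt_smul_apply {n : E} (hn : ‖n‖ = 1) (m : ℝ) (x : E) :
    invMetricSqrt (m • n) x = x - ((1 - (areaFactor (m • n))⁻¹) * inner ℝ n x) • n := by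
  have hW := areaFactor_pos (m • n)
  have hm : m ^ 2 = (areaFactor (m • n) - 1) * (areaFactor (m • n) + 1) := by
    have := areaFactor_sq (m • n)
    rw [norm_smul, hn, mul_one, Real.norm_eq_abs, sq_abs] at this
    linarith
  rw [invMetricSqrt_apply, smul_smul, real_inner_smul_left]
  congr 2
  generalize areaFactor (m • n) = W at *
  calc (W * (W + 1))⁻¹ * (m * inner ℝ n x) * m = (W * (W + 1))⁻¹ * m ^ 2 * inner ℝ n x := by ring
    _ = (1 - W⁻¹) * inner ℝ n x := by rw [hm]; field

end InvMetricSqrtNorm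

section Reflection

variable {E : Type*} [NormedAddCommGroup E] [InnerProductSpace ℝ E]

theorem reflection_orthogonal_span_add_apply {e n : E} (he : ‖e‖ = 1) (hn : ‖n‖ = 1)
    (h : 1 + inner ℝ e n ≠ 0) (f : E) :
    (Submodule.span ℝ {e + n})ᗮ.reflection f =
      f - (inner ℝ f (e + n) / (1 + inner ℝ e n)) • (e + n) := by
  have hnorm : ‖e + n‖ ^ 2 = 2 * (1 + inner ℝ e n) := by
    rw [norm_add_sq_real, he, hn]
    ring
  rw [Submodule.reflection_orthogonal_apply, Submodule.reflection_singleton_apply, neg_sub,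
    RCLike.ofReal_real_eq_id, id, hnorm, real_inner_comm, ← Nat.cast_smul_eq_nsmul ℝ 2, smul_smul]
  congr 2
  push_cast
  field_simp

variable {e t : E} {c : ℝ}

/-- Since the reflection maps `e` to `-n`, where `n = c • e + t`, the two frames differ only in
the plane spanned by `e` and `t`. -/
theorem invMetricSqrt_reflection_sub (he : ‖e‖ = 1) (het : inner ℝ e t = 0)
    (hn : ‖c • e + t‖ = 1) (hc : 1 + c ≠ 0) (m P : ℝ) (f : E) :
    invMetricSqrt (m • (c • e + t)) ((Submodule.span ℝ {e + (c • e + t)})ᗮ.reflection f) -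
        invMetricSqrt (P • e) f =
      (-inner ℝ f (t + (c * (areaFactor (m • (c • e + t)))⁻¹ + (areaFactor (P • e))⁻¹) • e)) • e +
        (-inner ℝ f ((1 + c)⁻¹ • t + (areaFactor (m • (c • e + t)))⁻¹ • e)) • t := by
  have hec : inner ℝ e (c • e + t) = c := by
    rw [inner_add_right, real_inner_smul_right, real_inner_self_eq_norm_sq, he, het]
    ring
  have hnf : inner ℝ (c • e + t) (f - (inner ℝ f (e + (c • e + t)) / (1 + c)) •
      (e + (c • e + t))) = -inner ℝ f e := by
    rw [inner_sub_right, real_inner_smul_right, inner_add_right (c • e + t) e,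
      real_inner_comm e (c • e + t), hec, real_inner_self_eq_norm_sq, hn, real_inner_comm f,
      inner_add_right f e]
    field
  rw [reflection_orthogonal_span_add_apply he hn (by rwa [hec]), hec,
    invMetricSqrt_smul_apply hn, invMetricSqrt_smul_apply he, hnf, real_inner_comm f e]
  simp only [inner_add_right, real_inner_smul_right]
  match_scalars <;> field

theorem sum_inner_radialHessian_reflection {ι : Type*} [Fintype ι] (b : OrthonormalBasis ι ℝ E)
    (he : ‖e‖ = 1) (het : inner ℝ e t = 0) (hn : ‖c • e + t‖ = 1) (hc : 1 + c ≠ 0)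
    (m P φ₁ φ₂ r : ℝ) :
    let d i := invMetricSqrt (m • (c • e + t))
      ((Submodule.span ℝ {e + (c • e + t)})ᗮ.reflection (b i)) - invMetricSqrt (P • e) (b i)
    ∑ i, inner ℝ (radialHessian φ₁ φ₂ r e (d i)) (d i) =
      φ₁ / r * ‖t‖ ^ 2 * (((1 + c)⁻¹ * ‖t‖) ^ 2 + (areaFactor (m • (c • e + t)))⁻¹ ^ 2) +
      φ₂ * (‖t‖ ^ 2 + (c * (areaFactor (m • (c • e + t)))⁻¹ + (areaFactor (P • e))⁻¹) ^ 2) := by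
  have parseval (w : E) : ∑ i, inner ℝ (b i) w ^ 2 = ‖w‖ ^ 2 := by
    simpa using b.sum_sq_norm_inner_right w
  have hnorm (x y : ℝ) : ‖x • t + y • e‖ ^ 2 = (x * ‖t‖) ^ 2 + y ^ 2 := by
    rw [norm_add_sq_real, real_inner_smul_left, real_inner_smul_right, real_inner_comm, het,
      norm_smul, norm_smul, he, mul_pow, mul_pow, Real.norm_eq_abs, Real.norm_eq_abs, sq_abs,
      sq_abs]
    ring
  intro d
  simp only [d, invMetricSqrt_reflection_sub he het hn hc,
    inner_radialHessian_smul_add_smul he het, neg_sq, Finset.sum_add_distrib, ← Finset.mul_sum,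
    parseval, hnorm]
  have := hnorm 1 (c * (areaFactor (m • (c • e + t)))⁻¹ + (areaFactor (P • e))⁻¹)
  rw [one_smul, one_mul] at this
  rw [this]

end Reflection

section Steep

variable {E : Type*} [NormedAddCommGroup E] [InnerProductSpace ℝ E] {e p : E} {P k : ℝ}

theorem half_le_norm_of_norm_sub_smul_le (he : ‖e‖ = 1) (hP : 0 ≤ P)
    (hpk : ‖p - P • e‖ ≤ k) (hk : k ≤ P / 2) : P / 2 ≤ ‖p‖ := by
  have := norm_sub_norm_le (P • e) p
  rw [norm_sub_rev, norm_smul, he, mul_one, Real.norm_of_nonneg hP] at this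
  linarith

theorem norm_sub_inner_smul_le (he : ‖e‖ = 1) (w : E) : ‖w - inner ℝ e w • e‖ ≤ ‖w‖ := by
  refine le_of_sq_le_sq ?_ (norm_nonneg w)
  rw [norm_sub_sq_real, real_inner_smul_right, norm_smul, he, mul_one, real_inner_comm,
    Real.norm_eq_abs, sq_abs]
  nlinarith [sq_nonneg (inner ℝ w e)]

theorem exists_unit_decomposition (he : ‖e‖ = 1) (hP : 0 < P) (hpk : ‖p - P • e‖ ≤ k)
    (hk : k ≤ P / 2) :
    ∃ (c : ℝ) (t : E), 0 ≤ c ∧ inner ℝ e t = 0 ∧ ‖c • e + t‖ = 1 ∧ ‖p‖ • (c • e + t) = p ∧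
      ‖t‖ ≤ 2 * k / P := by
  have hm : P / 2 ≤ ‖p‖ := half_le_norm_of_norm_sub_smul_le he hP.le hpk hk
  have hm₀ : 0 < ‖p‖ := by linarith
  have hee : inner ℝ e e = (1 : ℝ) := by rw [real_inner_self_eq_norm_sq, he, one_pow]
  have hw : inner ℝ e (p - P • e) = inner ℝ e p - P := by
    rw [inner_sub_right, real_inner_smul_right, hee, mul_one]
  have hep : 0 ≤ inner ℝ e p := by
    have := (abs_real_inner_le_norm e (p - P • e)).trans_eq (by rw [he, one_mul])
    linarith [(abs_le.1 this).1]
  have ht : p - inner ℝ e p • e = p - P • e - inner ℝ e (p - P • e) • e := by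
    rw [hw]
    module
  have hp : (‖p‖⁻¹ * inner ℝ e p) • e + ‖p‖⁻¹ • (p - inner ℝ e p • e) = ‖p‖⁻¹ • p := by module
  refine ⟨‖p‖⁻¹ * inner ℝ e p, ‖p‖⁻¹ • (p - inner ℝ e p • e), by positivity, ?_, ?_, ?_, ?_⟩
  · rw [real_inner_smul_right, inner_sub_right, real_inner_smul_right, hee]
    ring
  · rw [hp, norm_smul, norm_inv, norm_norm, inv_mul_cancel₀ hm₀.ne']
  · rw [hp, smul_smul, mul_inv_cancel₀ hm₀.ne', one_smul]
  · have htk := (norm_sub_inner_smul_le he (p - P • e)).trans hpk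
    rw [norm_smul, norm_inv, norm_norm, ht, inv_mul_le_iff₀ hm₀]
    calc _ ≤ k := htk
      _ = P / 2 * (2 * k / P) := by field
      _ ≤ _ := mul_le_mul_of_nonneg_right hm (by have := (norm_nonneg _).trans hpk; positivity)

theorem areaFactor_smul_sq_le (he : ‖e‖ = 1) (hP : 1 ≤ P) :
    areaFactor (P • e) ^ 2 ≤ 2 * P ^ 2 := by
  rw [areaFactor_sq, norm_smul, he, mul_one, Real.norm_eq_abs, sq_abs]
  linarith [one_le_pow₀ hP (n := 2)]

/-- The frames are coupled by a reflection rather than chosen equal, so that the concavity `φ₂` of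
a radial test function is felt even though both gradients are almost parallel to `e`. -/
theorem exists_sum_inner_radialHessian_le {ι : Type*} [Fintype ι] (b' : OrthonormalBasis ι ℝ E)
    (he : ‖e‖ = 1) (hP : 1 ≤ P) (hpk : ‖p - P • e‖ ≤ k) (hk : k ≤ P / 2) :
    ∃ b : OrthonormalBasis ι ℝ E, ∀ φ₂ r : ℝ, φ₂ ≤ 0 → 0 < r →
      ∑ i, inner ℝ
          (radialHessian P φ₂ r e (invMetricSqrt p (b i) - invMetricSqrt (P • e) (b' i)))
          (invMetricSqrt p (b i) - invMetricSqrt (P • e) (b' i)) ≤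
        16 * (k ^ 4 + k ^ 2) / (r * P ^ 3) + φ₂ / (2 * P ^ 2) := by
  have hP₀ : 0 < P := by linarith
  have hWp : (areaFactor p)⁻¹ ≤ 2 / P := by
    rw [← inv_div]
    exact inv_anti₀ (by positivity)
      ((half_le_norm_of_norm_sub_smul_le he hP₀.le hpk hk).trans (norm_le_areaFactor p))
  have hWq : (2 * P ^ 2)⁻¹ ≤ (areaFactor (P • e))⁻¹ ^ 2 := by
    rw [inv_pow]
    exact inv_anti₀ (pow_pos (areaFactor_pos _) 2) (areaFactor_smul_sq_le he hP)
  have hWp₀ := inv_nonneg.2 (areaFactor_pos p).le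
  have hWq₀ := inv_nonneg.2 (areaFactor_pos (P • e)).le
  obtain ⟨c, t, hc, het, hn, hp, ht⟩ := exists_unit_decomposition he hP₀ hpk hk
  refine ⟨b'.map (Submodule.span ℝ {e + (c • e + t)})ᗮ.reflection, fun φ₂ r hφ₂ hr => ?_⟩
  have hsum := sum_inner_radialHessian_reflection b' he het hn (by positivity) ‖p‖ P P φ₂ r
  simp only [hp] at hsum
  simp only [OrthonormalBasis.map_apply]
  refine hsum.trans_le (add_le_add ?_ ?_)
  · have hct : (1 + c)⁻¹ * ‖t‖ ≤ 2 * k / P :=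
      (mul_le_of_le_one_left (norm_nonneg t) (inv_le_one_of_one_le₀ (by linarith))).trans ht
    calc _ ≤ P / r * (2 * k / P) ^ 2 * ((2 * k / P) ^ 2 + (2 / P) ^ 2) := by gcongr
      _ = _ := by field
  · rw [div_eq_mul_inv]
    refine mul_le_mul_of_nonpos_left (hWq.trans ?_) hφ₂
    calc _ ≤ (c * (areaFactor p)⁻¹ + (areaFactor (P • e))⁻¹) ^ 2 := by
          gcongr
          exact le_add_of_nonneg_left (by positivity)
      _ ≤ _ := le_add_of_nonneg_left (sq_nonneg _)

end Steep

section AreaFactorLipschitz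

variable {E : Type*} [NormedAddCommGroup E]

theorem areaFactor_le_add_norm_sub (p q : E) : areaFactor p ≤ areaFactor q + ‖p - q‖ := by
  have hpq : ‖p‖ ^ 2 ≤ (‖q‖ + ‖p - q‖) ^ 2 := by
    gcongr
    exact norm_le_norm_add_norm_sub' p q
  have hq := mul_le_mul_of_nonneg_right (norm_le_areaFactor q) (norm_nonneg (p - q))
  refine le_of_sq_le_sq ?_ (add_nonneg (areaFactor_pos q).le (norm_nonneg _))
  nlinarith [areaFactor_sq p, areaFactor_sq q]

theorem abs_areaFactor_sub_le (p q : E) : |areaFactor p - areaFactor q| ≤ ‖p - q‖ :=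
  abs_sub_le_iff.2 ⟨by linarith [areaFactor_le_add_norm_sub p q],
    by linarith [areaFactor_le_add_norm_sub q p, norm_sub_rev p q]⟩

theorem areaFactor_le_one_add_norm (p : E) : areaFactor p ≤ 1 + ‖p‖ :=
  le_of_sq_le_sq (by nlinarith [areaFactor_sq p, norm_nonneg p]) (by positivity)

theorem abs_mul_areaFactor_sub_le {s t Λ r : ℝ} (hst : |s - t| ≤ Λ * r) (hs : |s| ≤ Λ) (p q : E) :
    |s * areaFactor p - t * areaFactor q| ≤ Λ * r * areaFactor q + Λ * ‖p - q‖ :=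
  calc |s * areaFactor p - t * areaFactor q|
      = |(s - t) * areaFactor q + s * (areaFactor p - areaFactor q)| := by ring_nf
    _ ≤ |s - t| * areaFactor q + |s| * |areaFactor p - areaFactor q| := by
      refine (abs_add_le _ _).trans_eq ?_
      rw [abs_mul, abs_mul, abs_of_pos (areaFactor_pos q)]
    _ ≤ _ := add_le_add (mul_le_mul_of_nonneg_right hst (areaFactor_pos q).le)
      (mul_le_mul hs (abs_areaFactor_sub_le p q) (abs_nonneg _) ((abs_nonneg s).trans hs))

theorem neg_mul_le_mul_areaFactor_sub {s t Λ r W : ℝ} (hst : |s - t| ≤ Λ * r) (hs : |s| ≤ Λ)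
    {p q : E} (hq : areaFactor q ≤ W) (n : ℕ) :
    -(n * (Λ * r * W + Λ * ‖p - q‖)) ≤ n * s * areaFactor p - n * t * areaFactor q := by
  have hW := mul_le_mul_of_nonneg_left hq ((abs_nonneg _).trans hst)
  have hcurv := neg_le_of_abs_le (abs_mul_areaFactor_sub_le hst hs p q)
  calc -(n * (Λ * r * W + Λ * ‖p - q‖))
      = n * -(Λ * r * W + Λ * ‖p - q‖) := by ring
    _ ≤ n * (s * areaFactor p - t * areaFactor q) := by
      gcongr
      linarith
    _ = n * s * areaFactor p - n * t * areaFactor q := by ring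

end AreaFactorLipschitz

/-- The terms that the concavity of a radial penalization has to absorb at distance `r` and slope
`P` when a term `C * ‖x - c‖ ^ 2` with slope `k` localizes the doubling of variables in dimension
`N` and `Λ` bounds the right-hand side together with its Lipschitz constant. -/
noncomputable def steepRemainder (N : ℕ) (Λ C r P k : ℝ) : ℝ :=
  16 * (k ^ 4 + k ^ 2) / (r * P ^ 3) + 2 * C * N + N * (2 * Λ * r * P + Λ * k)

section Penalization

variable {E : Type*} [NormedAddCommGroup E] [InnerProductSpace ℝ E]

theorem hasGradientAt_mul_norm_sub_sq [CompleteSpace E] (C : ℝ) (c x : E) :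
    HasGradientAt (fun y => C * ‖y - c‖ ^ 2) ((2 * C) • (x - c)) x := by
  rw [hasGradientAt_iff_hasFDerivAt]
  have h := ((hasStrictFDerivAt_norm_sq (x - c)).hasFDerivAt.comp x
    ((hasFDerivAt_id x).sub_const c)).const_mul C
  refine h.congr_fderiv ?_
  ext y
  simp
  ring

theorem hasFDerivAt_smul_sub_const (C : ℝ) (c x : E) :
    HasFDerivAt (fun y => C • (y - c)) (C • .id ℝ E : E →L[ℝ] E) x :=
  ((hasFDerivAt_id x).sub_const c).const_smul C

theorem isSymmetric_smul_id (C : ℝ) : (C • .id ℝ E : E →L[ℝ] E).IsSymmetric := fun x y => by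
  simp [real_inner_smul_left, real_inner_smul_right]

theorem sum_inner_smul_id_invMetricSqrt_le {ι : Type*} [Fintype ι] (b : OrthonormalBasis ι ℝ E)
    {C : ℝ} (hC : 0 ≤ C) (p : E) :
    ∑ i, inner ℝ ((C • .id ℝ E : E →L[ℝ] E) (invMetricSqrt p (b i))) (invMetricSqrt p (b i)) ≤
      C * Fintype.card ι := by
  have hle (i : ι) :
      inner ℝ ((C • .id ℝ E : E →L[ℝ] E) (invMetricSqrt p (b i))) (invMetricSqrt p (b i)) ≤ C := by
    rw [smul_apply, ContinuousLinearMap.id_apply, real_inner_smul_left, real_inner_self_eq_norm_sq]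
    refine mul_le_of_le_one_right hC (pow_le_one₀ (norm_nonneg _) ?_)
    exact (norm_invMetricSqrt_apply_le p (b i)).trans_eq (b.norm_eq_one i)
  simpa [mul_comm] using Finset.sum_le_sum fun i (_ : i ∈ Finset.univ) => hle i

theorem exists_doubledTrace_le {ι : Type*} [Fintype ι] (b' : OrthonormalBasis ι ℝ E)
    {e w : E} {P C : ℝ} (he : ‖e‖ = 1) (hP : 1 ≤ P) (hC : 0 ≤ C) (hw : ‖w‖ ≤ P / 2) :
    ∃ b : OrthonormalBasis ι ℝ E, ∀ φ₂ r : ℝ, φ₂ ≤ 0 → 0 < r →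
      doubledTrace (radialHessian P φ₂ r e) (C • .id ℝ E) b b' (P • e + w) (P • e) ≤
        16 * (‖w‖ ^ 4 + ‖w‖ ^ 2) / (r * P ^ 3) + φ₂ / (2 * P ^ 2) + C * Fintype.card ι := by
  obtain ⟨b, hb⟩ := exists_sum_inner_radialHessian_le (p := P • e + w) b' he hP
    (by rw [add_sub_cancel_left]) hw
  refine ⟨b, fun φ₂ r hφ₂ hr => ?_⟩
  rw [doubledTrace, Finset.sum_add_distrib]
  exact add_le_add (hb φ₂ r hφ₂ hr) (sum_inner_smul_id_invMetricSqrt_le b hC _)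

end Penalization

section Steep

variable {N : ℕ} {U : Set (EuclideanSpace ℝ (Fin N))} {H u v : EuclideanSpace ℝ (Fin N) → ℝ}

theorem eventually_hasGradientAt_comp_norm_sub {E : Type*} [NormedAddCommGroup E]
    [InnerProductSpace ℝ E] [CompleteSpace E] {φ φ₁ : ℝ → ℝ} {c x : E} (hx : x ≠ c)
    (hφ : ∀ᶠ r in 𝓝 ‖x - c‖, HasDerivAt φ (φ₁ r) r) :
    ∀ᶠ y in 𝓝 x, HasGradientAt (fun y => φ ‖y - c‖) ((φ₁ ‖y - c‖ / ‖y - c‖) • (y - c)) y := by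
  have hcont : ContinuousAt (fun y => ‖y - c‖) x := by fun_prop
  filter_upwards [hcont.eventually hφ, isOpen_ne.mem_nhds hx] with y hy hyc
  exact hasGradientAt_comp_norm_sub hyc hy

theorem IsViscosityPair.neg_div_le_steepRemainder (h : IsViscosityPair U H u v)
    {x y c : EuclideanSpace ℝ (Fin N)} (hx : x ∈ U) (hy : y ∈ U) (hxy : x ≠ y) {C Λ : ℝ}
    (hC : 0 ≤ C) (hH : |H x - H y| ≤ Λ * ‖x - y‖) (hHx : |H x| ≤ Λ) {ψ ψ₁ : ℝ → ℝ} {ψ₂ : ℝ}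
    (hψ : ∀ᶠ r in 𝓝 ‖x - y‖, HasDerivAt ψ (ψ₁ r) r) (hψ₁ : HasDerivAt ψ₁ ψ₂ ‖x - y‖)
    (hψ₂ : ψ₂ ≤ 0) (hP : 1 ≤ ψ₁ ‖x - y‖) (hk : 2 * C * ‖x - c‖ ≤ ψ₁ ‖x - y‖ / 2)
    (hmax : ∀ᶠ ξ in 𝓝 (x, y), v ξ.1 - u ξ.2 - (ψ ‖ξ.1 - ξ.2‖ + C * ‖ξ.1 - c‖ ^ 2)
      ≤ v x - u y - (ψ ‖x - y‖ + C * ‖x - c‖ ^ 2)) :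
    -ψ₂ / (2 * ψ₁ ‖x - y‖ ^ 2) ≤
      steepRemainder N Λ C ‖x - y‖ (ψ₁ ‖x - y‖) (2 * C * ‖x - c‖) := by
  have hd : x - y ≠ 0 := sub_ne_zero.2 hxy
  have hr : 0 < ‖x - y‖ := norm_pos_iff.2 hd
  have hess := hasFDerivAt_radialHessian (c := 0) hd (by rwa [sub_zero])
  have hgrad := eventually_hasGradientAt_comp_norm_sub (c := 0) hd (by rwa [sub_zero])
  simp only [sub_zero] at hess hgrad
  set P := ψ₁ ‖x - y‖ with hPdef
  set e := ‖x - y‖⁻¹ • (x - y)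
  have he : ‖e‖ = 1 := norm_smul_inv_norm hd
  have hPe : (P / ‖x - y‖) • (x - y) = P • e := by rw [smul_smul, div_eq_mul_inv]
  have hw : ‖(2 * C) • (x - c)‖ = 2 * C * ‖x - c‖ := by
    rw [norm_smul, Real.norm_of_nonneg (by positivity)]
  have hPe_norm : ‖P • e‖ = P := by rw [norm_smul, he, mul_one, Real.norm_of_nonneg (by linarith)]
  obtain ⟨b, hb⟩ := exists_doubledTrace_le (EuclideanSpace.basisFun (Fin N) ℝ)
    (w := (2 * C) • (x - c)) he hP (mul_nonneg zero_le_two hC) (hw.trans_le hk)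
  have htrace := h.sub_le_doubledTrace (isSymmetric_radialHessian _ _ _ _)
    (isSymmetric_smul_id (2 * C)) hx hy hgrad hess
    (.of_forall (hasGradientAt_mul_norm_sub_sq C c)) (hasFDerivAt_smul_sub_const (2 * C) c x) hmax
    b (EuclideanSpace.basisFun (Fin N) ℝ)
  have hW : areaFactor (P • e) ≤ 2 * P := by linarith [areaFactor_le_one_add_norm (P • e)]
  have hcurv := neg_mul_le_mul_areaFactor_sub hH hHx (p := P • e + (2 * C) • (x - c)) hW N
  rw [← hPdef, hPe] at htrace
  rw [add_sub_cancel_left, hw] at hcurv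
  have htot := htrace.trans (hb ψ₂ ‖x - y‖ hψ₂ hr)
  rw [hw, Fintype.card_fin] at htot
  rw [steepRemainder, neg_div]
  linarith

end Steep

section Modulus

/-- The bounds on a ball on which the moduli of continuity of a viscosity pair depend: `Λ` bounds
the right-hand side and its Lipschitz constant, `S` bounds the oscillation `v x - u y`. -/
structure PairBounds {E : Type*} [NormedAddCommGroup E] (H u v : E → ℝ) (B : Set E) (Λ S : ℝ) :
    Prop where
  abs_sub_le : ∀ x ∈ B, ∀ y ∈ B, |H x - H y| ≤ Λ * ‖x - y‖
  abs_le : ∀ x ∈ B, |H x| ≤ Λ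
  sub_le : ∀ x ∈ B, ∀ y ∈ B, v x - u y ≤ S
  le : ∀ x ∈ B, v x ≤ u x

theorem PairBounds.mono {E : Type*} [NormedAddCommGroup E] {H u v : E → ℝ} {B B' : Set E}
    {Λ S : ℝ} (h : PairBounds H u v B Λ S) (hB : B' ⊆ B) : PairBounds H u v B' Λ S where
  abs_sub_le x hx y hy := h.abs_sub_le x (hB hx) y (hB hy)
  abs_le x hx := h.abs_le x (hB hx)
  sub_le x hx y hy := h.sub_le x (hB hx) y (hB hy)
  le x hx := h.le x (hB hx)

/-- A concave function `ψ` on `[0, r₁]`, with derivatives `ψ₁` and `ψ₂`, that is too concave to be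
touched from below by `v x - u y - C * ‖x - c‖ ^ 2` as a function of `‖x - y‖`. The function `ω` is
a modulus of continuity that is already known; it limits the slope `k` of the localizing term. -/
structure IsModulusBarrier (N : ℕ) (Λ S C r₁ : ℝ) (ω ψ ψ₁ ψ₂ : ℝ → ℝ) : Prop where
  continuousOn : ContinuousOn ψ (Icc 0 r₁)
  nonneg : ∀ r ∈ Icc 0 r₁, 0 ≤ ψ r
  lt_apply : S < ψ r₁
  hasDerivAt : ∀ r ∈ Ioo 0 r₁, HasDerivAt ψ (ψ₁ r) r
  hasDerivAt_deriv : ∀ r ∈ Ioo 0 r₁, HasDerivAt ψ₁ (ψ₂ r) r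
  nonpos : ∀ r ∈ Ioo 0 r₁, ψ₂ r ≤ 0
  steep : ∀ r ∈ Ioo 0 r₁, ψ r ≤ S → ∀ k, 0 ≤ k → k ^ 2 ≤ 4 * C * ω r →
    1 ≤ ψ₁ r ∧ k ≤ ψ₁ r / 2 ∧ steepRemainder N Λ C r (ψ₁ r) k < -ψ₂ r / (2 * ψ₁ r ^ 2)

section DoublingSet

variable {E : Type*} [NormedAddCommGroup E] {c : E} {ρ r₁ : ℝ}

/-- The set over which the doubled function is maximized in the estimate of the modulus of
continuity at `c`. -/
def doublingSet (c : E) (ρ r₁ : ℝ) : Set (E × E) :=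
  {ξ | ξ.1 ∈ closedBall c (ρ / 2) ∧ ‖ξ.1 - ξ.2‖ ≤ r₁}

theorem doublingSet_subset (hρ : 0 ≤ ρ) (hr₁ : r₁ ≤ ρ / 2) :
    doublingSet c ρ r₁ ⊆ closedBall c ρ ×ˢ closedBall c ρ := by
  rintro ⟨x, y⟩ ⟨hx, hxy⟩
  rw [mem_closedBall] at hx
  rw [← dist_eq_norm, dist_comm] at hxy
  exact ⟨by rw [mem_closedBall]; linarith,
    by rw [mem_closedBall]; linarith [dist_triangle y x c]⟩

theorem isCompact_doublingSet [ProperSpace E] (hρ : 0 ≤ ρ) (hr₁ : r₁ ≤ ρ / 2) :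
    IsCompact (doublingSet c ρ r₁) := by
  refine ((isCompact_closedBall c ρ).prod (isCompact_closedBall c ρ)).of_isClosed_subset
    (.inter (isClosed_closedBall.preimage continuous_fst) ?_) (doublingSet_subset hρ hr₁)
  exact isClosed_le (continuous_fst.sub continuous_snd).norm continuous_const

theorem doublingSet_mem_nhds {x y : E} (hx : ‖x - c‖ < ρ / 2) (hxy : ‖x - y‖ < r₁) :
    doublingSet c ρ r₁ ∈ 𝓝 (x, y) := by
  have hx' : ∀ᶠ ξ : E × E in 𝓝 (x, y), ‖ξ.1 - c‖ < ρ / 2 :=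
    ContinuousAt.eventually_lt (by fun_prop) continuousAt_const hx
  have hxy' : ∀ᶠ ξ : E × E in 𝓝 (x, y), ‖ξ.1 - ξ.2‖ < r₁ :=
    ContinuousAt.eventually_lt (by fun_prop) continuousAt_const hxy
  filter_upwards [hx', hxy'] with ξ h h'
  exact ⟨mem_closedBall_iff_norm.2 h.le, h'.le⟩

end DoublingSet

variable {N : ℕ} {U : Set (EuclideanSpace ℝ (Fin N))} {H u v : EuclideanSpace ℝ (Fin N) → ℝ}
  {c : EuclideanSpace ℝ (Fin N)} {ρ r₁ : ℝ}

theorem IsViscosityPair.exists_isMaxOn (h : IsViscosityPair U H u v)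
    {K : Set (EuclideanSpace ℝ (Fin N) × EuclideanSpace ℝ (Fin N))} (hK : IsCompact K)
    (hKU : K ⊆ U ×ˢ U) (hne : K.Nonempty)
    {Φ : EuclideanSpace ℝ (Fin N) × EuclideanSpace ℝ (Fin N) → ℝ} (hΦ : ContinuousOn Φ K) :
    ∃ ξ ∈ K, IsMaxOn (fun ξ => v ξ.1 - u ξ.2 - Φ ξ) K ξ := by
  have hv := h.upperSemicontinuousOn.comp continuous_fst.continuousOn fun ξ hξ => (hKU hξ).1
  have hu := h.lowerSemicontinuousOn.neg.comp continuous_snd.continuousOn fun ξ hξ => (hKU hξ).2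
  simpa only [Function.comp_def, Pi.neg_apply, Pi.add_apply, ← sub_eq_add_neg] using
    ((hv.add hu).add hΦ.neg.upperSemicontinuousOn).exists_isMaxOn hne hK

variable {Λ S : ℝ} {ω ψ ψ₁ ψ₂ : ℝ → ℝ}

/-- With `C = 8 * S / ρ ^ 2` the localizing term exceeds `S` on the sphere of radius `ρ / 2`. -/
theorem IsModulusBarrier.sub_le (hψ : IsModulusBarrier N Λ S (8 * S / ρ ^ 2) r₁ ω ψ ψ₁ ψ₂)
    (h : IsViscosityPair U H u v) (hB : closedBall c ρ ⊆ U)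
    (hb : PairBounds H u v (closedBall c ρ) Λ S) (hρ : 0 < ρ) (hS : 0 < S) (hr₁ : r₁ ≤ ρ / 2)
    (hω : ∀ x ∈ closedBall c (ρ / 2), ∀ y ∈ closedBall c ρ, ‖x - y‖ ≤ r₁ →
      v x - u y ≤ ω ‖x - y‖)
    {y : EuclideanSpace ℝ (Fin N)} (hy : ‖c - y‖ ≤ r₁) : v c - u y ≤ ψ ‖c - y‖ := by
  by_contra! hlt
  have hcK : (c, y) ∈ doublingSet c ρ r₁ := ⟨mem_closedBall_self (by linarith), hy⟩
  set C := 8 * S / ρ ^ 2 with hCdef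
  have hC : 0 < C := by positivity
  have hsub := doublingSet_subset (c := c) hρ.le hr₁
  have hpen : ContinuousOn (fun ξ : EuclideanSpace ℝ (Fin N) × EuclideanSpace ℝ (Fin N) =>
      ψ ‖ξ.1 - ξ.2‖ + C * ‖ξ.1 - c‖ ^ 2) (doublingSet c ρ r₁) :=
    (hψ.continuousOn.comp (by fun_prop) fun ξ hξ => ⟨norm_nonneg _, hξ.2⟩).add (by fun_prop)
  obtain ⟨⟨z, w⟩, hzw, hmax⟩ := h.exists_isMaxOn (isCompact_doublingSet hρ.le hr₁)
    (hsub.trans (prod_mono hB hB)) ⟨_, hcK⟩ hpen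
  obtain ⟨hz, hw⟩ := hsub hzw
  have hpos : 0 < v z - u w - (ψ ‖z - w‖ + C * ‖z - c‖ ^ 2) := by
    refine lt_of_lt_of_le ?_ (hmax hcK)
    simpa using hlt
  have hψ₀ := hψ.nonneg ‖z - w‖ ⟨norm_nonneg _, hzw.2⟩
  have hCz : 0 ≤ C * ‖z - c‖ ^ 2 := by positivity
  have hgap := hb.sub_le z hz w hw
  have hne : z ≠ w := by
    rintro rfl
    linarith [hb.le z hz]
  have hzw_lt : ‖z - w‖ < r₁ := hzw.2.lt_of_ne fun heq => by
    linarith [hψ.lt_apply, heq ▸ hpos]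
  have hzc_lt : ‖z - c‖ < ρ / 2 := (mem_closedBall_iff_norm.1 hzw.1).lt_of_ne fun heq => by
    have : C * (ρ / 2) ^ 2 = 2 * S := by rw [hCdef]; field
    rw [heq, this] at hpos
    linarith
  have hr : ‖z - w‖ ∈ Ioo 0 r₁ := ⟨norm_pos_iff.2 (sub_ne_zero.2 hne), hzw_lt⟩
  have hslope : (2 * C * ‖z - c‖) ^ 2 ≤ 4 * C * ω ‖z - w‖ := by
    have := mul_le_mul_of_nonneg_left
      (show C * ‖z - c‖ ^ 2 ≤ ω ‖z - w‖ by linarith [hω z hzw.1 w hw hzw.2]) hC.le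
    linarith
  obtain ⟨hP, hk, hlt⟩ := hψ.steep _ hr (by linarith) (2 * C * ‖z - c‖) (by positivity) hslope
  exact hlt.not_ge (h.neg_div_le_steepRemainder (hB hz) (hB hw) hne hC.le
    (hb.abs_sub_le z hz w hw) (hb.abs_le z hz)
    (eventually_of_mem (isOpen_Ioo.mem_nhds hr) hψ.hasDerivAt) (hψ.hasDerivAt_deriv _ hr)
    (hψ.nonpos _ hr) hP hk (eventually_of_mem (doublingSet_mem_nhds hzc_lt hzw_lt) hmax))

end Modulus

/-! ### Interior moduli of continuity -/

section Holder

variable {N : ℕ} {Λ S C k₀ : ℝ}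

theorem steepRemainder_le {r P k : ℝ} (hΛ : 0 ≤ Λ) (hk : k ≤ k₀) :
    steepRemainder N Λ C r P k ≤
      16 * (k ^ 4 + k ^ 2) / (r * P ^ 3) + (2 * C * N + N * Λ * k₀) + 2 * N * Λ * (r * P) := by
  have : N * (Λ * k) ≤ N * (Λ * k₀) := by gcongr
  rw [steepRemainder]
  linarith

theorem steepRemainder_lt_of_mul_le {b r P k s : ℝ} (hΛ : 0 ≤ Λ) (hC : 0 ≤ C) (hk : 0 ≤ k)
    (hkk₀ : k ≤ k₀) (hr : 0 < r) (hP : 1 + 256 * (k₀ ^ 4 + k₀ ^ 2) ≤ P) (hs : r * P ≤ s)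
    (hs₁ : s ≤ 1) (hA : (2 * C * N + N * Λ * k₀) * s ≤ 1 / 16) (hL : 2 * N * Λ * s ≤ 1 / 16)
    (hb : b ≤ 1 / 4) : steepRemainder N Λ C r P k < -((b - 1) * P / r) / (2 * P ^ 2) := by
  have hk₀ : 0 ≤ k₀ := hk.trans hkk₀
  have hP₁ : 1 ≤ P := by linarith [show 0 ≤ k₀ ^ 4 + k₀ ^ 2 by positivity]
  have hrP : 0 < r * P := by positivity
  have hquartic : 16 * (k ^ 4 + k ^ 2) / (r * P ^ 3) * (r * P) ≤ 1 / 16 :=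
    calc 16 * (k ^ 4 + k ^ 2) / (r * P ^ 3) * (r * P) = 16 * (k ^ 4 + k ^ 2) / P ^ 2 := by field
      _ ≤ 1 / 16 := by
        rw [div_le_iff₀ (by positivity)]
        have : k ^ 4 + k ^ 2 ≤ k₀ ^ 4 + k₀ ^ 2 := by gcongr
        nlinarith
  have hconst : (2 * C * N + N * Λ * k₀) * (r * P) ≤ 1 / 16 :=
    (mul_le_mul_of_nonneg_left hs (by positivity)).trans hA
  have hlin : 2 * N * Λ * (r * P) * (r * P) ≤ 1 / 16 :=
    (mul_le_of_le_one_right (by positivity) (hs.trans hs₁)).trans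
      ((mul_le_mul_of_nonneg_left hs (by positivity)).trans hL)
  have hconcave : -((b - 1) * P / r) / (2 * P ^ 2) = (1 - b) / 2 / (r * P) := by field
  rw [hconcave, lt_div_iff₀ hrP]
  refine (mul_le_mul_of_nonneg_right (steepRemainder_le hΛ hkk₀) hrP.le).trans_lt ?_
  linarith

theorem hasDerivAt_const_mul_rpow_div (a b : ℝ) {r : ℝ} (hr : r ≠ 0) :
    HasDerivAt (fun r => a * r ^ b) (b * (a * r ^ b) / r) r := by
  refine ((Real.hasDerivAt_rpow_const (p := b) (Or.inl hr)).const_mul a).congr_deriv ?_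
  rw [Real.rpow_sub_one hr]
  ring

/-- The slope `1 + 256 * (k₀ ^ 4 + k₀ ^ 2) + 2 * k₀` is attained at `r₁`; to the left of it the
power is steeper. -/
theorem isModulusBarrier_rpow {b r₁ : ℝ} (hΛ : 0 ≤ Λ) (hS : 0 < S) (hC : 0 ≤ C) (hk₀ : 0 ≤ k₀)
    (hk₀S : k₀ ^ 2 = 4 * C * S) (hb : 0 < b) (hb₁ : b ≤ 1 / 4) (hbS : b * S ≤ 1)
    (hA : (2 * C * N + N * Λ * k₀) * (b * S) ≤ 1 / 16) (hL : 2 * N * Λ * (b * S) ≤ 1 / 16)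
    (hr₁ : 0 < r₁) (hslope : 1 + 256 * (k₀ ^ 4 + k₀ ^ 2) + 2 * k₀ ≤ (S + 1) * b / r₁) :
    IsModulusBarrier N Λ S C r₁ (fun _ => S) (fun r => (S + 1) / r₁ ^ b * r ^ b)
      (fun r => (S + 1) / r₁ ^ b * b * r ^ (b - 1))
      (fun r => (b - 1) * ((S + 1) / r₁ ^ b * b * r ^ (b - 1)) / r) where
  continuousOn := continuousOn_const.mul (continuousOn_id.rpow_const fun _ _ => Or.inr hb.le)
  nonneg r hr := mul_nonneg (by positivity) (Real.rpow_nonneg hr.1 _)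
  lt_apply := by rw [div_mul_cancel₀ _ (by positivity)]; linarith
  hasDerivAt r hr := (hasDerivAt_const_mul_rpow_div _ b hr.1.ne').congr_deriv (by
    rw [Real.rpow_sub_one hr.1.ne']; ring)
  hasDerivAt_deriv r hr := hasDerivAt_const_mul_rpow_div _ (b - 1) hr.1.ne'
  nonpos r hr := by
    have := hr.1
    exact div_nonpos_of_nonpos_of_nonneg
      (mul_nonpos_of_nonpos_of_nonneg (by linarith) (by positivity)) hr.1.le
  steep r hr hψ k hk hkS := by
    obtain ⟨hr₀, hrr₁⟩ := hr
    set P := (S + 1) / r₁ ^ b * b * r ^ (b - 1) with hPdef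
    have hrP : r * P ≤ b * S := by
      refine (mul_le_mul_of_nonneg_left hψ hb.le).trans_eq' ?_
      rw [hPdef, Real.rpow_sub_one hr₀.ne']
      field
    have hP : (S + 1) * b / r₁ ≤ P :=
      calc (S + 1) * b / r₁ = (S + 1) / r₁ ^ b * b * r₁ ^ (b - 1) := by
            rw [Real.rpow_sub_one hr₁.ne']; field
        _ ≤ P := mul_le_mul_of_nonneg_left
          (Real.rpow_le_rpow_of_nonpos hr₀ hrr₁.le (by linarith)) (by positivity)
    have hkk₀ : k ≤ k₀ := le_of_sq_le_sq (hk₀S ▸ hkS) hk₀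
    have hpoly : 0 ≤ k₀ ^ 4 + k₀ ^ 2 := by positivity
    exact ⟨by linarith, by linarith, steepRemainder_lt_of_mul_le hΛ hC hk hkk₀ hr₀ (by linarith)
      hrP hbS hA hL hb₁⟩

theorem exists_isModulusBarrier_rpow (N : ℕ) {ρ : ℝ} (hΛ : 0 ≤ Λ) (hS : 0 < S) (hC : 0 ≤ C)
    (hρ : 0 < ρ) : ∃ a b r₁ : ℝ, 0 < a ∧ 0 < b ∧ 0 < r₁ ∧ r₁ ≤ ρ / 2 ∧ ∃ ψ₁ ψ₂,
      IsModulusBarrier N Λ S C r₁ (fun _ => S) (fun r => a * r ^ b) ψ₁ ψ₂ := by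
  set k₀ := √(4 * C * S)
  set A := 2 * C * N + N * Λ * k₀
  set L := 2 * N * Λ
  set b := (16 * (1 + S * (1 + A + L)))⁻¹ with hbdef
  set P₀ := 1 + 256 * (k₀ ^ 4 + k₀ ^ 2) + 2 * k₀
  set r₁ := min (ρ / 2) ((S + 1) * b / P₀)
  have hb : 0 < b := by positivity
  have hP₀ : 0 < P₀ := by positivity
  have hr₁ : 0 < r₁ := by positivity
  have hsum : 16 * b + 16 * (b * S) + 16 * (A * (b * S)) + 16 * (L * (b * S)) = 1 := by
    rw [hbdef]; field
  have hbS : 0 < b * S := by positivity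
  have hA : 0 ≤ A * (b * S) := by positivity
  have hL : 0 ≤ L * (b * S) := by positivity
  have hslope : P₀ ≤ (S + 1) * b / r₁ := by
    rw [le_div_comm₀ hP₀ hr₁]
    exact min_le_right _ _
  exact ⟨_, b, r₁, by positivity, hb, hr₁, min_le_left _ _, _, _,
    isModulusBarrier_rpow hΛ hS hC (Real.sqrt_nonneg _) (Real.sq_sqrt (by positivity)) hb
      (by linarith) (by linarith) (by linarith) (by linarith) hr₁ hslope⟩

theorem IsViscosityPair.exists_sub_le_mul_rpow {U : Set (EuclideanSpace ℝ (Fin N))}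
    {H u v : EuclideanSpace ℝ (Fin N) → ℝ} (h : IsViscosityPair U H u v) {ρ : ℝ} (hρ : 0 < ρ)
    (hΛ : 0 ≤ Λ) (hS : 0 < S) :
    ∃ a b r₁ : ℝ, 0 < a ∧ 0 < b ∧ 0 < r₁ ∧ ∀ c, closedBall c ρ ⊆ U →
      PairBounds H u v (closedBall c ρ) Λ S → ∀ y, ‖c - y‖ ≤ r₁ →
        v c - u y ≤ a * ‖c - y‖ ^ b := by
  obtain ⟨a, b, r₁, ha, hb, hr₁, hr₁ρ, ψ₁, ψ₂, hψ⟩ :=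
    exists_isModulusBarrier_rpow N hΛ hS (C := 8 * S / ρ ^ 2) (by positivity) hρ
  refine ⟨a, b, r₁, ha, hb, hr₁, fun c hB hbd y hy => hψ.sub_le h hB hbd hρ hS hr₁ρ ?_ hy⟩
  exact fun x hx y hy _ => hbd.sub_le x (closedBall_subset_closedBall (by linarith) hx) y hy

end Holder

section LogBarrier

variable {a τ β r S : ℝ}

theorem lt_log_one_add_div_div (ha : 0 < a) (hτ : 0 < τ) (hr : 0 < r)
    (h : τ ≤ r * Real.exp (-(a * S))) : S < Real.log (1 + r / τ) / a := by
  have hexp : Real.exp (a * S) ≤ r / τ := by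
    rw [le_div_iff₀ hτ, ← le_div_iff₀' (Real.exp_pos _), div_eq_mul_inv, ← Real.exp_neg]
    exact h
  rw [lt_div_iff₀ ha, Real.lt_log_iff_exp_lt (by positivity), mul_comm]
  linarith

theorem hasDerivAt_log_one_add_div_div (ha : 0 < a) (hτ : 0 < τ) (hr : 0 < r + τ) :
    HasDerivAt (fun r => Real.log (1 + r / τ) / a) (a * (r + τ))⁻¹ r := by
  have hone : 1 + r / τ = (r + τ) / τ := by field
  have hlog := ((((hasDerivAt_id r).div_const τ).const_add 1).log
    (by rw [id, hone]; positivity)).div_const a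
  refine hlog.congr_deriv ?_
  rw [id, hone]
  field

theorem hasDerivAt_inv_mul_add (ha : 0 < a) (hr : 0 < r + τ) :
    HasDerivAt (fun r => (a * (r + τ))⁻¹) (-(a * (a * (r + τ))⁻¹ ^ 2)) r := by
  refine ((((hasDerivAt_id r).add_const τ).const_mul a).inv
    (show a * (r + τ) ≠ 0 by positivity)).congr_deriv ?_
  rw [id]
  field

/-- The barrier that improves a Hölder modulus of continuity to a Lipschitz one. The logarithm
contributes a large multiple of the squared slope as concavity, the power `r ^ (1 + β)` concavity of
order `r ^ (β - 1)` near the origin. -/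
noncomputable def logBarrier (a τ β r : ℝ) : ℝ :=
  Real.log (1 + r / τ) / a + r - r ^ (1 + β) / (1 + β)

theorem continuousOn_logBarrier (hτ : 0 < τ) (hβ : 0 < β) :
    ContinuousOn (logBarrier a τ β) (Ici 0) := by
  have hlog : ContinuousOn (fun r => Real.log (1 + r / τ)) (Ici 0) := by
    refine ContinuousOn.log (by fun_prop) fun r hr => ?_
    have : 0 ≤ r / τ := div_nonneg hr hτ.le
    positivity
  exact ((hlog.div_const a).add continuousOn_id).sub
    ((continuousOn_id.rpow_const fun _ _ => Or.inr (by positivity)).div_const _)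

theorem log_div_le_logBarrier (hβ : 0 < β) (hr : 0 ≤ r) (hr₁ : r ≤ 1) :
    Real.log (1 + r / τ) / a ≤ logBarrier a τ β r := by
  have hpow : r ^ (1 + β) / (1 + β) ≤ r := by
    refine (div_le_self (by positivity) (by linarith)).trans ?_
    simpa using Real.rpow_le_rpow_of_exponent_ge' hr hr₁ zero_le_one (by linarith : 1 ≤ 1 + β)
  rw [logBarrier]
  linarith

theorem logBarrier_nonneg (ha : 0 < a) (hτ : 0 < τ) (hβ : 0 < β) (hr : 0 ≤ r) (hr₁ : r ≤ 1) :
    0 ≤ logBarrier a τ β r := by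
  refine le_trans ?_ (log_div_le_logBarrier hβ hr hr₁)
  exact div_nonneg (Real.log_nonneg (le_add_of_nonneg_right (by positivity))) ha.le

theorem logBarrier_le (ha : 0 < a) (hτ : 0 < τ) (hβ : 0 < β) (hr : 0 ≤ r) :
    logBarrier a τ β r ≤ ((a * τ)⁻¹ + 1) * r := by
  have hlog : Real.log (1 + r / τ) / a ≤ r / τ / a := by
    gcongr
    linarith [Real.log_le_sub_one_of_pos (show 0 < 1 + r / τ by positivity)]
  have hpow : 0 ≤ r ^ (1 + β) / (1 + β) := by positivity
  have heq : r / τ / a = (a * τ)⁻¹ * r := by field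
  rw [logBarrier]
  linarith

theorem hasDerivAt_logBarrier (ha : 0 < a) (hτ : 0 < τ) (hβ : 0 < β) (hr : 0 < r) :
    HasDerivAt (logBarrier a τ β) ((a * (r + τ))⁻¹ + 1 - r ^ β) r := by
  have hlog := hasDerivAt_log_one_add_div_div ha hτ (show 0 < r + τ by positivity)
  have hpow := (Real.hasDerivAt_rpow_const (p := 1 + β) (Or.inl hr.ne')).div_const (1 + β)
  refine ((hlog.add (hasDerivAt_id r)).sub hpow).congr_deriv ?_
  rw [add_sub_cancel_left, mul_div_cancel_left₀ _ (by positivity)]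

theorem hasDerivAt_inv_mul_add_sub_rpow (ha : 0 < a) (hτ : 0 < τ) (hr : 0 < r) :
    HasDerivAt (fun r => (a * (r + τ))⁻¹ + 1 - r ^ β)
      (-(a * (a * (r + τ))⁻¹ ^ 2) - β * (r ^ β / r)) r := by
  have hinv := hasDerivAt_inv_mul_add ha (show 0 < r + τ by positivity)
  have hpow := Real.hasDerivAt_rpow_const (p := β) (Or.inl hr.ne')
  refine ((hinv.add_const 1).sub hpow).congr_deriv ?_
  rw [Real.rpow_sub_one hr.ne']

end LogBarrier

section Lipschitz

variable {N : ℕ} {Λ S C k₀ : ℝ}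

/-- The concavity `β * (R / r)` absorbs the quartic term and `a * P₀ ^ 2` everything else. -/
theorem steepRemainder_lt_of_log {a β r R P₀ k : ℝ} (hΛ : 0 ≤ Λ) (hC : 0 ≤ C) (hβ : 0 < β)
    (hk₀ : 0 ≤ k₀) (ha : 8 * (2 * C * N + N * Λ * k₀ + 4 * N * Λ + 1) ≤ a) (hr : 0 < r)
    (hR : 0 < R) (hR₁ : R ≤ 1) (hkR : k ^ 2 ≤ k₀ ^ 2 * R)
    (hP₀ : 1 + 2 * k₀ + 32 * (k₀ ^ 2 + 1) * k₀ ^ 2 / β ≤ P₀) (hrP₀ : r * P₀ ≤ 1) :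
    1 ≤ P₀ + 1 - R ∧ k ≤ (P₀ + 1 - R) / 2 ∧ steepRemainder N Λ C r (P₀ + 1 - R) k <
      -(-(a * P₀ ^ 2) - β * (R / r)) / (2 * (P₀ + 1 - R) ^ 2) := by
  have hquot : 0 ≤ 32 * (k₀ ^ 2 + 1) * k₀ ^ 2 / β := by positivity
  have hk₀R : k ^ 2 ≤ k₀ ^ 2 := hkR.trans (mul_le_of_le_one_right (by positivity) hR₁)
  have hkk₀ : k ≤ k₀ := le_of_sq_le_sq hk₀R hk₀
  set P := P₀ + 1 - R
  have hP₁ : 1 ≤ P := by linarith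
  have hP : 0 < P := by linarith
  have hPP₀ : P ≤ 2 * P₀ := by linarith
  refine ⟨hP₁, by linarith, ?_⟩
  have hquartic : 16 * (k ^ 4 + k ^ 2) / (r * P ^ 3) ≤ β * (R / r) / (2 * P ^ 2) :=
    calc 16 * (k ^ 4 + k ^ 2) / (r * P ^ 3) = 16 * ((k ^ 2 + 1) * k ^ 2) / (r * P ^ 3) := by ring
      _ ≤ 16 * ((k₀ ^ 2 + 1) * (k₀ ^ 2 * R)) / (r * P ^ 3) := by gcongr
      _ = 32 * (k₀ ^ 2 + 1) * k₀ ^ 2 / β * (β * R) / (2 * r * P ^ 3) := by field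
      _ ≤ P * (β * R) / (2 * r * P ^ 3) := by gcongr; linarith
      _ = β * (R / r) / (2 * P ^ 2) := by field
  have hrP : r * P ≤ 2 := by nlinarith
  have hNΛ : 2 * N * Λ * (r * P) ≤ 2 * N * Λ * 2 := by gcongr
  have hcurv : 0 ≤ 2 * C * N + N * Λ * k₀ + 4 * N * Λ := by positivity
  have hlog : a / 8 ≤ a * P₀ ^ 2 / (2 * P ^ 2) := by
    have ha₀ : 0 ≤ a := by linarith
    rw [div_le_div_iff₀ (by norm_num) (by positivity)]
    nlinarith [mul_le_mul_of_nonneg_left (pow_le_pow_left₀ hP.le hPP₀ 2) ha₀]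
  rw [neg_sub, sub_neg_eq_add, add_div]
  linarith [steepRemainder_le (N := N) (C := C) (r := r) (P := P) hΛ hkk₀]

theorem isModulusBarrier_logBarrier {A a β r₁ : ℝ} (hΛ : 0 ≤ Λ) (hS : 0 < S) (hC : 0 ≤ C)
    (hβ : 0 < β) (hk₀ : 0 ≤ k₀) (hk₀A : k₀ ^ 2 = 4 * C * A)
    (ha : 8 * (2 * C * N + N * Λ * k₀ + 4 * N * Λ + 1) ≤ a) (hr₁ : 0 < r₁)
    (hslope : 1 + 2 * k₀ + 32 * (k₀ ^ 2 + 1) * k₀ ^ 2 / β ≤ (2 * a * r₁)⁻¹) :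
    IsModulusBarrier N Λ S C r₁ (fun r => A * r ^ β)
      (logBarrier a (r₁ * Real.exp (-(a * S))) β)
      (fun r => (a * (r + r₁ * Real.exp (-(a * S))))⁻¹ + 1 - r ^ β)
      (fun r => -(a * (a * (r + r₁ * Real.exp (-(a * S))))⁻¹ ^ 2) - β * (r ^ β / r)) := by
  have hcurv : 0 ≤ 2 * C * N + N * Λ * k₀ + 4 * N * Λ := by positivity
  have ha₁ : 1 ≤ a := by linarith
  have ha₀ : 0 < a := by linarith
  have hr₁₁ : r₁ ≤ 1 := by
    have h1 : 1 ≤ (2 * a * r₁)⁻¹ := by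
      linarith [show 0 ≤ 2 * k₀ + 32 * (k₀ ^ 2 + 1) * k₀ ^ 2 / β by positivity]
    have h2 := (one_le_inv₀ (by positivity)).1 h1
    nlinarith
  set τ := r₁ * Real.exp (-(a * S))
  have hτ : 0 < τ := by positivity
  have hτr₁ : τ ≤ r₁ :=
    mul_le_of_le_one_right hr₁.le (Real.exp_le_one_iff.2 (neg_nonpos.2 (by positivity)))
  refine ⟨(continuousOn_logBarrier hτ hβ).mono Icc_subset_Ici_self,
    fun r hr => logBarrier_nonneg ha₀ hτ hβ hr.1 (hr.2.trans hr₁₁),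
    (lt_log_one_add_div_div ha₀ hτ hr₁ le_rfl).trans_le (log_div_le_logBarrier hβ hr₁.le hr₁₁),
    fun r hr => hasDerivAt_logBarrier ha₀ hτ hβ hr.1,
    fun r hr => hasDerivAt_inv_mul_add_sub_rpow ha₀ hτ hr.1, fun r hr => ?_,
    fun r hr _ k _ hkA => ?_⟩
  · have := hr.1
    have h₁ : 0 ≤ a * (a * (r + τ))⁻¹ ^ 2 := by positivity
    have h₂ : 0 ≤ β * (r ^ β / r) := by positivity
    linarith
  · obtain ⟨hr₀, hrr₁⟩ := hr
    refine steepRemainder_lt_of_log hΛ hC hβ hk₀ ha hr₀ (by positivity)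
      (Real.rpow_le_one hr₀.le (by linarith) hβ.le) (by rw [hk₀A]; linarith)
      (hslope.trans (inv_anti₀ (by positivity) ?_)) ?_
    · nlinarith
    · rw [← div_eq_mul_inv, div_le_one (by positivity)]
      nlinarith

theorem exists_isModulusBarrier_logBarrier (N : ℕ) {A β ρ : ℝ} (hΛ : 0 ≤ Λ) (hS : 0 < S)
    (hC : 0 ≤ C) (hA : 0 ≤ A) (hβ : 0 < β) (hρ : 0 < ρ) :
    ∃ a τ r₁ : ℝ, 0 < a ∧ 0 < τ ∧ 0 < r₁ ∧ r₁ ≤ ρ ∧ ∃ ψ₁ ψ₂,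
      IsModulusBarrier N Λ S C r₁ (fun r => A * r ^ β) (logBarrier a τ β) ψ₁ ψ₂ := by
  set k₀ := √(4 * C * A)
  set a := 8 * (2 * C * N + N * Λ * k₀ + 4 * N * Λ + 1)
  set P₀ := 1 + 2 * k₀ + 32 * (k₀ ^ 2 + 1) * k₀ ^ 2 / β
  set r₁ := min ρ (2 * a * P₀)⁻¹
  have ha : 0 < a := by positivity
  have hP₀ : 0 < P₀ := by positivity
  have hr₁ : 0 < r₁ := by positivity
  have hslope : P₀ ≤ (2 * a * r₁)⁻¹ := by
    rw [le_inv_comm₀ hP₀ (by positivity)]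
    calc 2 * a * r₁ ≤ 2 * a * (2 * a * P₀)⁻¹ := by gcongr; exact min_le_right _ _
      _ = P₀⁻¹ := by field
  exact ⟨a, _, r₁, ha, by positivity, hr₁, min_le_left _ _, _, _,
    isModulusBarrier_logBarrier hΛ hS hC hβ (Real.sqrt_nonneg _) (Real.sq_sqrt (by positivity))
      le_rfl hr₁ hslope⟩

theorem IsViscosityPair.exists_sub_le_mul {U : Set (EuclideanSpace ℝ (Fin N))}
    {H u v : EuclideanSpace ℝ (Fin N) → ℝ} (h : IsViscosityPair U H u v) {ρ : ℝ} (hρ : 0 < ρ)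
    (hΛ : 0 ≤ Λ) (hS : 0 < S) :
    ∃ L r₁ : ℝ, 0 < L ∧ 0 < r₁ ∧ ∀ c, closedBall c ρ ⊆ U →
      PairBounds H u v (closedBall c ρ) Λ S → ∀ y, ‖c - y‖ ≤ r₁ → v c - u y ≤ L * ‖c - y‖ := by
  obtain ⟨A, β, r₀, hA, hβ, hr₀, hholder⟩ := h.exists_sub_le_mul_rpow (half_pos hρ) hΛ hS
  obtain ⟨a, τ, r₁, ha, hτ, hr₁, hr₁le, ψ₁, ψ₂, hψ⟩ := exists_isModulusBarrier_logBarrier N hΛ hS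
    (C := 8 * S / ρ ^ 2) (by positivity) hA.le hβ (lt_min (half_pos hρ) hr₀)
  refine ⟨(a * τ)⁻¹ + 1, r₁, by positivity, hr₁, fun c hB hbd y hy => ?_⟩
  refine (hψ.sub_le h hB hbd hρ hS (hr₁le.trans (min_le_left _ _)) (fun x hx y _ hxy => ?_)
    hy).trans (logBarrier_le ha hτ hβ (norm_nonneg _))
  have hsub : closedBall x (ρ / 2) ⊆ closedBall c ρ :=
    closedBall_subset_closedBall' (by linarith [mem_closedBall.1 hx])
  exact hholder x (hsub.trans hB) (hbd.mono hsub) y (hxy.trans (hr₁le.trans (min_le_right _ _)))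

end Lipschitz

/-! ### The Hopf lemma -/

section Shallow

variable {E : Type*} [NormedAddCommGroup E] [InnerProductSpace ℝ E]

theorem contDiff_areaFactor {n : WithTop ℕ∞} : ContDiff ℝ n (areaFactor : E → ℝ) :=
  (contDiff_const.add (contDiff_norm_sq ℝ)).sqrt fun _ => by positivity

theorem contDiff_invMetricSqrt {n : WithTop ℕ∞} :
    ContDiff ℝ n (invMetricSqrt : E → E →L[ℝ] E) := by
  have hne (p : E) : areaFactor p * (areaFactor p + 1) ≠ 0 := by
    have := areaFactor_pos p
    positivity
  exact contDiff_const.sub (((contDiff_areaFactor.mul (contDiff_areaFactor.add contDiff_const)).inv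
    hne).smul ((innerSL ℝ).contDiff.smulRight contDiff_id))

theorem exists_lipschitzOnWith_invMetricSqrt [FiniteDimensional ℝ E] (ρ : ℝ) :
    ∃ K, LipschitzOnWith K (invMetricSqrt : E → E →L[ℝ] E) (closedBall 0 ρ) :=
  contDiff_invMetricSqrt.contDiffOn.exists_lipschitzOnWith one_ne_zero (convex_closedBall 0 ρ)
    (isCompact_closedBall 0 ρ)

theorem inner_invMetricSqrt_right (p x y : E) :
    inner ℝ x (invMetricSqrt p y) = inner ℝ (invMetricSqrt p x) y := by
  simp only [invMetricSqrt_apply, inner_sub_left, inner_sub_right, real_inner_smul_left,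
    real_inner_smul_right, real_inner_comm p x]
  ring

variable {ι : Type*} [Fintype ι] (b : OrthonormalBasis ι ℝ E)

theorem sum_inner_invMetricSqrt_sq (p e : E) :
    ∑ i, inner ℝ e (invMetricSqrt p (b i)) ^ 2 = ‖invMetricSqrt p e‖ ^ 2 := by
  simp only [inner_invMetricSqrt_right]
  exact b.sum_sq_inner_left _

theorem sum_inner_radialHessian_invMetricSqrt_le {e : E} (he : ‖e‖ = 1) {φ₁ φ₂ r : ℝ}
    (hφ₁ : 0 ≤ φ₁ / r) (hφ₂ : φ₂ ≤ 0) (p : E) :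
    ∑ i, inner ℝ (radialHessian φ₁ φ₂ r e (invMetricSqrt p (b i))) (invMetricSqrt p (b i)) ≤
      Fintype.card ι * (φ₁ / r) + φ₂ / (1 + ‖p‖ ^ 2) := by
  have hnorm : ∑ i, ‖invMetricSqrt p (b i)‖ ^ 2 ≤ Fintype.card ι := by
    refine (Finset.sum_le_card_nsmul _ _ 1 fun i _ => pow_le_one₀ (norm_nonneg _) ?_).trans_eq ?_
    · exact (norm_invMetricSqrt_apply_le p (b i)).trans_eq (b.norm_eq_one i)
    · simp
  have hlow := div_le_norm_invMetricSqrt_apply_sq p e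
  rw [he, one_pow] at hlow
  simp only [inner_radialHessian_self, Finset.sum_add_distrib, ← Finset.mul_sum,
    sum_inner_invMetricSqrt_sq]
  have h₁ := mul_le_mul_of_nonneg_left hnorm hφ₁
  have h₂ := mul_le_mul_of_nonpos_left hlow hφ₂
  have h₃ := mul_nonneg hφ₁ (sq_nonneg ‖invMetricSqrt p e‖)
  rw [mul_one_div] at h₂
  linarith

theorem sum_inner_smul_id_invMetricSqrt_sub_le {C k : ℝ} (hC : 0 ≤ C) {p q : E}
    (hk : ‖invMetricSqrt p - invMetricSqrt q‖ ≤ k) :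
    ∑ i, inner ℝ ((C • .id ℝ E : E →L[ℝ] E) (invMetricSqrt p (b i) - invMetricSqrt q (b i)))
      (invMetricSqrt p (b i) - invMetricSqrt q (b i)) ≤ Fintype.card ι * (C * k ^ 2) := by
  rw [← nsmul_eq_mul]
  refine Finset.sum_le_card_nsmul _ _ _ fun i _ => ?_
  rw [smul_apply, ContinuousLinearMap.id_apply, real_inner_smul_left, real_inner_self_eq_norm_sq,
    ← sub_apply]
  have := ((invMetricSqrt p - invMetricSqrt q).le_of_opNorm_le hk (b i)).trans_eq
    (by rw [b.norm_eq_one, mul_one])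
  gcongr

theorem doubledTrace_smul_id_radialHessian_le {C k : ℝ} (hC : 0 ≤ C) {p q e : E} (he : ‖e‖ = 1)
    (hk : ‖invMetricSqrt p - invMetricSqrt q‖ ≤ k) {φ₁ φ₂ r : ℝ} (hφ₁ : 0 ≤ φ₁ / r)
    (hφ₂ : φ₂ ≤ 0) :
    doubledTrace (C • .id ℝ E) (radialHessian φ₁ φ₂ r e) b b p q ≤
      Fintype.card ι * (C * k ^ 2 + φ₁ / r) + φ₂ / (1 + ‖p‖ ^ 2) := by
  rw [doubledTrace, Finset.sum_add_distrib]
  linarith [sum_inner_smul_id_invMetricSqrt_sub_le b hC hk,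
    sum_inner_radialHessian_invMetricSqrt_le b he hφ₁ hφ₂ p]

end Shallow

/-- The terms that the concavity of a radial penalization `φ ‖x - c‖` has to absorb at distance `s`
from `c` and slope `g` when the term `‖x - y‖ ^ 2 / (2 * ε)`, with slope at most `L`, couples the
doubled variables in dimension `N`. Here `K` is a Lipschitz constant of `invMetricSqrt` and `Λ`
bounds the right-hand side together with its Lipschitz constant. -/
noncomputable def shallowRemainder (N : ℕ) (Λ K L ε g s : ℝ) : ℝ :=
  N * (ε⁻¹ * (K * g) ^ 2 + g / s + (Λ * (ε * L) * (1 + L) + Λ * g))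

theorem shallowRemainder_mul_le {N : ℕ} {Λ K L ε m r s : ℝ} (hΛ : 0 ≤ Λ) (hL : 0 ≤ L)
    (hε : 0 < ε) (hm : 1 ≤ m) (hr : 0 < r) (hrs : r ≤ s) :
    shallowRemainder N Λ K L ε (ε * m) s ≤ ε * m ^ 2 * shallowRemainder N Λ K L 1 1 r := by
  have hm₂ : m ≤ m ^ 2 := by nlinarith
  have hs : m / s ≤ m ^ 2 / r := by gcongr
  have hone : Λ * L * (1 + L) ≤ m ^ 2 * (Λ * L * (1 + L)) :=
    le_mul_of_one_le_left (by positivity) (hm.trans hm₂)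
  have hΛm : Λ * m ≤ Λ * m ^ 2 := by gcongr
  calc shallowRemainder N Λ K L ε (ε * m) s
      = N * ε * (K ^ 2 * m ^ 2 + m / s + (Λ * L * (1 + L) + Λ * m)) := by
        rw [shallowRemainder]
        field
    _ ≤ N * ε * (K ^ 2 * m ^ 2 + m ^ 2 / r + (m ^ 2 * (Λ * L * (1 + L)) + Λ * m ^ 2)) := by gcongr
    _ = ε * m ^ 2 * shallowRemainder N Λ K L 1 1 r := by
        rw [shallowRemainder]
        ring

section ShallowPair

variable {N : ℕ} {U : Set (EuclideanSpace ℝ (Fin N))} {H u v : EuclideanSpace ℝ (Fin N) → ℝ}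

theorem IsViscosityPair.neg_div_le_shallowRemainder (h : IsViscosityPair U H u v)
    {x y c : EuclideanSpace ℝ (Fin N)} (hx : x ∈ U) (hy : y ∈ U) (hxc : x ≠ c) {ε Λ L : ℝ}
    {K : NNReal} (hε : 0 < ε) (hH : |H x - H y| ≤ Λ * ‖x - y‖) (hHx : |H x| ≤ Λ)
    (hxy : ‖x - y‖ ≤ ε * L)
    (hK : LipschitzOnWith K (invMetricSqrt (E := EuclideanSpace ℝ (Fin N)))
      (closedBall 0 (L + 1)))
    {φ φ₁ : ℝ → ℝ} {φ₂ : ℝ} (hφ : ∀ᶠ r in 𝓝 ‖x - c‖, HasDerivAt φ (φ₁ r) r)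
    (hφ₁ : HasDerivAt φ₁ φ₂ ‖x - c‖) (hφ₂ : φ₂ ≤ 0) (hslope : φ₁ ‖x - c‖ ∈ Icc 0 1)
    (hmax : ∀ᶠ ξ in 𝓝 (x, y), v ξ.1 - u ξ.2 - ((2 * ε)⁻¹ * ‖ξ.1 - ξ.2‖ ^ 2 + φ ‖ξ.1 - c‖)
      ≤ v x - u y - ((2 * ε)⁻¹ * ‖x - y‖ ^ 2 + φ ‖x - c‖)) :
    -φ₂ / (1 + (L + 1) ^ 2) ≤ shallowRemainder N Λ K L ε (φ₁ ‖x - c‖) ‖x - c‖ := by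
  have hs : 0 < ‖x - c‖ := norm_pos_iff.2 (sub_ne_zero.2 hxc)
  have hquad := hasGradientAt_mul_norm_sub_sq (E := EuclideanSpace ℝ (Fin N)) (2 * ε)⁻¹ 0
  have hquad' := hasFDerivAt_smul_sub_const (2 * (2 * ε)⁻¹) 0 (x - y)
  have hε₂ : 2 * (2 * ε)⁻¹ = ε⁻¹ := by field
  simp only [sub_zero, hε₂] at hquad hquad'
  have htrace := h.sub_le_doubledTrace (isSymmetric_smul_id _) (isSymmetric_radialHessian _ _ _ _)
    hx hy (.of_forall hquad) hquad' (eventually_hasGradientAt_comp_norm_sub hxc hφ)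
    (hasFDerivAt_radialHessian hxc hφ₁) hmax (EuclideanSpace.basisFun (Fin N) ℝ)
    (EuclideanSpace.basisFun (Fin N) ℝ)
  set g := φ₁ ‖x - c‖
  set q := ε⁻¹ • (x - y)
  set k := (g / ‖x - c‖) • (x - c)
  have hk : ‖k‖ = g := by
    rw [norm_smul, Real.norm_of_nonneg (div_nonneg hslope.1 hs.le), div_mul_cancel₀ _ hs.ne']
  have hq : ‖q‖ ≤ L := by
    rwa [norm_smul, norm_inv, Real.norm_of_nonneg hε.le, inv_mul_le_iff₀ hε]
  have hqk : ‖q + k‖ ≤ L + 1 := (norm_add_le q k).trans (add_le_add hq (hk.trans_le hslope.2))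
  have hlip := hK.norm_sub_le (mem_closedBall_zero_iff.2 hqk)
    (mem_closedBall_zero_iff.2 (hq.trans (by linarith)))
  have hHε : |H x - H y| ≤ Λ * (ε * L) :=
    hH.trans (mul_le_mul_of_nonneg_left hxy ((abs_nonneg _).trans hHx))
  have hW : areaFactor q ≤ 1 + L := by linarith [areaFactor_le_one_add_norm q]
  have hcurv := neg_mul_le_mul_areaFactor_sub hHε hHx (p := q + k) hW N
  rw [add_sub_cancel_left, hk] at hlip hcurv
  have hbound := htrace.trans (doubledTrace_smul_id_radialHessian_le _ (inv_nonneg.2 hε.le)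
    (norm_smul_inv_norm (sub_ne_zero.2 hxc)) hlip (div_nonneg hslope.1 hs.le) hφ₂)
  have hconc : -φ₂ / (1 + (L + 1) ^ 2) ≤ -φ₂ / (1 + ‖q + k‖ ^ 2) := by
    have := neg_nonneg.2 hφ₂
    gcongr
  rw [neg_div (1 + ‖q + k‖ ^ 2)] at hconc
  rw [Fintype.card_fin] at hbound
  rw [shallowRemainder, mul_add]
  linarith

end ShallowPair

section HopfBarrier

/-- The radial barrier of the Hopf lemma, as a function of the signed distance `t` to the sphere:
it is negative on the sphere, and for small `τ` already large at a small distance outside. -/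
noncomputable def hopfBarrier (a τ t : ℝ) : ℝ := Real.log (1 + t / τ) / a - 1 / 2

variable {a τ t L r ε B : ℝ}

theorem hopfBarrier_zero (a τ : ℝ) : hopfBarrier a τ 0 = -(1 / 2) := by simp [hopfBarrier]

theorem hasDerivAt_hopfBarrier (ha : 0 < a) (hτ : 0 < τ) (ht : 0 < t + τ) :
    HasDerivAt (hopfBarrier a τ) (a * (t + τ))⁻¹ t :=
  (hasDerivAt_log_one_add_div_div ha hτ ht).sub_const _

theorem neg_three_halves_le_hopfBarrier (ha : 1 ≤ a) (hτ : 0 < τ) (ht : -(τ / 2) ≤ t) :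
    -(3 / 2) ≤ hopfBarrier a τ t := by
  have hhalf : 2⁻¹ ≤ 1 + t / τ := by
    have : -(1 / 2) ≤ t / τ := by rw [le_div_iff₀ hτ]; linarith
    linarith
  have hlog := Real.log_le_log (by norm_num) hhalf
  rw [Real.log_inv] at hlog
  have hdiv : -1 ≤ Real.log (1 + t / τ) / a := by
    rw [le_div_iff₀ (by linarith)]
    linarith [Real.log_two_lt_d9]
  rw [hopfBarrier]
  linarith

theorem lt_hopfBarrier (ha : 0 < a) (hτ : 0 < τ) (ht : 0 < t)
    (h : τ ≤ t * Real.exp (-(a * (B + 1 / 2)))) : B < hopfBarrier a τ t := by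
  rw [hopfBarrier]
  linarith [lt_log_one_add_div_div ha hτ ht h]

theorem lt_mul_of_inv_mul_sq_add_lt (hε : 0 < ε) (hL : 0 ≤ L) (hr : 0 ≤ r) (hB : -(3 / 2) ≤ B)
    (h : (2 * ε)⁻¹ * r ^ 2 + ε * B < L * r) : r < ε * (2 * L + 2) := by
  by_contra! hcon
  have hsq : r ^ 2 + 2 * ε ^ 2 * B < 2 * ε * L * r := by
    calc r ^ 2 + 2 * ε ^ 2 * B = 2 * ε * ((2 * ε)⁻¹ * r ^ 2 + ε * B) := by field
      _ < 2 * ε * (L * r) := by gcongr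
      _ = 2 * ε * L * r := by ring
  have hrr := mul_le_mul_of_nonneg_right hcon hr
  have hεr := mul_le_mul_of_nonneg_left hcon hε.le
  have hεB := mul_le_mul_of_nonneg_left hB (sq_nonneg ε)
  nlinarith [mul_nonneg (sq_nonneg ε) hL, sq_pos_of_pos hε]

theorem mul_le_inv_mul_sq_add (hε : 0 < ε) (hB : L ^ 2 / 2 ≤ B) :
    L * r ≤ (2 * ε)⁻¹ * r ^ 2 + ε * B := by
  calc L * r ≤ L * r + (2 * ε)⁻¹ * (r - ε * L) ^ 2 := le_add_of_nonneg_right (by positivity)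
    _ = (2 * ε)⁻¹ * r ^ 2 + ε * (L ^ 2 / 2) := by field
    _ ≤ (2 * ε)⁻¹ * r ^ 2 + ε * B := by gcongr

end HopfBarrier

section HopfSet

variable {E : Type*} [NormedAddCommGroup E] {x c : E} {ρ κ : ℝ}

/-- The set over which the doubled function is maximized in the Hopf lemma at a point `x` of a
sphere around `c`: the first variable stays outside the ball of radius `κ` around `c`. -/
def hopfSet (x c : E) (ρ κ : ℝ) : Set (E × E) :=
  {ξ | ξ.1 ∈ closedBall x ρ ∧ κ ≤ ‖ξ.1 - c‖ ∧ ξ.2 ∈ closedBall x (2 * ρ)}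

theorem hopfSet_subset (hρ : 0 ≤ ρ) :
    hopfSet x c ρ κ ⊆ closedBall x (2 * ρ) ×ˢ closedBall x (2 * ρ) := fun _ hξ =>
  ⟨closedBall_subset_closedBall (by linarith) hξ.1, hξ.2.2⟩

theorem isCompact_hopfSet [ProperSpace E] (hρ : 0 ≤ ρ) : IsCompact (hopfSet x c ρ κ) := by
  refine ((isCompact_closedBall x _).prod (isCompact_closedBall x _)).of_isClosed_subset
    (.inter (isClosed_closedBall.preimage continuous_fst) (.inter ?_
      (isClosed_closedBall.preimage continuous_snd))) (hopfSet_subset hρ)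
  exact isClosed_le continuous_const (continuous_fst.sub continuous_const).norm

theorem hopfSet_mem_nhds {z y : E} (hz : ‖z - x‖ < ρ) (hzc : κ < ‖z - c‖) (hy : ‖y - x‖ < 2 * ρ) :
    hopfSet x c ρ κ ∈ 𝓝 (z, y) := by
  have hz' : ∀ᶠ ξ : E × E in 𝓝 (z, y), ‖ξ.1 - x‖ < ρ :=
    ContinuousAt.eventually_lt (by fun_prop) continuousAt_const hz
  have hzc' : ∀ᶠ ξ : E × E in 𝓝 (z, y), κ < ‖ξ.1 - c‖ :=
    continuousAt_const.eventually_lt (by fun_prop) hzc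
  have hy' : ∀ᶠ ξ : E × E in 𝓝 (z, y), ‖ξ.2 - x‖ < 2 * ρ :=
    ContinuousAt.eventually_lt (by fun_prop) continuousAt_const hy
  filter_upwards [hz', hzc', hy'] with ξ h₁ h₂ h₃
  exact ⟨mem_closedBall_iff_norm.2 h₁.le, h₂.le, mem_closedBall_iff_norm.2 h₃.le⟩

/-- The penalization of the doubled function in the Hopf lemma: the quadratic term keeps the two
variables together, the barrier keeps the first one near the sphere of radius `R` around `c`. -/
noncomputable def hopfPenalty (c : E) (R a τ ε : ℝ) (ξ : E × E) : ℝ :=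
  (2 * ε)⁻¹ * ‖ξ.1 - ξ.2‖ ^ 2 + ε * hopfBarrier a τ (‖ξ.1 - c‖ - R)

variable {R a τ ε L t δ d : ℝ}

theorem continuousOn_hopfPenalty (ha : 0 < a) (hτ : 0 < τ) :
    ContinuousOn (hopfPenalty c R a τ ε) (hopfSet x c ρ (R - τ / 2)) := by
  have hbarrier : ContinuousOn (hopfBarrier a τ) (Ici (-(τ / 2))) := fun t ht =>
    (hasDerivAt_hopfBarrier ha hτ (by linarith [mem_Ici.1 ht])).continuousAt.continuousWithinAt
  have hcomp := hbarrier.comp (f := fun ξ : E × E => ‖ξ.1 - c‖ - R) (by fun_prop)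
    fun ξ (hξ : ξ ∈ hopfSet x c ρ (R - τ / 2)) => mem_Ici.2 (by linarith [hξ.2.1])
  exact ContinuousOn.add (by fun_prop) (continuousOn_const.mul hcomp)

theorem hopfPenalty_self_self (a τ ε : ℝ) : hopfPenalty c ‖x - c‖ a τ ε (x, x) = -(ε / 2) := by
  simp [hopfPenalty, hopfBarrier_zero, div_eq_mul_inv]

theorem norm_sub_lt_and_hopfSet_mem_nhds {z y : E} (hmem : (z, y) ∈ hopfSet x c ρ (R - τ / 2))
    (ha : 1 ≤ a) (hτ : 0 < τ) (hε : 0 < ε) (hL : 0 ≤ L) (hd : d ≤ L * ‖z - y‖)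
    (hgap : ‖z - c‖ = R - τ / 2 ∨ ‖z - x‖ = ρ ∧ ‖z - c‖ ≤ R + t → ‖z - y‖ < δ → d < -δ)
    (ht : 0 < t) (hτt : τ ≤ t * Real.exp (-(a * (L ^ 2 / 2 + 1 / 2)))) (hεδ : ε * 2 ≤ δ)
    (hεLδ : ε * (2 * L + 2) ≤ δ) (hεLρ : ε * (2 * L + 2) ≤ ρ)
    (hpos : hopfPenalty c R a τ ε (z, y) < d) :
    ‖z - y‖ < ε * (2 * L + 2) ∧ hopfSet x c ρ (R - τ / 2) ∈ 𝓝 (z, y) := by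
  obtain ⟨hzx, hzc, -⟩ := hmem
  rw [mem_closedBall_iff_norm] at hzx
  simp only at hzc
  rw [hopfPenalty] at hpos
  have hbarrier := neg_three_halves_le_hopfBarrier (t := ‖z - c‖ - R) ha hτ (by linarith)
  have hzy : ‖z - y‖ < ε * (2 * L + 2) :=
    lt_mul_of_inv_mul_sq_add_lt hε hL (norm_nonneg _) hbarrier (hpos.trans_le hd)
  have hinterior : ¬(‖z - c‖ = R - τ / 2 ∨ ‖z - x‖ = ρ ∧ ‖z - c‖ ≤ R + t) := fun hΓ => by
    have hquad : 0 ≤ (2 * ε)⁻¹ * ‖z - y‖ ^ 2 := by positivity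
    linarith [hgap hΓ (hzy.trans_le hεLδ), mul_le_mul_of_nonneg_left hbarrier hε.le]
  obtain ⟨hzc', hzx'⟩ := not_or.1 hinterior
  have hnear : ‖z - c‖ ≤ R + t := by
    by_contra! hfar
    have hlarge : L ^ 2 / 2 < hopfBarrier a τ (‖z - c‖ - R) :=
      lt_hopfBarrier (by linarith) hτ (by linarith) (hτt.trans (by gcongr; linarith))
    linarith [mul_le_inv_mul_sq_add (r := ‖z - y‖) hε hlarge.le]
  have hzρ : ‖z - x‖ < ρ := lt_of_le_of_ne hzx fun hρ => hzx' ⟨hρ, hnear⟩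
  refine ⟨hzy, hopfSet_mem_nhds hzρ (lt_of_le_of_ne hzc (Ne.symm hzc')) ?_⟩
  linarith [norm_sub_le_norm_sub_add_norm_sub y z x, norm_sub_rev y z]

end HopfSet

section Gap

variable {N : ℕ} {U : Set (EuclideanSpace ℝ (Fin N))} {H u v : EuclideanSpace ℝ (Fin N) → ℝ}

theorem IsViscosityPair.isCompact_inter_setOf_le (h : IsViscosityPair U H u v)
    {K : Set (EuclideanSpace ℝ (Fin N))} (hK : IsCompact K) (hKU : K ⊆ U) :
    IsCompact (K ∩ {z | u z ≤ v z}) := by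
  have hsub := (h.upperSemicontinuousOn.add h.lowerSemicontinuousOn.neg).mono hKU
  convert hsub.isCompact_inter_preimage_Ici hK 0 using 2
  ext z
  simp [← sub_eq_add_neg]

theorem IsViscosityPair.exists_pos_forall_sub_lt_neg (h : IsViscosityPair U H u v)
    {K : Set (EuclideanSpace ℝ (Fin N))} (hK : IsCompact K) (hKU : K ⊆ U)
    (hlt : ∀ z ∈ K, v z < u z) :
    ∃ δ > 0, ∀ z ∈ K, ∀ y, ‖z - y‖ < δ → v z - u y < -δ := by
  have hnear : ∀ᶠ ω : EuclideanSpace ℝ (Fin N) × ℝ in 𝓝 (0, 0),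
      ∀ z ∈ K, v z - u (z - ω.1) < -ω.2 := by
    refine hK.eventually_forall_of_forall_eventually fun z hz => ?_
    obtain ⟨s, hvs, hsu⟩ := exists_between (hlt z hz)
    obtain ⟨s', hss', hsu'⟩ := exists_between hsu
    have hU := h.isOpen.nhdsWithin_eq (hKU hz)
    have hv : ∀ᶠ y in 𝓝 z, v y < s := hU ▸ h.upperSemicontinuousOn z (hKU hz) s hvs
    have hu : ∀ᶠ y in 𝓝 z, s' < u y := hU ▸ h.lowerSemicontinuousOn z (hKU hz) s' hsu'
    have hshift : Tendsto (fun ζ : (EuclideanSpace ℝ (Fin N) × ℝ) × EuclideanSpace ℝ (Fin N) =>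
        ζ.2 - ζ.1.1) (𝓝 ((0, 0), z)) (𝓝 z) :=
      Continuous.tendsto' (by fun_prop) _ _ (sub_zero z)
    have hgap : ∀ᶠ ζ : (EuclideanSpace ℝ (Fin N) × ℝ) × EuclideanSpace ℝ (Fin N) in
        𝓝 ((0, 0), z), ζ.1.2 < s' - s :=
      ContinuousAt.eventually_lt (by fun_prop) continuousAt_const (sub_pos.2 hss')
    filter_upwards [continuousAt_snd.eventually hv, hshift.eventually hu, hgap] with ζ h₁ h₂ h₃
    linarith
  obtain ⟨η, hη, hball⟩ := Metric.eventually_nhds_iff.1 hnear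
  refine ⟨η / 2, by positivity, fun z hz y hzy => ?_⟩
  have hdist : dist (z - y, η / 2) ((0, 0) : EuclideanSpace ℝ (Fin N) × ℝ) < η := by
    rw [Prod.dist_eq, dist_zero_right, dist_zero_right, Real.norm_of_nonneg (by positivity)]
    exact max_lt (by linarith) (by linarith)
  simpa using hball hdist z hz

theorem IsViscosityPair.exists_pos_forall_lt (h : IsViscosityPair U H u v)
    {K : Set (EuclideanSpace ℝ (Fin N))} (hK : IsCompact K) (hKU : K ⊆ U)
    {c : EuclideanSpace ℝ (Fin N)} {R : ℝ} (hlt : ∀ z ∈ K, ‖z - c‖ ≤ R → v z < u z) :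
    ∃ t > 0, ∀ z ∈ K, ‖z - c‖ ≤ R + t → v z < u z := by
  obtain ⟨R', hR', hle⟩ := (h.isCompact_inter_setOf_le hK hKU).exists_forall_le'
    (f := fun z => ‖z - c‖) (by fun_prop) (a := R) fun z hz => by
      by_contra! hzc
      exact (hlt z hz.1 hzc).not_ge hz.2
  refine ⟨(R' - R) / 2, by linarith, fun z hz hzc => ?_⟩
  by_contra! hzv
  linarith [hle z ⟨hz, hzv⟩]

end Gap

section HopfLemma

variable {N : ℕ} {U : Set (EuclideanSpace ℝ (Fin N))} {H u v : EuclideanSpace ℝ (Fin N) → ℝ}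
  {x c : EuclideanSpace ℝ (Fin N)} {ρ Λ L a : ℝ}

theorem IsViscosityPair.exists_boundary_gap (h : IsViscosityPair U H u v) (hρ : 0 < ρ)
    (hball : closedBall x ρ ⊆ U)
    (hlt : ∀ z ∈ closedBall c ‖x - c‖, z ≠ x → v z < u z) :
    ∃ t > 0, ∀ τ > 0, ∃ δ > 0, ∀ z ∈ closedBall x ρ,
      (‖z - c‖ = ‖x - c‖ - τ / 2 ∨ ‖z - x‖ = ρ ∧ ‖z - c‖ ≤ ‖x - c‖ + t) →
        ∀ y, ‖z - y‖ < δ → v z - u y < -δ := by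
  obtain ⟨t, ht, hsphere⟩ := h.exists_pos_forall_lt (R := ‖x - c‖) (isCompact_sphere x ρ)
    (sphere_subset_closedBall.trans hball) fun z hz hzc =>
      hlt z (mem_closedBall_iff_norm.2 hzc) (ne_of_mem_sphere hz hρ.ne')
  refine ⟨t, ht, fun τ hτ => ?_⟩
  have hinner : IsClosed {z | ‖z - c‖ = ‖x - c‖ - τ / 2} := isClosed_eq (by fun_prop) (by fun_prop)
  have houter : IsClosed ({z | ‖z - x‖ = ρ} ∩ {z | ‖z - c‖ ≤ ‖x - c‖ + t}) :=
    IsClosed.inter (isClosed_eq (by fun_prop) (by fun_prop))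
      (isClosed_le (by fun_prop) (by fun_prop))
  have hΓ : IsCompact (closedBall x ρ ∩ ({z | ‖z - c‖ = ‖x - c‖ - τ / 2} ∪
      ({z | ‖z - x‖ = ρ} ∩ {z | ‖z - c‖ ≤ ‖x - c‖ + t}))) :=
    (isCompact_closedBall x ρ).inter_right (hinner.union houter)
  obtain ⟨δ, hδ, hgap⟩ := h.exists_pos_forall_sub_lt_neg hΓ (inter_subset_left.trans hball) <| by
    rintro z ⟨-, hzc | ⟨hzx, hzc⟩⟩
    · rw [mem_ofPred_eq] at hzc
      refine hlt z (mem_closedBall_iff_norm.2 (by linarith)) ?_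
      rintro rfl
      linarith
    · exact hsphere z (mem_sphere_iff_norm.2 hzx) hzc
  exact ⟨δ, hδ, fun z hz hzΓ => hgap z ⟨hz, hzΓ⟩⟩

theorem IsViscosityPair.eventually_exists_isLocalMax_hopfPenalty (h : IsViscosityPair U H u v)
    (hρ : 0 < ρ) (hball : closedBall x (2 * ρ) ⊆ U) (ha : 1 ≤ a) (hL : 0 ≤ L)
    (hlip : ∀ z ∈ closedBall x ρ, ∀ y ∈ closedBall x (2 * ρ), v z - u y ≤ L * ‖z - y‖)
    (hlt : ∀ z ∈ closedBall c ‖x - c‖, z ≠ x → v z < u z) (hx : u x ≤ v x) :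
    ∀ᶠ τ in 𝓝[>] 0, ∀ᶠ ε in 𝓝[>] 0, ∃ z y, (z, y) ∈ hopfSet x c ρ (‖x - c‖ - τ / 2) ∧
      ‖z - y‖ < ε * (2 * L + 2) ∧
      IsLocalMax (fun ξ => v ξ.1 - u ξ.2 - hopfPenalty c ‖x - c‖ a τ ε ξ) (z, y) := by
  obtain ⟨t, ht, hgap⟩ := h.exists_boundary_gap hρ
    ((closedBall_subset_closedBall (by linarith)).trans hball) hlt
  filter_upwards [Ioc_mem_nhdsGT (show 0 < t * Real.exp (-(a * (L ^ 2 / 2 + 1 / 2))) by positivity)]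
    with τ ⟨hτ, hτt⟩
  obtain ⟨δ, hδ, hgap⟩ := hgap τ hτ
  have hsmall {s b : ℝ} (hb : 0 < b) (hs : 0 < s) : ∀ᶠ ε : ℝ in 𝓝[>] 0, ε * b ≤ s := by
    filter_upwards [Ioc_mem_nhdsGT (div_pos hs hb)] with ε hε using (le_div_iff₀ hb).1 hε.2
  filter_upwards [self_mem_nhdsWithin, hsmall two_pos hδ, hsmall (by linarith : 0 < 2 * L + 2) hδ,
    hsmall (by linarith : 0 < 2 * L + 2) hρ] with ε hε hεδ hεLδ hεLρ
  rw [mem_Ioi] at hε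
  have hxmem : (x, x) ∈ hopfSet x c ρ (‖x - c‖ - τ / 2) :=
    ⟨mem_closedBall_self hρ.le, by linarith, mem_closedBall_self (by positivity)⟩
  obtain ⟨⟨z, y⟩, hmem, hmax⟩ := h.exists_isMaxOn (isCompact_hopfSet hρ.le)
    ((hopfSet_subset hρ.le).trans (prod_mono hball hball)) ⟨_, hxmem⟩
    (continuousOn_hopfPenalty (R := ‖x - c‖) (ε := ε) (zero_lt_one.trans_le ha) hτ)
  have hpos := hmax hxmem
  simp only [mem_ofPred_eq, hopfPenalty_self_self] at hpos
  obtain ⟨hzy, hnhds⟩ := norm_sub_lt_and_hopfSet_mem_nhds hmem ha hτ hε hL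
    (hlip z hmem.1 y hmem.2.2) (fun hΓ => hgap z hmem.1 hΓ y) ht hτt hεδ hεLδ hεLρ (by linarith)
  exact ⟨z, y, hmem, hzy, hmax.isLocalMax hnhds⟩

theorem IsViscosityPair.not_isLocalMax_hopfPenalty (h : IsViscosityPair U H u v)
    {z y : EuclideanSpace ℝ (Fin N)} (hz : z ∈ U) (hy : y ∈ U) {ε τ r R : ℝ} {K : NNReal}
    (hΛ : 0 ≤ Λ) (hL : 0 ≤ L) (hε : 0 < ε) (hτ : 0 < τ) (hr : 0 < r)
    (hH : |H z - H y| ≤ Λ * ‖z - y‖) (hHz : |H z| ≤ Λ) (hzy : ‖z - y‖ ≤ ε * L)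
    (hK : LipschitzOnWith K (invMetricSqrt (E := EuclideanSpace ℝ (Fin N)))
      (closedBall 0 (L + 1)))
    (ha : shallowRemainder N Λ K L 1 1 r < a / (1 + (L + 1) ^ 2)) (hrz : r ≤ ‖z - c‖)
    (hRz : 0 < ‖z - c‖ - R + τ) (hslope : a * (‖z - c‖ - R + τ) ∈ Icc ε 1) :
    ¬IsLocalMax (fun ξ => v ξ.1 - u ξ.2 - hopfPenalty c R a τ ε ξ) (z, y) := by
  intro hmax
  have hσ : 0 < a * (‖z - c‖ - R + τ) := hε.trans_le hslope.1
  have ha₀ : 0 < a := pos_of_mul_pos_left hσ hRz.le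
  set m := (a * (‖z - c‖ - R + τ))⁻¹ with hm
  have hderiv : ∀ᶠ s in 𝓝 ‖z - c‖, HasDerivAt (fun s => ε * hopfBarrier a τ (s - R))
      (ε * (a * (s - R + τ))⁻¹) s := by
    have hnear : ∀ᶠ s in 𝓝 ‖z - c‖, 0 < s - R + τ :=
      continuousAt_const.eventually_lt (by fun_prop) hRz
    filter_upwards [hnear] with s hs
    exact ((hasDerivAt_hopfBarrier ha₀ hτ hs).comp_sub_const s R).const_mul ε
  have hderiv₂ : HasDerivAt (fun s => ε * (a * (s - R + τ))⁻¹) (ε * -(a * m ^ 2)) ‖z - c‖ :=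
    ((hasDerivAt_inv_mul_add ha₀ hRz).comp_sub_const _ R).const_mul ε
  have hεm : ε * m ∈ Icc 0 1 :=
    ⟨by positivity, by rw [hm, ← div_eq_mul_inv]; exact (div_le_one hσ).2 hslope.1⟩
  have hzc : z ≠ c := sub_ne_zero.1 (norm_pos_iff.1 (hr.trans_le hrz))
  have hle := (h.neg_div_le_shallowRemainder hz hy hzc hε hH hHz hzy hK hderiv
    hderiv₂ (by rw [mul_neg]; exact neg_nonpos.2 (by positivity)) hεm hmax).trans
    (shallowRemainder_mul_le hΛ hL hε ((one_le_inv₀ hσ).2 hslope.2) hr hrz)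
  have hpos : 0 < ε * m ^ 2 := by positivity
  have hlt := mul_lt_mul_of_pos_left ha hpos
  have heq : ε * m ^ 2 * (a / (1 + (L + 1) ^ 2)) = -(ε * -(a * m ^ 2)) / (1 + (L + 1) ^ 2) := by
    ring
  linarith

theorem IsViscosityPair.lt_of_shallowRemainder_lt (h : IsViscosityPair U H u v)
    {S : ℝ} {K : NNReal} (hρ : 0 < ρ) (hL : 0 ≤ L) (hΛ : 0 ≤ Λ)
    (hball : closedBall x (2 * ρ) ⊆ U) (hbd : PairBounds H u v (closedBall x (2 * ρ)) Λ S)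
    (hlip : ∀ z ∈ closedBall x ρ, ∀ y ∈ closedBall x (2 * ρ), v z - u y ≤ L * ‖z - y‖)
    (hK : LipschitzOnWith K (invMetricSqrt (E := EuclideanSpace ℝ (Fin N)))
      (closedBall 0 (2 * L + 2 + 1)))
    (ha : 1 ≤ a) (haK : shallowRemainder N Λ K (2 * L + 2) 1 1 (‖x - c‖ / 2) <
      a / (1 + (2 * L + 2 + 1) ^ 2)) (hρa : ρ ≤ (2 * a)⁻¹) (hxc : x ≠ c)
    (hlt : ∀ z ∈ closedBall c ‖x - c‖, z ≠ x → v z < u z) : v x < u x := by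
  by_contra! hx
  have hR : 0 < ‖x - c‖ := norm_pos_iff.2 (sub_ne_zero.2 hxc)
  have hmaxτ := h.eventually_exists_isLocalMax_hopfPenalty hρ hball ha hL hlip hlt hx
  obtain ⟨τ, hmaxε, hτ, hτle⟩ :=
    (hmaxτ.and (Ioc_mem_nhdsGT (lt_min hR (by positivity : 0 < (2 * a)⁻¹)))).exists
  obtain ⟨hτR, hτa⟩ := le_min_iff.1 hτle
  obtain ⟨ε, ⟨z, y, ⟨hzx, hzc, hy⟩, hzy, hmax⟩, hε, hεa⟩ :=
    (hmaxε.and (Ioc_mem_nhdsGT (by positivity : 0 < a * (τ / 2)))).exists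
  have hz : z ∈ closedBall x (2 * ρ) := closedBall_subset_closedBall (by linarith) hzx
  simp only [mem_closedBall_iff_norm] at hzx hzc
  refine h.not_isLocalMax_hopfPenalty (hball hz) (hball hy) hΛ (by positivity) hε hτ
    (half_pos hR) (hbd.abs_sub_le z hz y hy) (hbd.abs_le z hz) hzy.le hK haK (by linarith)
    (by linarith) ⟨hεa.trans ?_, ?_⟩ hmax
  · gcongr
    linarith
  · have htri := norm_sub_le_norm_sub_add_norm_sub z x c
    calc a * (‖z - c‖ - ‖x - c‖ + τ) ≤ a * ((2 * a)⁻¹ + (2 * a)⁻¹) := by gcongr; linarith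
      _ = 1 := by field

theorem IsViscosityPair.lt_of_forall_closedBall_lt (h : IsViscosityPair U H u v)
    {S : ℝ} (hρ : 0 < ρ) (hΛ : 0 ≤ Λ) (hS : 0 < S) (hball : closedBall x ρ ⊆ U)
    (hbd : PairBounds H u v (closedBall x ρ) Λ S) (hxc : x ≠ c)
    (hlt : ∀ z ∈ closedBall c ‖x - c‖, z ≠ x → v z < u z) : v x < u x := by
  obtain ⟨L, r, hL, hr, hlip⟩ := h.exists_sub_le_mul (half_pos hρ) hΛ hS
  obtain ⟨K, hK⟩ := exists_lipschitzOnWith_invMetricSqrt (E := EuclideanSpace ℝ (Fin N))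
    (2 * L + 2 + 1)
  obtain ⟨a, ha, haK⟩ : ∃ a : ℝ, 1 ≤ a ∧
      shallowRemainder N Λ K (2 * L + 2) 1 1 (‖x - c‖ / 2) < a / (1 + (2 * L + 2 + 1) ^ 2) :=
    ((eventually_ge_atTop 1).and
      ((tendsto_id.atTop_div_const (by positivity)).eventually_gt_atTop _)).exists
  set σ := min (ρ / 2) (min (r / 3) (2 * a)⁻¹)
  have hσρ : σ ≤ ρ / 2 := min_le_left _ _
  have hσr : σ ≤ r / 3 := (min_le_right _ _).trans (min_le_left _ _)
  have hsub : closedBall x (2 * σ) ⊆ closedBall x ρ := closedBall_subset_closedBall (by linarith)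
  refine h.lt_of_shallowRemainder_lt (ρ := σ) (by positivity) hL.le hΛ (hsub.trans hball)
    (hbd.mono hsub) (fun z hz y hy => ?_) hK ha haK ((min_le_right _ _).trans (min_le_right _ _))
    hxc hlt
  rw [mem_closedBall_iff_norm] at hz hy
  have hsub' : closedBall z (ρ / 2) ⊆ closedBall x ρ :=
    closedBall_subset_closedBall' (by rw [dist_eq_norm]; linarith)
  refine hlip z (hsub'.trans hball) (hbd.mono hsub') y ?_
  linarith [norm_sub_le_norm_sub_add_norm_sub z x y, norm_sub_rev x y]

end HopfLemma

/-! ### The strong comparison principle -/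

theorem dist_lt_of_mem_closedBall_midpoint {E : Type*} [NormedAddCommGroup E] [NormedSpace ℝ E]
    [StrictConvexSpace ℝ E] {x y z : E} (hz : z ∈ closedBall (midpoint ℝ x y) (dist x y / 2))
    (hzx : z ≠ x) : dist z y < dist x y := by
  have hmid : dist (midpoint ℝ x y) y = dist x y / 2 := by
    rw [dist_midpoint_right, Real.norm_ofNat, inv_mul_eq_div]
  rw [mem_closedBall] at hz
  have htri := dist_triangle z (midpoint ℝ x y) y
  refine lt_of_le_of_ne (by linarith) fun hzy => hzx ?_
  have heq : midpoint ℝ x y = midpoint ℝ z y :=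
    eq_midpoint_of_dist_eq_half (by linarith) (by linarith)
  have hsub : z - x = y - y := (midpoint_eq_midpoint_iff_vsub_eq_vsub ℝ).1 heq.symm
  exact sub_eq_zero.1 (hsub.trans (sub_self y))

theorem LocLipschitzOn.continuousOn {N : ℕ} {s : Set (EuclideanSpace ℝ (Fin N))}
    {f : EuclideanSpace ℝ (Fin N) → ℝ} (hf : LocLipschitzOn s f) : ContinuousOn f s := by
  intro x hx
  obtain ⟨K, t, ht, hK⟩ := hf x hx
  exact (hK.continuousOn x (mem_of_mem_nhdsWithin hx ht)).mono_of_mem_nhdsWithin ht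

section StrongComparison

variable {N : ℕ} {U : Set (EuclideanSpace ℝ (Fin N))} {H u v : EuclideanSpace ℝ (Fin N) → ℝ}
  {x : EuclideanSpace ℝ (Fin N)}

theorem IsViscosityPair.exists_pairBounds (h : IsViscosityPair U H u v)
    (hH : LocLipschitzOn U H) (huv : ∀ x ∈ U, v x ≤ u x) (hx : x ∈ U) :
    ∃ ρ > 0, ∃ Λ ≥ 0, closedBall x ρ ⊆ U ∧ PairBounds H u v (closedBall x ρ) Λ 1 := by
  obtain ⟨K, t, ht, hK⟩ := hH x hx
  have hv := h.upperSemicontinuousOn x hx (v x + 1 / 2) (by linarith)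
  have hu := h.lowerSemicontinuousOn x hx (u x - 1 / 2) (by linarith)
  have hHx := (h.continuousOn x hx).abs.eventually_lt_const (lt_add_one |H x|)
  rw [h.isOpen.nhdsWithin_eq hx] at ht hv hu hHx
  have htU : ∀ᶠ y in 𝓝 x, y ∈ t ∧ y ∈ U := inter_mem ht (h.isOpen.mem_nhds hx)
  obtain ⟨ρ, hρ, hball⟩ := nhds_basis_closedBall.eventually_iff.1
    ((hv.and hu).and (hHx.and htU))
  refine ⟨ρ, hρ, max K (|H x| + 1), le_max_of_le_left K.2, fun y hy => (hball hy).2.2.2,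
    fun y hy z hz => ?_, fun y hy => ?_, fun y hy z hz => ?_, fun y hy => ?_⟩
  · refine (hK.norm_sub_le (hball hy).2.2.1 (hball hz).2.2.1).trans ?_
    gcongr
    exact le_max_left _ _
  · exact (hball hy).2.1.le.trans (le_max_right _ _)
  · linarith [(hball hy).1.1, (hball hz).1.2, huv x hx]
  · exact huv y (hball hy).2.2.2

theorem IsViscosityPair.closedBall_half_subset (h : IsViscosityPair U H u v)
    (hH : LocLipschitzOn U H) (huv : ∀ x ∈ U, v x ≤ u x) {r : ℝ} (hr : 0 ≤ r)
    (hball : closedBall x r ⊆ U) (hx : u x ≤ v x) : closedBall x (r / 2) ⊆ {y | u y ≤ v y} := by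
  intro y hy
  rw [mem_closedBall, dist_comm] at hy
  obtain ⟨p, ⟨hpx, hp⟩, hmin⟩ := (h.isCompact_inter_setOf_le (isCompact_closedBall x r)
    hball).exists_isMinOn ⟨x, mem_closedBall_self hr, hx⟩ (f := fun z => dist z y) (by fun_prop)
  by_contra hyv
  have hpy : p ≠ y := by
    rintro rfl
    exact hyv hp
  have hmid : ‖p - midpoint ℝ p y‖ = dist p y / 2 := by
    rw [← dist_eq_norm, dist_left_midpoint, Real.norm_ofNat, inv_mul_eq_div]
  obtain ⟨ρ, hρ, Λ, hΛ, hρU, hbd⟩ := h.exists_pairBounds hH huv (hball hpx)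
  refine (h.lt_of_forall_closedBall_lt hρ hΛ one_pos hρU hbd (c := midpoint ℝ p y) ?_
    fun z hz hzp => ?_).not_ge hp
  · rwa [ne_comm, Ne, midpoint_eq_left_iff]
  · by_contra! hzv
    have hzy := dist_lt_of_mem_closedBall_midpoint (hmid ▸ hz) hzp
    have hpy_le : dist p y ≤ dist x y := hmin ⟨mem_closedBall_self hr, hx⟩
    have hzx : z ∈ closedBall x r :=
      mem_closedBall.2 (by linarith [dist_triangle z y x, dist_comm x y])
    exact hzy.not_ge (hmin ⟨hzx, hzv⟩)

theorem IsViscosityPair.le_of_isPreconnected (h : IsViscosityPair U H u v)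
    (hH : LocLipschitzOn U H) (hU : IsPreconnected U) (huv : ∀ x ∈ U, v x ≤ u x) (hx : x ∈ U)
    (htouch : u x ≤ v x) : ∀ y ∈ U, u y ≤ v y := by
  have hopen : IsOpen (U ∩ {y | u y ≤ v y}) := Metric.isOpen_iff.2 fun y hy => by
    obtain ⟨r, hr, hball⟩ := nhds_basis_closedBall.mem_iff.1 (h.isOpen.mem_nhds hy.1)
    exact ⟨r / 2, half_pos hr, ball_subset_closedBall.trans <| subset_inter
      ((closedBall_subset_closedBall (by linarith)).trans hball)
      (h.closedBall_half_subset hH huv hr.le hball hy.2)⟩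
  suffices U ⊆ U ∩ {y | u y ≤ v y} from fun y hy => (this hy).2
  refine hU.subset_of_closure_inter_subset hopen ⟨x, hx, hx, htouch⟩ ?_
  rintro y ⟨hy, hyU⟩
  obtain ⟨r, hr, hball⟩ := nhds_basis_closedBall.mem_iff.1 (h.isOpen.mem_nhds hyU)
  obtain ⟨z, ⟨-, hz⟩, hyz⟩ := Metric.mem_closure_iff.1 hy (r / 3) (by positivity)
  have hsub : closedBall z (2 * r / 3) ⊆ U :=
    (closedBall_subset_closedBall' (by linarith [dist_comm y z])).trans hball
  exact ⟨hyU, h.closedBall_half_subset hH huv (by positivity) hsub hz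
    (mem_closedBall.2 (by linarith))⟩

end StrongComparison

section Convolution

variable {E : Type*} [NormedAddCommGroup E] {K : Set E} {u v : E → ℝ} {ε : ℝ} {x : E}

theorem iInf_add_norm_sub_sq_div_le (hK : IsCompact K) (hu : LowerSemicontinuousOn u K)
    (hε : 0 ≤ ε) (hx : x ∈ K) : ⨅ y : K, (u y + ‖x - (y : E)‖ ^ 2 / (2 * ε)) ≤ u x := by
  obtain ⟨C, hC⟩ := hu.bddBelow_of_isCompact hK
  refine (ciInf_le ⟨C, ?_⟩ ⟨x, hx⟩).trans_eq (by simp)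
  rintro _ ⟨y, rfl⟩
  exact (hC (mem_image_of_mem u y.2)).trans (le_add_of_nonneg_right (by positivity))

theorem le_iSup_sub_norm_sub_sq_div (hK : IsCompact K) (hv : UpperSemicontinuousOn v K)
    (hε : 0 ≤ ε) (hx : x ∈ K) : v x ≤ ⨆ y : K, (v y - ‖x - (y : E)‖ ^ 2 / (2 * ε)) := by
  obtain ⟨C, hC⟩ := hv.bddAbove_of_isCompact hK
  refine le_trans (by simp) (le_ciSup (f := fun y : K => v y - ‖x - (y : E)‖ ^ 2 / (2 * ε))
    ⟨C, ?_⟩ ⟨x, hx⟩)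
  rintro _ ⟨y, rfl⟩
  exact (sub_le_self _ (by positivity)).trans (hC (mem_image_of_mem v y.2))

end Convolution

theorem inf_sup_convolution_comparison_general {N : ℕ} {Ω : Set (EuclideanSpace ℝ (Fin N))}
    (hΩo : IsOpen Ω) (hΩc : IsPreconnected Ω) {H : EuclideanSpace ℝ (Fin N) → ℝ}
    (hH : LocLipschitzOn Ω H) {x₀ : EuclideanSpace ℝ (Fin N)} (hx₀ : x₀ ∈ Ω)
    {K : Set (EuclideanSpace ℝ (Fin N))} (hK : IsCompact K) (hKΩ : K ⊆ Ω)
    {u v : EuclideanSpace ℝ (Fin N) → ℝ}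
    (hu_lsc : LowerSemicontinuousOn u Ω) (hu : IsViscositySupersol Ω H u)
    (hv_usc : UpperSemicontinuousOn v Ω) (hv : IsViscositySubsol Ω H v)
    (huv : ∀ x ∈ Ω, v x ≤ u x) (htouch : u x₀ = v x₀) :
    ∀ ε > 0, ∀ x ∈ K,
      (⨅ y : K, (u y + ‖x - (y : EuclideanSpace ℝ (Fin N))‖ ^ 2 / (2 * ε))) ≤
      (⨆ y : K, (v y - ‖x - (y : EuclideanSpace ℝ (Fin N))‖ ^ 2 / (2 * ε))) := by
  intro ε hε x hx
  have hpair : IsViscosityPair Ω H u v := ⟨hΩo, hH.continuousOn, hu_lsc, hu, hv_usc, hv⟩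
  calc _ ≤ u x := iInf_add_norm_sub_sq_div_le hK (hu_lsc.mono hKΩ) hε.le hx
    _ ≤ v x := hpair.le_of_isPreconnected hH hΩc huv hx₀ htouch.le x (hKΩ hx)
    _ ≤ _ := le_iSup_sub_norm_sub_sq_div hK (hv_usc.mono hKΩ) hε.le hx

/-- **Comparison of inf and sup convolutions near a touching point**: if the
supersolution `u` touches the subsolution `v` from above at the center of a ball
on which `|H| ≤ 1/R`, then for every `ε > 0` the sup convolution of `v` dominates
the inf convolution of `u` on the ball of half radius. -/
theorem inf_sup_convolution_comparison {N : ℕ} (hN : 2 ≤ N)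
    (Ω : Set (EuclideanSpace ℝ (Fin N))) (hΩo : IsOpen Ω) (hΩc : IsConnected Ω)
    (H : EuclideanSpace ℝ (Fin N) → ℝ) (hH : LocLipschitzOn Ω H)
    (x₀ : EuclideanSpace ℝ (Fin N)) (hx₀ : x₀ ∈ Ω)
    (R : ℝ) (hR : 0 < R) (hball : closedBall x₀ R ⊆ Ω)
    (hHR : ∀ x ∈ closedBall x₀ R, |H x| ≤ 1 / R)
    (u v : EuclideanSpace ℝ (Fin N) → ℝ)
    (hu_lsc : LowerSemicontinuousOn u Ω) (hu : IsViscositySupersol Ω H u)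
    (hv_usc : UpperSemicontinuousOn v Ω) (hv : IsViscositySubsol Ω H v)
    (hub : ∃ C, ∀ x ∈ closedBall x₀ R, |u x| ≤ C)
    (hvb : ∃ C, ∀ x ∈ closedBall x₀ R, |v x| ≤ C)
    (huv : ∀ x ∈ Ω, v x ≤ u x) (htouch : u x₀ = v x₀) :
    ∀ ε > 0, ∀ x ∈ closedBall x₀ (R / 2),
      (⨅ y : closedBall x₀ R, (u y + ‖x - (y : EuclideanSpace ℝ (Fin N))‖ ^ 2 / (2 * ε))) ≤
      (⨆ y : closedBall x₀ R, (v y - ‖x - (y : EuclideanSpace ℝ (Fin N))‖ ^ 2 / (2 * ε))) :=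
  fun ε hε x hx => inf_sup_convolution_comparison_general hΩo hΩc.isPreconnected hH hx₀
    (isCompact_closedBall x₀ R) hball hu_lsc hu hv_usc hv huv htouch ε hε x
    (closedBall_subset_closedBall (half_le_self hR.le) hx)
end

section
/- Vanishing of the minimal gap between convolutions: Let x₀ ∈ ℝ^N, R > 0, and let u : cl(B(x₀,R)) → ℝ be lower semicontinuous and bounded, v : cl(B(x₀,R)) → ℝ upper semicontinuous and bounded, with u ≥ v on cl(B(x₀,R)) and u(x₀) = v(x₀). For ε > 0 define u_ε(x) := inf_{y ∈ cl(B(x₀,R))} { u(y) + |x−y|²/(2ε) } and v^ε(x) := sup_{y ∈ cl(B(x₀,R))} { v(y) − |x−y|²/(2ε) }, and set δ_ε := min_{y ∈ cl(B(x₀,R/2))} ( u_ε(y) − v^ε(y) ). Then lim_{ε→0} δ_ε = 0. -/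
open Metric Set Filter Topology MeasureTheory

/-!
Fix `c < 0`. Since `|y - y'|² ≤ 2 (|z - y|² + |z - y'|²)`, the gap `u_ε - v^ε` is everywhere at
least the infimum over `y, y'` of `u y - v y' + |y - y'|² / (4ε)`. The function `u y - v y'` is
lower semicontinuous and is nonnegative on the diagonal, the zero set of the penalty `|y - y'|²`.
Hence near each pair `(y, y')` some `ε` makes the penalized function exceed `c`; it increases as
`ε` decreases, so by compactness it exceeds `c` at all pairs once `ε` is small. Conversely
`u_ε ≤ u` and `v ≤ v^ε`, so the gap is at most `0` at the touching point.
-/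

theorem exists_nonneg_lt_add_mul {a b c : ℝ} (hb : 0 ≤ b) (hab : b = 0 → c < a) :
    ∃ T : ℝ, 0 ≤ T ∧ c < a + T * b := by
  rcases hb.eq_or_lt' with hb_zero | hb_pos
  · exact ⟨0, le_rfl, by simpa using hab hb_zero⟩
  · have h_tendsto : Tendsto (fun T => a + T * b) atTop atTop :=
      tendsto_atTop_add_const_left _ a (tendsto_id.atTop_mul_const hb_pos)
    exact ((eventually_ge_atTop 0).and (h_tendsto.eventually_gt_atTop c)).exists

theorem eventually_forall_lt_add_mul_of_isCompact {X : Type*} [TopologicalSpace X] {K : Set X}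
    {f g : X → ℝ} {c : ℝ} (hK : IsCompact K)
    (hf : LowerSemicontinuousOn f K) (hg : LowerSemicontinuousOn g K)
    (hg_nonneg : ∀ x ∈ K, 0 ≤ g x) (hfg : ∀ x ∈ K, g x = 0 → c < f x) :
    ∀ᶠ t : ℝ in atTop, ∀ x ∈ K, c < f x + t * g x := by
  refine hK.induction_on (p := fun s => ∀ᶠ t : ℝ in atTop, ∀ x ∈ s, c < f x + t * g x)
    (by simp) (fun s s' hss' hs' => hs'.mono fun t ht x hx => ht x (hss' hx))
    (fun s s' hs hs' => ?_) (fun x hx => ?_)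
  · filter_upwards [hs, hs'] with t ht ht' x hx
    exact hx.elim (ht x) (ht' x)
  · obtain ⟨T, hT, hcT⟩ := exists_nonneg_lt_add_mul (hg_nonneg x hx) (hfg x hx)
    have h_lsc : LowerSemicontinuousOn (fun y => f y + T * g y) K :=
      hf.add ((continuous_const_mul T).comp_lowerSemicontinuousOn hg
        (monotone_mul_left_of_nonneg hT))
    refine ⟨{y | y ∈ K ∧ c < f y + T * g y},
      eventually_mem_nhdsWithin.and (h_lsc x hx c hcT), ?_⟩
    filter_upwards [eventually_ge_atTop T] with t hTt y ⟨hyK, hcy⟩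
    have h_mono : T * g y ≤ t * g y := mul_le_mul_of_nonneg_right hTt (hg_nonneg y hyK)
    linarith

/-- The inf convolution `u_ε` of `u` over `K`, which regularizes `u` from below. It takes the real
infimum, so it is the usual notion only when `K` is nonempty, `u` is bounded below on `K` and
`0 < ε`. -/
noncomputable def infConv {X : Type*} [PseudoMetricSpace X] (K : Set X) (u : X → ℝ) (ε : ℝ)
    (x : X) : ℝ :=
  ⨅ y : K, (u y + dist x y ^ 2 / (2 * ε))

/-- The sup convolution `v^ε` of `v` over `K`, which regularizes `v` from above. It takes the real
supremum, so it is the usual notion only when `K` is nonempty, `v` is bounded above on `K` and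
`0 < ε`. -/
noncomputable def supConv {X : Type*} [PseudoMetricSpace X] (K : Set X) (v : X → ℝ) (ε : ℝ)
    (x : X) : ℝ :=
  ⨆ y : K, (v y - dist x y ^ 2 / (2 * ε))

section Convolution

variable {X : Type*} [PseudoMetricSpace X] {K : Set X} {u v : X → ℝ} {ε : ℝ}

theorem infConv_le_self (hu : BddBelow (u '' K)) (hε : 0 ≤ ε) {x : X} (hx : x ∈ K) :
    infConv K u ε x ≤ u x := by
  obtain ⟨m, hm⟩ := hu
  have h_bdd : BddBelow (range fun y : K => u y + dist x y ^ 2 / (2 * ε)) := by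
    refine ⟨m, forall_mem_range.2 fun y => ?_⟩
    exact le_add_of_le_of_nonneg (hm (mem_image_of_mem u y.2)) (by positivity)
  simpa [infConv] using ciInf_le h_bdd ⟨x, hx⟩

theorem self_le_supConv (hv : BddAbove (v '' K)) (hε : 0 ≤ ε) {x : X} (hx : x ∈ K) :
    v x ≤ supConv K v ε x := by
  obtain ⟨M, hM⟩ := hv
  have h_bdd : BddAbove (range fun y : K => v y - dist x y ^ 2 / (2 * ε)) := by
    refine ⟨M, forall_mem_range.2 fun y => ?_⟩
    exact (sub_le_self _ (by positivity)).trans (hM (mem_image_of_mem v y.2))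
  simpa [supConv] using le_ciSup h_bdd ⟨x, hx⟩

theorem dist_sq_div_le_add (hε : 0 ≤ ε) (y y' z : X) :
    dist y y' ^ 2 / (4 * ε) ≤ dist z y ^ 2 / (2 * ε) + dist z y' ^ 2 / (2 * ε) :=
  calc dist y y' ^ 2 / (4 * ε)
      ≤ 2 * (dist z y ^ 2 + dist z y' ^ 2) / (4 * ε) := by
        gcongr
        exact (pow_le_pow_left₀ dist_nonneg (dist_triangle_left y y' z) 2).trans add_sq_le
    _ = dist z y ^ 2 / (2 * ε) + dist z y' ^ 2 / (2 * ε) := by ring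

theorem le_infConv_sub_supConv (hK : K.Nonempty) (hε : 0 ≤ ε) {c : ℝ}
    (hc : ∀ y ∈ K, ∀ y' ∈ K, c ≤ u y - v y' + dist y y' ^ 2 / (4 * ε)) (z : X) :
    c ≤ infConv K u ε z - supConv K v ε z := by
  have : Nonempty K := hK.to_subtype
  rw [le_sub_iff_add_le]
  refine le_ciInf fun y => ?_
  rw [← le_sub_iff_add_le']
  refine ciSup_le fun y' => ?_
  linarith [hc y y.2 y' y'.2, dist_sq_div_le_add hε (y : X) y' z]

end Convolution

section MinimalGap

variable {X : Type*} [MetricSpace X] {K : Set X} {u v : X → ℝ}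

theorem eventually_forall_lt_sub_add_dist_sq_div (hK : IsCompact K)
    (hu : LowerSemicontinuousOn u K) (hv : UpperSemicontinuousOn v K) {c : ℝ}
    (hc : ∀ x ∈ K, c < u x - v x) :
    ∀ᶠ ε : ℝ in 𝓝[>] 0, ∀ y ∈ K, ∀ y' ∈ K, c < u y - v y' + dist y y' ^ 2 / (4 * ε) := by
  have h_sub : LowerSemicontinuousOn (fun p : X × X => u p.1 + (-v) p.2) (K ×ˢ K) :=
    (hu.comp continuousOn_fst fun _ hp => hp.1).add
      ((lowerSemicontinuousOn_neg_iff.2 hv).comp continuousOn_snd fun _ hp => hp.2)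
  have h_dist : LowerSemicontinuousOn (fun p : X × X => dist p.1 p.2 ^ 2 / 4) (K ×ˢ K) :=
    Continuous.lowerSemicontinuous (by fun_prop) |>.lowerSemicontinuousOn _
  have h_diag : ∀ p ∈ K ×ˢ K, dist p.1 p.2 ^ 2 / 4 = 0 → c < u p.1 + (-v) p.2 := by
    rintro ⟨y, y'⟩ ⟨hy, -⟩ h_zero
    obtain rfl : y = y' := by simpa using h_zero
    simpa only [Pi.neg_apply, ← sub_eq_add_neg] using hc y hy
  have h_penalized := eventually_forall_lt_add_mul_of_isCompact (hK.prod hK) h_sub h_dist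
    (fun _ _ => by positivity) h_diag
  filter_upwards [tendsto_inv_nhdsGT_zero.eventually h_penalized] with ε hε y hy y' hy'
  calc c < u y + -v y' + ε⁻¹ * (dist y y' ^ 2 / 4) := hε (y, y') ⟨hy, hy'⟩
    _ = u y - v y' + dist y y' ^ 2 / (4 * ε) := by ring

theorem min_gap_tendsto_zero_general {A : Set X} {x₀ : X} (hK : IsCompact K)
    (hu : LowerSemicontinuousOn u K) (hv : UpperSemicontinuousOn v K)
    (hvu : ∀ x ∈ K, v x ≤ u x) (hx₀K : x₀ ∈ K) (hx₀A : x₀ ∈ A) (h_touch : u x₀ = v x₀) :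
    Tendsto (fun ε : ℝ => ⨅ z : A, (infConv K u ε z - supConv K v ε z)) (𝓝[>] 0) (𝓝 0) := by
  have : Nonempty A := ⟨⟨x₀, hx₀A⟩⟩
  have h_lower : ∀ c < 0, ∀ᶠ ε in 𝓝[>] (0 : ℝ),
      ∀ z, c ≤ infConv K u ε z - supConv K v ε z := fun c hc => by
    filter_upwards [self_mem_nhdsWithin, eventually_forall_lt_sub_add_dist_sq_div hK hu hv
      fun x hx => hc.trans_le (sub_nonneg.2 (hvu x hx))] with ε (hε : 0 < ε) h_pairs
    exact le_infConv_sub_supConv ⟨x₀, hx₀K⟩ hε.le fun y hy y' hy' => (h_pairs y hy y' hy').le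
  refine tendsto_order.2 ⟨fun a ha => ?_, fun b hb => ?_⟩
  · obtain ⟨c, hac, hc⟩ := exists_between ha
    filter_upwards [h_lower c hc] with ε hε
    exact hac.trans_le (le_ciInf fun z => hε z)
  · filter_upwards [self_mem_nhdsWithin, h_lower (-1) neg_one_lt_zero] with ε (hε : 0 < ε) h_bdd
    have h_le : ⨅ z : A, (infConv K u ε z - supConv K v ε z)
        ≤ infConv K u ε x₀ - supConv K v ε x₀ :=
      ciInf_le (f := fun z : A => infConv K u ε z - supConv K v ε z)
        ⟨-1, forall_mem_range.2 fun z => h_bdd z⟩ ⟨x₀, hx₀A⟩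
    linarith [infConv_le_self (hu.bddBelow_of_isCompact hK) hε.le hx₀K,
      self_le_supConv (hv.bddAbove_of_isCompact hK) hε.le hx₀K]

end MinimalGap

/-- **Vanishing of the minimal gap between convolutions**: the minimum over the
half-radius ball of the difference between the inf convolution of `u` and the sup
convolution of `v` tends to `0` as `ε → 0`, when `u ≥ v` touch at the center. -/
theorem min_gap_tendsto_zero {N : ℕ}
    (x₀ : EuclideanSpace ℝ (Fin N)) (R : ℝ) (hR : 0 < R)
    (u v : EuclideanSpace ℝ (Fin N) → ℝ)
    (hu_lsc : LowerSemicontinuousOn u (closedBall x₀ R))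
    (hv_usc : UpperSemicontinuousOn v (closedBall x₀ R))
    (hub : ∃ C, ∀ x ∈ closedBall x₀ R, |u x| ≤ C)
    (hvb : ∃ C, ∀ x ∈ closedBall x₀ R, |v x| ≤ C)
    (huv : ∀ x ∈ closedBall x₀ R, v x ≤ u x) (htouch : u x₀ = v x₀) :
    Filter.Tendsto
      (fun ε : ℝ =>
        ⨅ z : closedBall x₀ (R / 2),
          ((⨅ y : closedBall x₀ R,
              (u y + ‖(z : EuclideanSpace ℝ (Fin N)) - (y : EuclideanSpace ℝ (Fin N))‖ ^ 2 / (2 * ε))) -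
           (⨆ y : closedBall x₀ R,
              (v y - ‖(z : EuclideanSpace ℝ (Fin N)) - (y : EuclideanSpace ℝ (Fin N))‖ ^ 2 / (2 * ε)))))
      (𝓝[>] (0 : ℝ)) (𝓝 0) := by
  simpa only [infConv, supConv, dist_eq_norm] using
    min_gap_tendsto_zero_general (isCompact_closedBall x₀ R) hu_lsc hv_usc huv
      (mem_closedBall_self hR.le) (mem_closedBall_self (half_pos hR).le) htouch
end
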